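/- arXiv:1805.07045 — 3 statements merged into one kernel-verified Lean document; each statement's English description precedes it below -/
import Mathlib

section
/- Let 𝒜_N be the smallest unital subalgebra of the algebra of N×N random matrices that contains every matrix A_{N,ℓ}^{(k)} (ℓ ∈ {1,…,L}, k ∈ K) and is stable under the diagonal projection Δ. Then ℱ_N = 𝒜_N, and consequently 𝒞_N = Δ(𝒜_N). -/
open MeasureTheory ProbabilityTheory Filter Matrix Asymptotics
open scoped BigOperators ENNReal
open scoped Classical

noncomputable section

/-- The diagonal projection `Δ` on `N × N` complex matrices. -/
def dproj {N : ℕ} (A : Matrix (Fin N) (Fin N) ℂ) : Matrix (Fin N) (Fin N) ℂ :=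
  Matrix.of fun i j => if i = j then A i j else 0

/-- The operator norm of a matrix acting on `ℓ²({1,…,N})`. -/
def matOpNorm {N : ℕ} (A : Matrix (Fin N) (Fin N) ℂ) : ℝ :=
  ‖Matrix.toEuclideanCLM (𝕜 := ℂ) A‖

/-! ### Multigraph combinatorics -/

section Graph

variable {V E : Type} (src tgt : E → V)

/-- Adjacency through an edge avoiding a forbidden set `F` of edges
(direction is ignored). -/
def adjOn (F : Set E) (a b : V) : Prop :=
  ∃ e, e ∉ F ∧ ((src e = a ∧ tgt e = b) ∨ (src e = b ∧ tgt e = a))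

/-- Reachability in the graph, using only edges outside `F`. -/
def reachOn (F : Set E) : V → V → Prop :=
  Relation.ReflTransGen (adjOn src tgt F)

lemma adjOn_symm (F : Set E) : Symmetric (adjOn src tgt F) := by
  rintro a b ⟨e, he, h⟩
  exact ⟨e, he, h.symm⟩

/-- The setoid of connectivity using edges outside `F`. -/
def connSetoid (F : Set E) : Setoid V :=
  ⟨reachOn src tgt F,
    ⟨fun _ => Relation.ReflTransGen.refl,
     fun h => (@Relation.ReflTransGen.symmetric _ _ ⟨fun _ _ h' => adjOn_symm src tgt F h'⟩).symm _ _ h,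
     fun h h' => Relation.ReflTransGen.trans h h'⟩⟩

/-- Number of connected components of the graph with the edges in `F` deleted. -/
def ncompAvoiding (F : Set E) : ℕ :=
  Nat.card (Quotient (connSetoid src tgt F))

/-- Number of connected components. -/
def ncomp : ℕ := ncompAvoiding src tgt ∅

/-- The graph is connected. -/
def IsConnectedGraph : Prop := ∀ a b : V, reachOn src tgt ∅ a b

/-- A cut edge (bridge): deleting it disconnects its endpoints. -/
def IsCutEdge (e : E) : Prop := ¬ reachOn src tgt {e} (src e) (tgt e)

/-- The set of cut edges. -/
def cutEdges : Set E := {e | IsCutEdge src tgt e}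

/-- The setoid whose classes are the two-edge connected components
(connected components after deleting all cut edges). -/
def teccSetoid : Setoid V := connSetoid src tgt (cutEdges src tgt)

/-- Degree, in the forest of two-edge connected components, of a
two-edge connected component: the number of cut edges incident to it. -/
def teccDeg (c : Quotient (teccSetoid src tgt)) : ℕ :=
  Nat.card {e : E // IsCutEdge src tgt e ∧
    (Quotient.mk (teccSetoid src tgt) (src e) = c ∨
      Quotient.mk (teccSetoid src tgt) (tgt e) = c)}

/-- `𝔣(G)`: the number of leaves of the forest of two-edge connected components,
single-vertex trees of the forest counting twice. -/
def frak : ℕ :=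
  Nat.card {c : Quotient (teccSetoid src tgt) // teccDeg src tgt c = 1} +
    2 * Nat.card {c : Quotient (teccSetoid src tgt) // teccDeg src tgt c = 0}

end Graph

/-! ### Graph monomials -/

/-- A graph monomial: a finite directed multigraph with two roots and edges
labelled by a family index in `Fin L` and an index in `K`.  (Connectedness is
required separately via `IsConnectedGraph`.) -/
structure GraphMonomial (L : ℕ) (K : Type) where
  V : Type
  E : Type
  fintV : Fintype V
  fintE : Fintype E
  src : E → V
  tgt : E → V
  vin : V
  vout : V
  labL : E → Fin L
  labK : E → K

attribute [instance] GraphMonomial.fintV GraphMonomial.fintE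

namespace GraphMonomial

variable {L : ℕ} {K : Type} (g : GraphMonomial L K)

/-- Evaluation of a graph monomial in a collection of matrices. -/
def eval {N : ℕ} (A : Fin L → K → Matrix (Fin N) (Fin N) ℂ) :
    Matrix (Fin N) (Fin N) ℂ :=
  Matrix.of fun i j => ∑ φ : g.V → Fin N,
    if φ g.vin = j ∧ φ g.vout = i then
      ∏ e : g.E, A (g.labL e) (g.labK e) (φ (g.tgt e)) (φ (g.src e))
    else 0

/-- The starting vertex of a step `(e, b)`: `e` traversed forward if `b = true`,
backward otherwise. -/
def stepSrc (s : g.E × Bool) : g.V := if s.2 then g.src s.1 else g.tgt s.1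

/-- The ending vertex of a step. -/
def stepTgt (s : g.E × Bool) : g.V := if s.2 then g.tgt s.1 else g.src s.1

/-- A simple cycle of the underlying undirected multigraph: a nonempty cyclic
sequence of steps with pairwise distinct edges and pairwise distinct vertices. -/
def IsSimpleCycle (c : List (g.E × Bool)) : Prop :=
  ∃ h : c ≠ [],
    (∀ i : Fin c.length,
      g.stepTgt (c.get i) =
        g.stepSrc (c.get ⟨((i : ℕ) + 1) % c.length,
          Nat.mod_lt _ (List.length_pos_iff.mpr h)⟩)) ∧
    (c.map Prod.fst).Nodup ∧ (c.map g.stepSrc).Nodup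

/-- A cycle is directed when it traverses all its edges consistently with
their orientations (one way or the other). -/
def IsDirectedCycleList (c : List (g.E × Bool)) : Prop :=
  (∀ s ∈ c, s.2 = true) ∨ (∀ s ∈ c, s.2 = false)

/-- `S` is the edge set of some simple cycle. -/
def IsCycleEdgeSet (S : Finset g.E) : Prop :=
  ∃ c, g.IsSimpleCycle c ∧ (c.map Prod.fst).toFinset = S

/-- The underlying graph is an oriented cactus: it is connected, every simple
cycle is directed, and every edge belongs to exactly one simple cycle. -/
def IsOrientedCactus : Prop :=
  IsConnectedGraph g.src g.tgt ∧
  (∀ c, g.IsSimpleCycle c → g.IsDirectedCycleList c) ∧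
  (∀ e : g.E, ∃! S : Finset g.E, g.IsCycleEdgeSet S ∧ e ∈ S)

/-- A cactus-type monomial: an oriented cactus whose input and output coincide. -/
def IsCactusType : Prop := g.vin = g.vout ∧ g.IsOrientedCactus

/-- A member of `ℱ`: a directed simple path (oriented from the input, at the far
right, to the output, at the far left) with oriented cacti attached to the
vertices of the path (the root of each cactus being a path vertex). -/
def IsPathCactusType : Prop :=
  IsConnectedGraph g.src g.tgt ∧
  ∃ (d : ℕ) (v : Fin (d + 1) → g.V) (f : Fin d → g.E),
    Function.Injective v ∧ Function.Injective f ∧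
    (∀ j : Fin d, g.src (f j) = v j.succ ∧ g.tgt (f j) = v j.castSucc) ∧
    g.vin = v (Fin.last d) ∧ g.vout = v 0 ∧
    (∀ c, g.IsSimpleCycle c → g.IsDirectedCycleList c ∧ ∀ s ∈ c, s.1 ∉ Set.range f) ∧
    (∀ e : g.E, e ∉ Set.range f →
      ∃! S : Finset g.E, g.IsCycleEdgeSet S ∧ e ∈ S) ∧
    (∀ w : g.V, ∃! j : Fin (d + 1), reachOn g.src g.tgt (Set.range f) w (v j))

end GraphMonomial
/-! ### Random matrices, expectations, test graphs -/

/-- The entries of the random matrix `X` are measurable. -/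
def EntriesMeasurable {N : ℕ} {Ω : Type} [MeasurableSpace Ω]
    (X : Ω → Matrix (Fin N) (Fin N) ℂ) : Prop :=
  ∀ i j, Measurable fun ω => X ω i j

/-- The entries of the random matrix `X` are essentially bounded. -/
def EntriesBounded {N : ℕ} {Ω : Type} [MeasurableSpace Ω] (μ : Measure Ω)
    (X : Ω → Matrix (Fin N) (Fin N) ℂ) : Prop :=
  ∃ C : ℝ, ∀ᵐ ω ∂μ, ∀ i j, ‖X ω i j‖ ≤ C

/-- The σ-algebra generated by the entries of the matrices of a family. -/
def famSigma {N : ℕ} {Ω K : Type} [MeasurableSpace Ω]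
    (A : K → Ω → Matrix (Fin N) (Fin N) ℂ) : MeasurableSpace Ω :=
  ⨆ k : K, ⨆ i : Fin N, ⨆ j : Fin N,
    MeasurableSpace.comap (fun ω => A k ω i j) inferInstance

/-- Permutation invariance of a family of `N × N` random matrices. -/
def PermInvariant {N : ℕ} {Ω K : Type} [MeasurableSpace Ω] (μ : Measure Ω)
    (A : K → Ω → Matrix (Fin N) (Fin N) ℂ) : Prop :=
  ∀ σ : Equiv.Perm (Fin N),
    Measure.map (fun ω => fun (k : K) (i j : Fin N) => A k ω (σ i) (σ j)) μ =
      Measure.map (fun ω => fun (k : K) (i j : Fin N) => A k ω i j) μ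

/-- A test graph with matrix-valued edge labels. -/
structure TestGraph (N : ℕ) (Ω : Type) where
  V : Type
  E : Type
  fintV : Fintype V
  fintE : Fintype E
  src : E → V
  tgt : E → V
  lab : E → Ω → Matrix (Fin N) (Fin N) ℂ

attribute [instance] TestGraph.fintV TestGraph.fintE

namespace TestGraph

variable {N : ℕ} {Ω : Type} [MeasurableSpace Ω]

/-- Number of connected components `c(T)` of a test graph. -/
def ncc (T : TestGraph N Ω) : ℕ := ncomp T.src T.tgt

/-- The (unnormalized) trace observable of a test graph. -/
def tauInner (T : TestGraph N Ω) (ω : Ω) : ℂ :=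
  ∑ φ : T.V → Fin N, ∏ e : T.E, T.lab e ω (φ (T.tgt e)) (φ (T.src e))

/-- The (unnormalized) injective trace observable of a test graph. -/
def tau0Inner (T : TestGraph N Ω) (ω : Ω) : ℂ :=
  ∑ φ : T.V → Fin N,
    if Function.Injective φ then ∏ e : T.E, T.lab e ω (φ (T.tgt e)) (φ (T.src e)) else 0

/-- `τ_N[T]`. -/
def tau (T : TestGraph N Ω) (μ : Measure Ω) : ℂ :=
  ((N : ℂ) ^ T.ncc)⁻¹ * ∫ ω, T.tauInner ω ∂μ

/-- `τ⁰_N[T]`. -/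
def tau0 (T : TestGraph N Ω) (μ : Measure Ω) : ℂ :=
  ((N : ℂ) ^ T.ncc)⁻¹ * ∫ ω, T.tau0Inner ω ∂μ

/-- The quotient test graph `T^π` associated with a partition `π` of the
vertices of `T`. -/
def quot (T : TestGraph N Ω) (π : Setoid T.V) : TestGraph N Ω where
  V := Quotient π
  E := T.E
  fintV := @Quotient.fintype _ T.fintV π fun _ _ => Classical.propDecidable _
  fintE := T.fintE
  src := fun e => Quotient.mk π (T.src e)
  tgt := fun e => Quotient.mk π (T.tgt e)
  lab := T.lab

end TestGraph

/-- Monomial `D₀ X_{k(1)} D₁ ⋯ X_{k(d)} D_d` evaluated in a family of matrices: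
the coefficients are given as an arbitrary function `D : ℕ → Matrix`. -/
def monomialEval {K : Type} {N : ℕ} (A : K → Matrix (Fin N) (Fin N) ℂ)
    (dd : ℕ) (kk : ℕ → K) (D : ℕ → Matrix (Fin N) (Fin N) ℂ) :
    Matrix (Fin N) (Fin N) ℂ :=
  D 0 * (List.ofFn fun j : Fin dd => A (kk ((j : ℕ) + 1)) * D ((j : ℕ) + 1)).prod

/-- The centered product `(M₁ - ΔM₁)(M₂ - ΔM₂)⋯(Mₙ - ΔMₙ)`. -/
def centeredProd {N n : ℕ} (M : Fin n → Matrix (Fin N) (Fin N) ℂ) :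
    Matrix (Fin N) (Fin N) ℂ :=
  (List.ofFn fun i : Fin n => M i - dproj (M i)).prod

/-- Mutual independence of the families `A 1, …, A L` of random matrices. -/
def IndepFamilies {Ω K : Type} {L : ℕ} [MeasurableSpace Ω] (μ : Measure Ω)
    (A : (N : ℕ) → Fin L → K → Ω → Matrix (Fin N) (Fin N) ℂ) : Prop :=
  ∀ N : ℕ, ProbabilityTheory.iIndep (fun ℓ : Fin L => famSigma (A N ℓ)) μ

/-- Uniform boundedness, in operator norm, of families of random matrices. -/
def UnifOpNormBound {Ω K : Type} {L : ℕ} [MeasurableSpace Ω] (μ : Measure Ω)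
    (A : (N : ℕ) → Fin L → K → Ω → Matrix (Fin N) (Fin N) ℂ) : Prop :=
  ∃ C : ℝ, ∀ (N : ℕ) (ℓ : Fin L) (k : K), ∀ᵐ ω ∂μ, matOpNorm (A N ℓ k ω) ≤ C

/-- The growth bound (MS) for the family `A · ℓ`:
for all graph monomials `g₁, …, gₘ` labelled in the single family `ℓ` and having
equal input and output, `E[∏ᵢ Tr gᵢ(A_N)] = O(N^{Σᵢ 𝔣(gᵢ)/2})` as `N → ∞`. -/
def MSBound {Ω K : Type} {L : ℕ} [MeasurableSpace Ω] (μ : Measure Ω)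
    (A : (N : ℕ) → Fin L → K → Ω → Matrix (Fin N) (Fin N) ℂ) (ℓ : Fin L) : Prop :=
  ∀ (m : ℕ), 1 ≤ m → ∀ gs : Fin m → GraphMonomial L K,
    (∀ i : Fin m, IsConnectedGraph (gs i).src (gs i).tgt ∧
      (∀ e, (gs i).labL e = ℓ) ∧ (gs i).vin = (gs i).vout) →
    (fun N : ℕ => ∫ ω, ∏ i : Fin m,
        Matrix.trace ((gs i).eval fun ℓ' k => A N ℓ' k ω) ∂μ)
      =O[atTop] fun N : ℕ => (N : ℝ) ^ ((∑ i : Fin m, (frak (gs i).src (gs i).tgt : ℝ)) / 2)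
/-! ### Circulations -/

section Circulation

variable {V F : Type} [Fintype F] {src tgt : F → V}

/-- A rational edge weight which is conserved at every vertex, expressed by duality
against all vertex functions. -/
def IsCirculation (src tgt : F → V) (z : F → ℚ) : Prop :=
  ∀ h : V → ℚ, ∑ e, z e * (h (tgt e) - h (src e)) = 0

/-- A connected graph whose circulations form a unital subalgebra of `F → ℚ` for the
pointwise product. This is an algebraic form of being an oriented cactus. -/
structure HasCactusCirculations (src tgt : F → V) : Prop where
  conn : ∀ p : V → Prop, (∀ e, p (src e) ↔ p (tgt e)) → ∀ a b, p a → p b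
  one : IsCirculation src tgt 1
  mul : ∀ z w, IsCirculation src tgt z → IsCirculation src tgt w →
    IsCirculation src tgt (z * w)

lemma IsCirculation.add {z w : F → ℚ} (hz : IsCirculation src tgt z)
    (hw : IsCirculation src tgt w) : IsCirculation src tgt (z + w) := fun h => by
  simp only [Pi.add_apply, add_mul, Finset.sum_add_distrib, hz h, hw h, add_zero]

lemma IsCirculation.smul {z : F → ℚ} (c : ℚ) (hz : IsCirculation src tgt z) :
    IsCirculation src tgt (c • z) := fun h => by
  simp only [Pi.smul_apply, smul_eq_mul, mul_assoc, ← Finset.mul_sum, hz h, mul_zero]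

lemma IsCirculation.sub {z w : F → ℚ} (hz : IsCirculation src tgt z)
    (hw : IsCirculation src tgt w) : IsCirculation src tgt (z - w) := fun h => by
  simp only [Pi.sub_apply, sub_mul, Finset.sum_sub_distrib, hz h, hw h, sub_zero]

lemma isCirculation_zero : IsCirculation src tgt 0 := fun h => by simp

namespace HasCactusCirculations

/-- The algebra of circulations. -/
def circulations (H : HasCactusCirculations src tgt) : Subalgebra ℚ (F → ℚ) where
  carrier := {z | IsCirculation src tgt z}
  mul_mem' := fun {z w} hz hw => H.mul z w hz hw
  add_mem' := fun hz hw => hz.add hw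
  algebraMap_mem' := fun r => by
    have := H.one.smul r
    rwa [← Algebra.algebraMap_eq_smul_one] at this

lemma mem_circulations (H : HasCactusCirculations src tgt) {z : F → ℚ} :
    z ∈ H.circulations ↔ IsCirculation src tgt z := Iff.rfl

/-- Transfer along a retraction `κ` of edge sets compatible with circulations. -/
lemma of_retract {V' F' : Type} [Fintype F'] {src' tgt' : F' → V'}
    (H : HasCactusCirculations src tgt) (ι : F → F') (κ : F' → F) (hικ : ∀ e, ι (κ e) = e)
    (hι : ∀ z, IsCirculation src' tgt' z → IsCirculation src tgt (z ∘ ι))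
    (hκ : ∀ z, IsCirculation src tgt z → IsCirculation src' tgt' (z ∘ κ))
    (conn : ∀ p : V' → Prop, (∀ e, p (src' e) ↔ p (tgt' e)) → ∀ a b, p a → p b) :
    HasCactusCirculations src' tgt' where
  conn := conn
  one := hκ _ H.one
  mul := fun z w hz hw => by
    have h := hκ _ (H.mul _ _ (hι z hz) (hι w hw))
    convert h using 1
    funext e
    simp [hικ]

/-- Deleting a loop. -/
lemma delete_loop (H : HasCactusCirculations src tgt) {e₁ : F} (he : src e₁ = tgt e₁)
    {e₀ : F} (h0 : e₀ ≠ e₁) :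
    HasCactusCirculations (fun e : {e // e ≠ e₁} => src e) (fun e => tgt e) := by
  refine H.of_retract (fun e => if h : e ≠ e₁ then ⟨e, h⟩ else ⟨e₀, h0⟩) (fun e => e.1)
    (fun e => by simp [e.2]) (fun z hz h => ?_) (fun z hz h => ?_) (fun p hp a b => ?_)
  · rw [Fintype.sum_eq_add_sum_subtype_ne _ e₁, he, sub_self, mul_zero, zero_add, ← hz h]
    refine Finset.sum_congr rfl fun e _ => ?_
    simp [e.2]
  · have := hz h
    rwa [Fintype.sum_eq_add_sum_subtype_ne _ e₁, he, sub_self, mul_zero, zero_add] at this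
  · refine H.conn p (fun e => ?_) a b
    by_cases h : e = e₁
    · rw [h, he]
    · exact hp ⟨e, h⟩

/-- A single edge carrying a circulation is a loop. -/
lemma _root_.IsCirculation.loop_of_single {e : F}
    (h : IsCirculation src tgt (Pi.single e 1)) : src e = tgt e := by
  have := h (fun v => if v = tgt e then 1 else 0)
  rw [Finset.sum_eq_single e (fun b _ hb => by simp [hb]) (by simp)] at this
  by_contra hne
  simp [hne] at this

/-- The indicator of an edge separated from all the others is a circulation. -/
lemma single_of_separated (H : HasCactusCirculations src tgt) {e : F}
    (hsep : ∀ e', e' ≠ e → ∃ z, IsCirculation src tgt z ∧ z e ≠ z e') :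
    IsCirculation src tgt (Pi.single e 1) := by
  have hw : ∀ e', ∃ w ∈ H.circulations, w e = 1 ∧ (e' ≠ e → w e' = 0) := by
    intro e'
    by_cases he : e' = e
    · exact ⟨1, one_mem _, rfl, fun h => absurd he h⟩
    · obtain ⟨z, hz, hne⟩ := hsep e' he
      refine ⟨(z e - z e')⁻¹ • (z - algebraMap ℚ (F → ℚ) (z e')),
        Subalgebra.smul_mem _ (sub_mem hz (Subalgebra.algebraMap_mem _ _)) _, ?_, fun _ => ?_⟩
      · simp [inv_mul_cancel₀ (sub_ne_zero.mpr hne)]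
      · simp
  choose w hw h1 h0 using hw
  have hp : ∏ e', w e' ∈ H.circulations := prod_mem fun e' _ => hw e'
  rw [mem_circulations] at hp
  convert hp using 1
  funext x
  rw [Finset.prod_apply]
  by_cases hx : x = e
  · subst hx
    simp [h1]
  · rw [Pi.single_eq_of_ne hx]
    exact (Finset.prod_eq_zero (f := fun c => w c x) (Finset.mem_univ x) (h0 x hx)).symm

variable [Fintype V]

/-- If all loops are equal to `e₀`, the number of edges is less than twice the number of
vertices. -/
lemma card_edges_lt (H : HasCactusCirculations src tgt) (e₀ : F)
    (hloop : ∀ e, src e = tgt e → e = e₀) : Fintype.card F < 2 * Fintype.card V := by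
  let s : Setoid F :=
    { r := fun e e' => ∀ z, IsCirculation src tgt z → z e = z e'
      iseqv := ⟨fun _ _ _ => rfl, fun h z hz => (h z hz).symm,
        fun h h' z hz => (h z hz).trans (h' z hz)⟩ }
  let v₀ := src e₀
  let B : (F → ℚ) →ₗ[ℚ] ({v : V // v ≠ v₀} → ℚ) :=
    { toFun := fun z v => ∑ e, z e * ((if tgt e = v then 1 else 0) - (if src e = v then 1 else 0))
      map_add' := fun z w => by
        funext v
        simp only [Pi.add_apply, add_mul, Finset.sum_add_distrib]
      map_smul' := fun c z => by
        funext v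
        simp only [Pi.smul_apply, smul_eq_mul, mul_assoc, ← Finset.mul_sum, RingHom.id_apply] }
  let P : (Quotient s → ℚ) →ₗ[ℚ] (F → ℚ) := LinearMap.funLeft ℚ ℚ (Quotient.mk s)
  have hker : LinearMap.ker B ≤ LinearMap.range P := by
    intro z hz
    have hz' : ∀ v : V, v ≠ v₀ →
        ∑ e, z e * ((if tgt e = v then 1 else 0) - (if src e = v then 1 else 0)) = 0 :=
      fun v hv => congrFun (LinearMap.mem_ker.mp hz) ⟨v, hv⟩
    have hc : IsCirculation src tgt z := by
      intro h
      have key : ∀ e, h (tgt e) - h (src e) = ∑ v, (h v - h v₀) *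
          ((if tgt e = v then 1 else 0) - (if src e = v then 1 else 0)) := by
        intro e
        simp [mul_sub, Finset.sum_sub_distrib]
      simp_rw [key, Finset.mul_sum]
      rw [Finset.sum_comm]
      refine Finset.sum_eq_zero fun v _ => ?_
      by_cases hv : v = v₀
      · simp [hv]
      · have := hz' v hv
        simp_rw [mul_left_comm (z _), ← Finset.mul_sum]
        rw [this, mul_zero]
    exact ⟨fun q => Quotient.lift z (fun a b (hab : ∀ z, IsCirculation src tgt z → z a = z b) =>
      hab z hc) q, rfl⟩
  have h1 := LinearMap.finrank_range_add_finrank_ker B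
  have h2 : Module.finrank ℚ (LinearMap.range B) ≤ Fintype.card {v : V // v ≠ v₀} := by
    simpa using Submodule.finrank_le (LinearMap.range B)
  have h3 : Module.finrank ℚ (LinearMap.ker B) ≤ Fintype.card (Quotient s) := by
    refine (Submodule.finrank_mono hker).trans ?_
    simpa using LinearMap.finrank_range_le P
  have h4 : Fintype.card {v : V // v ≠ v₀} = Fintype.card V - 1 := by
    simp [Fintype.card_subtype_compl]
  have h5 : 0 < Fintype.card V := Fintype.card_pos_iff.mpr ⟨v₀⟩
  have h6 : Module.finrank ℚ (F → ℚ) = Fintype.card F := by simp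
  have h7 : 2 * Fintype.card (Quotient s) ≤ Fintype.card F + 1 := by
    have hfib : Fintype.card F = ∑ q : Quotient s,
        (Finset.univ.filter fun e => Quotient.mk s e = q).card := by
      rw [← Finset.card_univ]
      exact Finset.card_eq_sum_card_fiberwise (fun _ _ => Finset.mem_coe.mpr (Finset.mem_univ _))
    have hlow : ∀ q : Quotient s, 2 ≤ (Finset.univ.filter fun e => Quotient.mk s e = q).card +
        (if q = Quotient.mk s e₀ then 1 else 0) := by
      intro q
      induction q using Quotient.inductionOn with | h e => ?_
      have hpos : 0 < (Finset.univ.filter fun e' => Quotient.mk s e' = Quotient.mk s e).card :=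
        Finset.card_pos.mpr ⟨e, by simp⟩
      by_contra hlt
      have hne : ¬ Quotient.mk s e = Quotient.mk s e₀ := fun hq => by
        rw [if_pos hq] at hlt; omega
      rw [if_neg hne] at hlt
      obtain ⟨x, hx⟩ := Finset.card_eq_one.mp (by omega :
        (Finset.univ.filter fun e' => Quotient.mk s e' = Quotient.mk s e).card = 1)
      have hmem : ∀ e', Quotient.mk s e' = Quotient.mk s e → e' = x := fun e' he' => by
        have : e' ∈ (Finset.univ.filter fun e' => Quotient.mk s e' = Quotient.mk s e) := by
          simpa using he'
        rw [hx] at this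
        simpa using this
      have hsep : ∀ e', e' ≠ e → ∃ z, IsCirculation src tgt z ∧ z e ≠ z e' := by
        intro e' he'
        by_contra hcon
        push Not at hcon
        exact he' ((hmem e' (Quotient.sound fun z hz => (hcon z hz).symm)).trans
          (hmem e rfl).symm)
      exact hne (congrArg _ (hloop e (H.single_of_separated hsep).loop_of_single))
    have hsum := Finset.sum_le_sum fun q (_ : q ∈ Finset.univ) => hlow q
    rw [Finset.sum_add_distrib, ← hfib] at hsum
    simp at hsum
    omega
  omega

end HasCactusCirculations

end Circulation

/-! ### Contraction of a vertex of degree two -/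

section Contraction

variable {V F : Type} {src tgt : F → V} {v : V} {e₁ e₂ : F}

/-- Sources after merging the edges `e₁` and `e₂` through the vertex `v`. -/
def contractSrc (hout : ∀ e, src e = v ↔ e = e₂) : {e // e ≠ e₂} → {w // w ≠ v} :=
  fun e => ⟨src e, fun h => e.2 ((hout e).1 h)⟩

/-- Targets after merging the edges `e₁` and `e₂` through the vertex `v`. -/
def contractTgt (hne : e₁ ≠ e₂) (hin : ∀ e, tgt e = v ↔ e = e₁) :
    {e // e ≠ e₂} → {w // w ≠ v} :=
  fun e => if h : e.1 = e₁ then ⟨tgt e₂, fun h' => hne ((hin e₂).1 h').symm⟩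
    else ⟨tgt e, fun h' => h ((hin e).1 h')⟩

variable [Fintype F]

lemma sum_contract (hne : e₁ ≠ e₂) (hin : ∀ e, tgt e = v ↔ e = e₁)
    (hout : ∀ e, src e = v ↔ e = e₂) (z : F → ℚ) (hz : z e₁ = z e₂) (h : V → ℚ) :
    ∑ e, z e * (h (tgt e) - h (src e)) =
      ∑ e : {e // e ≠ e₂}, z e * (h (contractTgt hne hin e) - h (contractSrc hout e)) := by
  rw [Fintype.sum_eq_add_sum_subtype_ne _ e₂, ← eq_sub_iff_add_eq, ← Finset.sum_sub_distrib,
    Finset.sum_eq_single ⟨e₁, hne⟩]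
  · have h1 : tgt e₁ = v := (hin e₁).2 rfl
    have h2 : src e₂ = v := (hout e₂).2 rfl
    simp only [contractTgt, contractSrc, dif_pos, h1, h2, hz]
    ring
  · intro e _ he
    have : e.1 ≠ e₁ := fun h => he (Subtype.ext h)
    simp [contractTgt, contractSrc, this]
  · simp

lemma HasCactusCirculations.contract (H : HasCactusCirculations src tgt) (hne : e₁ ≠ e₂)
    (hin : ∀ e, tgt e = v ↔ e = e₁) (hout : ∀ e, src e = v ↔ e = e₂) :
    HasCactusCirculations (contractSrc hout) (contractTgt hne hin) := by
  refine H.of_retract (fun e => if h : e ≠ e₂ then ⟨e, h⟩ else ⟨e₁, hne⟩) (fun e => e.1)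
    (fun e => by simp [e.2]) (fun z hz h => ?_) (fun z hz h => ?_) (fun p hp a b ha => ?_)
  · rw [sum_contract hne hin hout _ (by simp [hne])]
    rw [← hz (fun w => h w)]
    refine Finset.sum_congr rfl fun e _ => ?_
    simp [e.2]
  · have hz12 : z e₁ = z e₂ := by
      have := hz (fun w => if w = v then 1 else 0)
      simp only [hin, hout, mul_sub, Finset.sum_sub_distrib] at this
      simpa [sub_eq_zero] using this
    let h' : V → ℚ := fun w => if hw : w ≠ v then h ⟨w, hw⟩ else 0
    refine Eq.trans ?_ ((sum_contract hne hin hout _ hz12 h').symm.trans (hz h'))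
    refine Finset.sum_congr rfl fun e _ => ?_
    simp [h', (contractTgt hne hin e).2, (contractSrc hout e).2]
  · have h1 := hp ⟨e₁, hne⟩
    simp only [contractSrc, contractTgt, dif_pos] at h1
    have := H.conn (fun w => if hw : w ≠ v then p ⟨w, hw⟩ else
      p ⟨src e₁, fun h => hne ((hout e₁).1 h)⟩) (fun e => ?_) a b (by simpa [a.2] using ha)
    · simpa [b.2] using this
    · by_cases he₂ : e = e₂
      · subst he₂
        have h2 : src e = v := (hout e).2 rfl
        have h3 : tgt e ≠ v := fun h' => hne ((hin e).1 h').symm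
        simp [h2, h3, h1]
      · by_cases he₁ : e = e₁
        · subst he₁
          have h2 : tgt e = v := (hin e).2 rfl
          have h3 : src e ≠ v := fun h' => hne ((hout e).1 h')
          simp [h2, h3]
        · have h2 : tgt e ≠ v := fun h' => he₁ ((hin e).1 h')
          have h3 : src e ≠ v := fun h' => he₂ ((hout e).1 h')
          have := hp ⟨e, he₂⟩
          simpa [contractSrc, contractTgt, he₁, h2, h3] using this

/-- A cactus with an edge different from `e₀`, all of whose loops are equal to `e₀`, has a
vertex at which exactly one edge arrives and exactly one other edge departs. -/
lemma HasCactusCirculations.exists_degree_two [Fintype V] (H : HasCactusCirculations src tgt)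
    (e₀ : F) (hloop : ∀ e, src e = tgt e → e = e₀) (hex : ∃ e, e ≠ e₀) :
    ∃ (v : V) (e₁ e₂ : F), e₁ ≠ e₂ ∧ (∀ e, tgt e = v ↔ e = e₁) ∧
      (∀ e, src e = v ↔ e = e₂) := by
  by_contra hcon
  push Not at hcon
  have hdeg : ∀ v, (Finset.univ.filter fun e => tgt e = v).card =
      (Finset.univ.filter fun e => src e = v).card := by
    intro v
    have := H.one (fun w => if w = v then 1 else 0)
    simp only [Pi.one_apply, one_mul, Finset.sum_sub_distrib, Finset.sum_boole, sub_eq_zero]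
      at this
    exact_mod_cast this
  have hout : ∀ v, 2 ≤ (Finset.univ.filter fun e => src e = v).card := by
    intro v
    by_contra hlt
    have hall : (∀ e, src e = v ↔ tgt e = v) → ∀ e, src e = v ∧ tgt e = v := by
      intro h e
      have := H.conn (· = v) h v (src e) rfl
      exact ⟨this, (h e).1 this⟩
    rcases Nat.lt_or_ge (Finset.univ.filter fun e => src e = v).card 1 with h0 | h1
    · have h0' : (Finset.univ.filter fun e => src e = v) = ∅ :=
        Finset.card_eq_zero.mp (by omega)
      have h0'' : (Finset.univ.filter fun e => tgt e = v) = ∅ :=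
        Finset.card_eq_zero.mp (by have := hdeg v; omega)
      have hs : ∀ e, src e ≠ v := fun e => by
        simpa using Finset.filter_eq_empty_iff.mp h0' (Finset.mem_univ e)
      have ht : ∀ e, tgt e ≠ v := fun e => by
        simpa using Finset.filter_eq_empty_iff.mp h0'' (Finset.mem_univ e)
      exact hs e₀ (hall (fun e => iff_of_false (hs e) (ht e)) e₀).1
    · obtain ⟨e₂, he₂⟩ := Finset.card_eq_one.mp
        (by omega : (Finset.univ.filter fun e => src e = v).card = 1)
      obtain ⟨e₁, he₁⟩ := Finset.card_eq_one.mp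
        (by have := hdeg v; omega : (Finset.univ.filter fun e => tgt e = v).card = 1)
      have hs : ∀ e, src e = v ↔ e = e₂ := fun e => by
        simpa using Finset.ext_iff.mp he₂ e
      have ht : ∀ e, tgt e = v ↔ e = e₁ := fun e => by
        simpa using Finset.ext_iff.mp he₁ e
      by_cases h12 : e₁ = e₂
      · subst h12
        obtain ⟨e, he⟩ := hex
        have h := hall fun e => by rw [hs, ht]
        exact he (hloop e ((h e).1.trans (h e).2.symm))
      · obtain ⟨e, he⟩ := hcon v e₁ e₂ h12 ht
        have := hs e
        tauto
  have hcard := H.card_edges_lt e₀ hloop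
  have hfib : Fintype.card F = ∑ v : V, (Finset.univ.filter fun e => src e = v).card := by
    rw [← Finset.card_univ]
    exact Finset.card_eq_sum_card_fiberwise (fun _ _ => Finset.mem_coe.mpr (Finset.mem_univ _))
  have hsum := Finset.sum_le_sum fun v (_ : v ∈ Finset.univ) => hout v
  rw [← hfib] at hsum
  simp at hsum
  omega

end Contraction

/-! ### Graph sums with vertex and edge weights -/

section GraphSum

variable {V F : Type} [Fintype V] [Fintype F] {N : ℕ}

/-- The sum over all vertex colourings of the product of vertex and edge weights. -/
def graphSum (src tgt : F → V) (D : V → Fin N → ℂ) (X : F → Matrix (Fin N) (Fin N) ℂ) : ℂ :=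
  ∑ φ : V → Fin N, (∏ v, D v (φ v)) * ∏ e, X e (φ (tgt e)) (φ (src e))

variable {src tgt : F → V}

lemma graphSum_delete_loop {e₁ : F} (he : src e₁ = tgt e₁) (D : V → Fin N → ℂ)
    (X : F → Matrix (Fin N) (Fin N) ℂ) :
    graphSum src tgt D X =
      graphSum (fun e : {e // e ≠ e₁} => src e) (fun e => tgt e)
        (Function.update D (src e₁) fun i => D (src e₁) i * X e₁ i i) (fun e => X e) := by
  refine Finset.sum_congr rfl fun φ _ => ?_
  rw [Fintype.prod_eq_mul_prod_subtype_ne (fun e => X e (φ (tgt e)) (φ (src e))) e₁,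
    Fintype.prod_eq_mul_prod_subtype_ne _ (src e₁),
    Fintype.prod_eq_mul_prod_subtype_ne _ (src e₁), ← he]
  have : ∀ w : {w // w ≠ src e₁}, Function.update D (src e₁)
      (fun i => D (src e₁) i * X e₁ i i) w (φ w) = D w (φ w) := fun w => by
    rw [Function.update_of_ne w.2]
  simp only [this, Function.update_self]
  ring

lemma graphSum_contract {v : V} {e₁ e₂ : F} (hne : e₁ ≠ e₂)
    (hin : ∀ e, tgt e = v ↔ e = e₁) (hout : ∀ e, src e = v ↔ e = e₂) (D : V → Fin N → ℂ)
    (X : F → Matrix (Fin N) (Fin N) ℂ) :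
    graphSum src tgt D X =
      graphSum (contractSrc hout) (contractTgt hne hin) (fun w => D w)
        (fun e => if e.1 = e₁ then X e₂ * Matrix.diagonal (D v) * X e₁ else X e) := by
  unfold graphSum
  rw [← (Equiv.funSplitAt v (Fin N)).symm.sum_comp, Fintype.sum_prod_type_right]
  refine Finset.sum_congr (by ext; simp) fun ψ _ => ?_
  have ht₁ : tgt e₁ = v := (hin e₁).2 rfl
  have hs₂ : src e₂ = v := (hout e₂).2 rfl
  have ht₂ : tgt e₂ ≠ v := fun h => hne ((hin e₂).1 h).symm
  have hs₁ : src e₁ ≠ v := fun h => hne ((hout e₁).1 h)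
  rw [Fintype.prod_eq_mul_prod_subtype_ne
    (fun e : {e // e ≠ e₂} => (if e.1 = e₁ then X e₂ * Matrix.diagonal (D v) * X e₁ else X e)
      (ψ (contractTgt hne hin e)) (ψ (contractSrc hout e))) ⟨e₁, hne⟩]
  have hL : ∀ x : Fin N,
      ((∏ w, D w ((Equiv.funSplitAt v (Fin N)).symm (x, ψ) w)) *
        ∏ e, X e ((Equiv.funSplitAt v (Fin N)).symm (x, ψ) (tgt e))
          ((Equiv.funSplitAt v (Fin N)).symm (x, ψ) (src e))) =
      (∏ w : {w // w ≠ v}, D w (ψ w)) *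
        (X e₂ (ψ ⟨tgt e₂, ht₂⟩) x * D v x * X e₁ x (ψ ⟨src e₁, hs₁⟩)) *
        ∏ e : {e : {e // e ≠ e₂} // e ≠ ⟨e₁, hne⟩},
          (if e.1.1 = e₁ then X e₂ * Matrix.diagonal (D v) * X e₁ else X e.1)
          (ψ (contractTgt hne hin e.1)) (ψ (contractSrc hout e.1)) := by
    intro x
    rw [Fintype.prod_eq_mul_prod_subtype_ne _ v, Fintype.prod_eq_mul_prod_subtype_ne _ e₂,
      Fintype.prod_eq_mul_prod_subtype_ne _ (⟨e₁, hne⟩ : {e // e ≠ e₂})]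
    have h1 : ∀ w : {w // w ≠ v}, (Equiv.funSplitAt v (Fin N)).symm (x, ψ) w = ψ w :=
      fun w => by simp [Equiv.funSplitAt_symm_apply, w.2]
    have h2 : (Equiv.funSplitAt v (Fin N)).symm (x, ψ) v = x := by
      simp [Equiv.funSplitAt_symm_apply]
    have h3 : ∀ e : {e : {e // e ≠ e₂} // e ≠ ⟨e₁, hne⟩},
        X e.1 ((Equiv.funSplitAt v (Fin N)).symm (x, ψ) (tgt e.1))
          ((Equiv.funSplitAt v (Fin N)).symm (x, ψ) (src e.1)) =
        (if e.1.1 = e₁ then X e₂ * Matrix.diagonal (D v) * X e₁ else X e.1)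
          (ψ (contractTgt hne hin e.1)) (ψ (contractSrc hout e.1)) := by
      intro e
      have he₁ : e.1.1 ≠ e₁ := fun h => e.2 (Subtype.ext h)
      have hs : src e.1 ≠ v := fun h => e.1.2 ((hout _).1 h)
      have ht : tgt e.1 ≠ v := fun h => he₁ ((hin _).1 h)
      rw [if_neg he₁, h1 ⟨_, hs⟩, h1 ⟨_, ht⟩]
      simp [contractSrc, contractTgt, he₁]
    simp only [h1, h3, ht₁, hs₂, h2]
    rw [h1 ⟨_, ht₂⟩, h1 ⟨_, hs₁⟩]
    ring
  simp only [hL]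
  rw [← Finset.sum_mul, ← Finset.mul_sum, mul_assoc]
  congr 2
  simp only [contractSrc, contractTgt, dif_pos, if_pos]
  rw [Matrix.mul_apply]
  simp only [Matrix.mul_diagonal]

end GraphSum

section Membership

variable {Ω : Type} {N : ℕ} {S : Subalgebra ℂ (Ω → Matrix (Fin N) (Fin N) ℂ)}

/-- For a cactus with weights in a `Δ`-stable algebra `S`, the graph sum as a function of the
label of a distinguished edge is the trace against an element of `S`. -/
lemma exists_graphSum_eq_trace (hS : ∀ x ∈ S, (fun ω => dproj (x ω)) ∈ S) (n : ℕ) :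
    ∀ (V F : Type) [Fintype V] [Fintype F] (src tgt : F → V), Fintype.card F = n →
      HasCactusCirculations src tgt → ∀ (e₀ : F) (D : V → Ω → Fin N → ℂ)
      (X : F → Ω → Matrix (Fin N) (Fin N) ℂ),
      (∀ v, (fun ω => Matrix.diagonal (D v ω)) ∈ S) → (∀ e, e ≠ e₀ → X e ∈ S) →
      ∃ M ∈ S, ∀ ω Y, graphSum src tgt (fun v => D v ω)
        (fun e => if e = e₀ then Y else X e ω) = Matrix.trace (M ω * Y) := by
  induction n with
  | zero =>
    intro V F _ _ src tgt hcard _ e₀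
    exact ((Fintype.card_eq_zero_iff.mp hcard).false e₀).elim
  | succ n ih =>
    intro V F _ _ src tgt hcard H e₀ D X hD hX
    have hcard' : ∀ e₁ : F, Fintype.card {e // e ≠ e₁} = n := fun e₁ => by
      simp [Fintype.card_subtype_compl, hcard]
    by_cases hloop : ∀ e, src e = tgt e → e = e₀
    swap
    · push Not at hloop
      obtain ⟨e₁, he, hne⟩ := hloop
      let D' : V → Ω → Fin N → ℂ :=
        Function.update D (src e₁) fun ω i => D (src e₁) ω i * X e₁ ω i i
      have hD' : ∀ v, (fun ω => Matrix.diagonal (D' v ω)) ∈ S := by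
        intro v
        by_cases hv : v = src e₁
        · subst hv
          have := mul_mem (hD (src e₁)) (hS _ (hX e₁ hne))
          convert this using 1
          funext ω
          ext i j
          by_cases hij : i = j <;> simp [D', dproj, Matrix.diagonal_mul, hij]
        · simpa [D', hv] using hD v
      obtain ⟨M, hM, h⟩ := ih V {e // e ≠ e₁} (fun e => src e) (fun e => tgt e) (hcard' e₁)
        (H.delete_loop he hne.symm) ⟨e₀, hne.symm⟩ D' (fun e => X e) hD'
        (fun e he => hX e fun h => he (Subtype.ext h))
      refine ⟨M, hM, fun ω Y => ?_⟩
      rw [graphSum_delete_loop he, ← h ω Y]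
      congr 1
      · funext v
        by_cases hv : v = src e₁
        · subst hv
          simp [D', hne]
        · simp [D', hv]
      · funext e
        simp [Subtype.ext_iff]
    · by_cases hex : ∃ e, e ≠ e₀
      · obtain ⟨v, e₁, e₂, hne, hin, hout⟩ := H.exists_degree_two e₀ hloop hex
        have IH := ih {w // w ≠ v} {e // e ≠ e₂} (contractSrc hout) (contractTgt hne hin)
          (hcard' e₂) (H.contract hne hin hout)
        by_cases h₂ : e₂ = e₀
        · subst h₂
          obtain ⟨M, hM, h⟩ := IH ⟨e₁, hne⟩ (fun w => D w) (fun e => X e) (fun w => hD w)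
            (fun e _ => hX e e.2)
          refine ⟨(fun ω => Matrix.diagonal (D v ω)) * X e₁ * M,
            mul_mem (mul_mem (hD v) (hX e₁ hne)) hM, fun ω Y => ?_⟩
          rw [graphSum_contract hne hin hout]
          have := h ω (Y * Matrix.diagonal (D v ω) * X e₁ ω)
          rw [Matrix.trace_mul_comm, mul_assoc Y, mul_assoc Y, Matrix.trace_mul_comm] at this
          refine Eq.trans ?_ this
          congr 1
          funext e
          simp [Subtype.ext_iff, hne, e.2, mul_assoc]
        · by_cases h₁ : e₁ = e₀
          · subst h₁
            obtain ⟨M, hM, h⟩ := IH ⟨e₁, hne⟩ (fun w => D w) (fun e => X e) (fun w => hD w)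
              (fun e he => hX e fun h => he (Subtype.ext h))
            refine ⟨M * (X e₂ * fun ω => Matrix.diagonal (D v ω)),
              mul_mem hM (mul_mem (hX e₂ h₂) (hD v)), fun ω Y => ?_⟩
            rw [graphSum_contract hne hin hout]
            have := h ω (X e₂ ω * Matrix.diagonal (D v ω) * Y)
            rw [← mul_assoc] at this
            refine Eq.trans ?_ this
            congr 1
            funext e
            by_cases he : e.1 = e₁ <;> simp [Subtype.ext_iff, h₂, he]
          · let X' : {e // e ≠ e₂} → Ω → Matrix (Fin N) (Fin N) ℂ := fun e =>
              if e.1 = e₁ then X e₂ * (fun ω => Matrix.diagonal (D v ω)) * X e₁ else X e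
            have hX' : ∀ e : {e // e ≠ e₂}, e ≠ ⟨e₀, Ne.symm h₂⟩ → X' e ∈ S := by
              intro e he
              by_cases he₁ : e.1 = e₁
              · simp only [X', if_pos he₁]
                exact mul_mem (mul_mem (hX e₂ h₂) (hD v)) (hX e₁ h₁)
              · simp only [X', if_neg he₁]
                exact hX e fun h => he (Subtype.ext h)
            obtain ⟨M, hM, h⟩ := IH ⟨e₀, Ne.symm h₂⟩ (fun w => D w) X' (fun w => hD w) hX'
            refine ⟨M, hM, fun ω Y => ?_⟩
            rw [graphSum_contract hne hin hout, ← h ω Y]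
            congr 1
            funext e
            by_cases he : e.1 = e₁
            · simp [X', Subtype.ext_iff, he, h₁, h₂]
            · simp [X', Subtype.ext_iff, he]
      · push Not at hex
        have h1 := H.one (fun w => if w = src e₀ then 1 else 0)
        rw [Finset.sum_eq_single e₀ (fun e _ he => absurd (hex e) he) (by simp)] at h1
        have hts : tgt e₀ = src e₀ := by
          by_contra hc
          simp [hc] at h1
        have hV : ∀ w, w = src e₀ := fun w =>
          H.conn (· = src e₀) (fun e => by rw [hex e, hts]) (src e₀) w rfl
        let _ : Unique V := ⟨⟨src e₀⟩, hV⟩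
        let _ : Unique F := ⟨⟨e₀⟩, hex⟩
        refine ⟨fun ω => Matrix.diagonal (D (src e₀) ω), hD _, fun ω Y => ?_⟩
        have hd : (default : V) = src e₀ := rfl
        have hf : (default : F) = e₀ := rfl
        unfold graphSum
        rw [← (Equiv.funUnique V (Fin N)).symm.sum_comp]
        simp [Matrix.trace, Matrix.diagonal_mul, hd, hf]

end Membership

/-! ### Simple cycles and circulations -/

namespace GraphMonomial

section SimpleCycles

variable {L : ℕ} {K : Type} {g : GraphMonomial L K}

/-- A simple cycle given by a cyclically indexed family of steps. -/
structure IsCyclicSteps {n : ℕ} [NeZero n] (s : Fin n → g.E × Bool) : Prop where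
  closed : ∀ i, g.stepTgt (s i) = g.stepSrc (s (i + 1))
  edge_injective : Function.Injective fun i => (s i).1
  vertex_injective : Function.Injective fun i => g.stepSrc (s i)

lemma isSimpleCycle_ofFn {n : ℕ} [NeZero n] {s : Fin n → g.E × Bool} :
    g.IsSimpleCycle (List.ofFn s) ↔ IsCyclicSteps s := by
  have hidx : ∀ i : Fin n, (⟨(i.1 + 1) % n, Nat.mod_lt _ (NeZero.pos n)⟩ : Fin n) = i + 1 := by
    intro i
    ext
    simp [Fin.val_add]
  have hne : List.ofFn s ≠ [] := by
    simpa [List.ofFn_eq_nil_iff] using NeZero.ne n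
  unfold IsSimpleCycle
  simp only [List.map_ofFn, List.nodup_ofFn, List.get_ofFn]
  constructor
  · rintro ⟨_, h1, h2, h3⟩
    refine ⟨fun i => ?_, h2, h3⟩
    have := h1 (Fin.cast (by simp) i)
    simpa [Fin.cast, hidx] using this
  · rintro ⟨h1, h2, h3⟩
    refine ⟨hne, fun i => ?_, h2, h3⟩
    have := h1 (Fin.cast (by simp) i)
    rw [← hidx] at this
    simpa [Fin.cast] using this

lemma IsSimpleCycle.exists_steps {c : List (g.E × Bool)} (hc : g.IsSimpleCycle c) :
    ∃ (n : ℕ) (_ : NeZero n) (s : Fin n → g.E × Bool), c = List.ofFn s ∧ IsCyclicSteps s := by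
  have hlen : NeZero c.length := ⟨fun h => hc.1 (List.length_eq_zero_iff.mp h)⟩
  refine ⟨c.length, hlen, c.get, (List.ofFn_get c).symm, ?_⟩
  rw [← isSimpleCycle_ofFn, List.ofFn_get]
  exact hc

/-- The sign of a step. -/
def stepSign (b : Bool) : ℚ := if b then 1 else -1

lemma stepSign_mul_self (b : Bool) : stepSign b * stepSign b = 1 := by
  cases b <;> simp [stepSign]

lemma stepSign_ne_zero (b : Bool) : stepSign b ≠ 0 := by
  cases b <;> simp [stepSign]

/-- The signed edge indicator of a family of steps. -/
def stepChain {n : ℕ} (s : Fin n → g.E × Bool) : g.E → ℚ :=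
  fun e => ∑ i, if (s i).1 = e then stepSign (s i).2 else 0

lemma stepChain_of_notMem {n : ℕ} {s : Fin n → g.E × Bool} {e : g.E}
    (he : ∀ i, (s i).1 ≠ e) : stepChain s e = 0 :=
  Finset.sum_eq_zero fun i _ => if_neg (he i)

namespace IsCyclicSteps

variable {n : ℕ} [NeZero n] {s : Fin n → g.E × Bool}

lemma stepChain_apply (hs : IsCyclicSteps s) (i : Fin n) :
    stepChain s (s i).1 = stepSign (s i).2 := by
  unfold stepChain
  rw [Finset.sum_eq_single i (fun j _ hj => if_neg fun h => hj (hs.edge_injective h)) (by simp),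
    if_pos rfl]

lemma stepChain_ne_zero_iff (hs : IsCyclicSteps s) (e : g.E) :
    stepChain s e ≠ 0 ↔ ∃ i, (s i).1 = e := by
  constructor
  · intro h
    by_contra hcon
    push Not at hcon
    exact h (stepChain_of_notMem hcon)
  · rintro ⟨i, rfl⟩
    rw [hs.stepChain_apply]
    exact stepSign_ne_zero _

lemma stepChain_mul_self (hs : IsCyclicSteps s) (e : g.E) :
    stepChain s e * stepChain s e = if ∃ i, (s i).1 = e then 1 else 0 := by
  split_ifs with h
  · obtain ⟨i, rfl⟩ := h
    rw [hs.stepChain_apply, stepSign_mul_self]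
  · push Not at h
    rw [stepChain_of_notMem h, zero_mul]

lemma sum_of_support (hs : IsCyclicSteps s) {y : g.E → ℚ}
    (hy : ∀ e, y e ≠ 0 → ∃ i, (s i).1 = e) (h : g.V → ℚ) :
    ∑ e, y e * (h (g.tgt e) - h (g.src e)) =
      ∑ i, y (s i).1 * stepSign (s i).2 * (h (g.stepSrc (s (i + 1))) - h (g.stepSrc (s i))) := by
  symm
  refine Finset.sum_of_injOn (fun i => (s i).1) hs.edge_injective.injOn
    (fun i _ => Finset.mem_coe.mpr (Finset.mem_univ _)) (fun e _ he => ?_) (fun i _ => ?_)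
  · by_contra hne
    obtain ⟨i, hi⟩ := hy e (left_ne_zero_of_mul hne)
    exact he ⟨i, by simp, hi⟩
  · rw [← hs.closed]
    rcases s i with ⟨e, b⟩
    cases b
    · simp only [stepSign, stepSrc, stepTgt, Bool.false_eq_true, if_false]
      ring
    · simp [stepSign, stepSrc, stepTgt]

lemma isCirculation (hs : IsCyclicSteps s) : IsCirculation g.src g.tgt (stepChain s) := by
  intro h
  rw [hs.sum_of_support fun e => (hs.stepChain_ne_zero_iff e).1]
  simp only [hs.stepChain_apply, stepSign_mul_self, one_mul, Finset.sum_sub_distrib, sub_eq_zero]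
  exact Equiv.sum_comp (Equiv.addRight (1 : Fin n)) fun i => h (g.stepSrc (s i))

/-- A circulation supported on a simple cycle is a multiple of the cycle. -/
lemma eq_of_support (hs : IsCyclicSteps s) {y : g.E → ℚ}
    (hc : IsCirculation g.src g.tgt y) (hy : ∀ e, y e ≠ 0 → ∃ i, (s i).1 = e) (i j : Fin n) :
    y (s i).1 * stepSign (s i).2 = y (s j).1 * stepSign (s j).2 := by
  have hstep : ∀ i : Fin n, y (s (i + 1)).1 * stepSign (s (i + 1)).2 =
      y (s i).1 * stepSign (s i).2 := by
    intro i
    let h : g.V → ℚ := fun w => if w = g.stepSrc (s (i + 1)) then 1 else 0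
    have h0 := (hs.sum_of_support hy h).symm.trans (hc h)
    have hiff : ∀ j k : Fin n, g.stepSrc (s j) = g.stepSrc (s k) ↔ j = k :=
      fun j k => hs.vertex_injective.eq_iff
    simp only [h, hiff, mul_sub, Finset.sum_sub_distrib, add_left_inj] at h0
    simp only [mul_ite, mul_one, mul_zero, Finset.sum_ite_eq', Finset.mem_univ, if_true] at h0
    linarith
  have hall : ∀ (m : ℕ) (hm : m < n), y (s ⟨m, hm⟩).1 * stepSign (s ⟨m, hm⟩).2 =
      y (s 0).1 * stepSign (s 0).2 := by
    intro m
    induction m with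
    | zero => intro hm; rfl
    | succ m ih =>
      intro hm
      rw [← ih (by omega), ← hstep ⟨m, by omega⟩]
      have : (⟨m, by omega⟩ + 1 : Fin n) = ⟨m + 1, hm⟩ := by
        ext
        simp [Fin.val_add, Nat.mod_eq_of_lt hm]
      rw [this]
  rw [hall i i.2, hall j j.2]

lemma ne_zero_of_support (hs : IsCyclicSteps s) {y : g.E → ℚ}
    (hc : IsCirculation g.src g.tgt y) (hy : ∀ e, y e ≠ 0 → ∃ i, (s i).1 = e)
    {i : Fin n} (hi : y (s i).1 ≠ 0) (j : Fin n) : y (s j).1 ≠ 0 := by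
  intro hj
  have := hs.eq_of_support hc hy i j
  rw [hj, zero_mul] at this
  exact mul_ne_zero hi (stepSign_ne_zero _) this

end IsCyclicSteps

/-- At the end of a step of a circulation without loops one can continue along another edge
of the support. -/
lemma exists_next_step {z : g.E → ℚ} (hz : IsCirculation g.src g.tgt z)
    (hloop : ∀ e, z e ≠ 0 → g.src e ≠ g.tgt e) (t : g.E × Bool) (ht : z t.1 ≠ 0) :
    ∃ t' : g.E × Bool, z t'.1 ≠ 0 ∧ g.stepTgt t = g.stepSrc t' ∧ t'.1 ≠ t.1 := by
  by_contra hcon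
  push Not at hcon
  have h0 := hz fun w => if w = g.stepTgt t then 1 else 0
  rw [Finset.sum_eq_single t.1 (fun e _ hne => ?_) (by simp)] at h0
  · have hl := hloop _ ht
    rcases t with ⟨e, b⟩
    cases b <;> simp [stepTgt, hl, hl.symm] at h0 <;> exact ht h0
  · by_contra hmul
    have hze := left_ne_zero_of_mul hmul
    have h1 : g.src e ≠ g.stepTgt t := fun h => hne (hcon (e, true) hze h.symm)
    have h2 : g.tgt e ≠ g.stepTgt t := fun h => hne (hcon (e, false) hze h.symm)
    simp [h1, h2] at hmul

lemma step_ends {x y : g.E × Bool} (hxy : x.1 = y.1) (hne : g.stepSrc x ≠ g.stepSrc y) :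
    g.stepSrc x = g.stepTgt y ∧ g.stepTgt x = g.stepSrc y := by
  rcases x with ⟨e, x⟩
  rcases y with ⟨e', y⟩
  obtain rfl : e = e' := hxy
  cases x <;> cases y <;> simp [stepSrc, stepTgt] at hne ⊢

/-- The support of a nonzero circulation contains a simple cycle. -/
lemma exists_cyclicSteps {z : g.E → ℚ} (hz : IsCirculation g.src g.tgt z) {e : g.E}
    (he : z e ≠ 0) :
    ∃ (n : ℕ) (_ : NeZero n) (s : Fin n → g.E × Bool),
      IsCyclicSteps s ∧ ∀ i, z (s i).1 ≠ 0 := by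
  by_cases hloop : ∀ e, z e ≠ 0 → g.src e ≠ g.tgt e
  swap
  · push Not at hloop
    obtain ⟨e, he, hl⟩ := hloop
    refine ⟨1, inferInstance, fun _ => (e, true), ⟨fun _ => ?_, Function.injective_of_subsingleton _,
      Function.injective_of_subsingleton _⟩, fun _ => he⟩
    simp [stepTgt, stepSrc, hl]
  have hnext : ∀ t : {t : g.E × Bool // z t.1 ≠ 0}, ∃ t' : {t : g.E × Bool // z t.1 ≠ 0},
      g.stepTgt t.1 = g.stepSrc t'.1 ∧ t'.1.1 ≠ t.1.1 := fun t => by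
    obtain ⟨t', h1, h2⟩ := exists_next_step hz hloop t.1 t.2
    exact ⟨⟨t', h1⟩, h2⟩
  choose next hnext_src hnext_ne using hnext
  let t : ℕ → {t : g.E × Bool // z t.1 ≠ 0} := fun k => next^[k] ⟨(e, true), he⟩
  have ht : ∀ k, t (k + 1) = next (t k) := fun k => Function.iterate_succ_apply' _ _ _
  let u : ℕ → g.V := fun k => g.stepSrc (t k).1
  have hu : ∀ k, g.stepTgt (t k).1 = u (k + 1) := fun k => by
    simp only [u, ht]
    exact hnext_src _
  have hrep : ∃ j, ∃ i < j, u i = u j := by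
    obtain ⟨a, b, hab, h⟩ := Finite.exists_ne_map_eq_of_infinite u
    rcases lt_or_gt_of_ne hab with h' | h'
    · exact ⟨b, a, h', h⟩
    · exact ⟨a, b, h', h.symm⟩
  obtain ⟨i, hij, hui⟩ := Nat.find_spec hrep
  set j := Nat.find hrep with hj
  have huinj : ∀ a b, a < j → b < j → u a = u b → a = b := by
    intro a b ha hb hab
    by_contra hne
    rcases lt_or_gt_of_ne hne with h' | h'
    · exact Nat.find_min hrep hb ⟨a, h', hab⟩
    · exact Nat.find_min hrep ha ⟨b, h', hab.symm⟩
  have hends : ∀ a b, (t a).1.1 = (t b).1.1 → u a ≠ u b → u a = u (b + 1) ∧ u (a + 1) = u b := by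
    intro a b hab hne
    rw [← hu, ← hu]
    exact step_ends hab hne
  have hedge : ∀ a b, i ≤ a → a < b → b < j → (t a).1.1 ≠ (t b).1.1 := by
    intro a b hia hab hbj heq
    have hne : u a ≠ u b := fun h => hab.ne (huinj a b (by omega) hbj h)
    obtain ⟨h1, h2⟩ := hends a b heq hne
    have h3 : a + 1 = b := huinj _ _ (by omega) hbj h2
    apply hnext_ne (t a)
    rw [← ht, h3, heq]
  have hn : NeZero (j - i) := ⟨by omega⟩
  refine ⟨j - i, hn, fun k => (t (i + k)).1, ⟨fun k => ?_, fun a b hab => ?_, fun a b hab => ?_⟩,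
    fun k => (t (i + k)).2⟩
  · rw [hu]
    have hk : ((k + 1 : Fin (j - i)) : ℕ) = (k.1 + 1) % (j - i) := by
      simp [Fin.val_add]
    change u (i + k + 1) = u (i + ((k + 1 : Fin (j - i)) : ℕ))
    rw [hk]
    rcases Nat.lt_or_ge (k.1 + 1) (j - i) with h | h
    · rw [Nat.mod_eq_of_lt h, add_assoc]
    · have h' : k.1 + 1 = j - i := by have := k.2; omega
      rw [h', Nat.mod_self, add_zero, hui]
      congr 1
      omega
  · by_contra hne
    have ha := a.2
    have hb := b.2
    rcases lt_or_gt_of_ne (fun h => hne (Fin.ext h) : a.1 ≠ b.1) with h' | h'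
    · exact hedge (i + a) (i + b) (by omega) (by omega) (by omega) hab
    · exact hedge (i + b) (i + a) (by omega) (by omega) (by omega) hab.symm
  · have := huinj (i + a) (i + b) (by omega) (by omega) hab
    exact Fin.ext (by omega)

end SimpleCycles

end GraphMonomial

/-! ### Closing up a graph monomial by an edge from the output to the input -/

lemma IsConnectedGraph.of_invariant {V E : Type} {src tgt : E → V}
    (hconn : IsConnectedGraph src tgt) {p : V → Prop} (hp : ∀ e, p (src e) ↔ p (tgt e))
    {a b : V} (ha : p a) : p b := by
  have hab := hconn a b
  induction hab with
  | refl => exact ha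
  | tail _ hbc ih =>
    obtain ⟨e, -, ⟨rfl, rfl⟩ | ⟨rfl, rfl⟩⟩ := hbc
    · exact (hp e).1 ih
    · exact (hp e).2 ih

namespace GraphMonomial

section Closure

variable {L : ℕ} {K : Type} (g : GraphMonomial L K)

/-- Sources of the edges of `g` completed by an edge from the output to the input. -/
def closureSrc : Option g.E → g.V := fun o => o.elim g.vout g.src

/-- Targets of the edges of `g` completed by an edge from the output to the input. -/
def closureTgt : Option g.E → g.V := fun o => o.elim g.vin g.tgt

variable {g}

lemma isCirculation_closure_iff {z : Option g.E → ℚ} :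
    IsCirculation g.closureSrc g.closureTgt z ↔ ∀ h : g.V → ℚ,
      z none * (h g.vin - h g.vout) + ∑ e, z (some e) * (h (g.tgt e) - h (g.src e)) = 0 := by
  simp only [IsCirculation, Fintype.sum_option, closureSrc, closureTgt, Option.elim_none,
    Option.elim_some]

/-- A directed simple path from the input to the output. -/
structure IsRootPath {d : ℕ} (v : Fin (d + 1) → g.V) (f : Fin d → g.E) : Prop where
  vertex_injective : Function.Injective v
  edge_injective : Function.Injective f
  edges : ∀ j : Fin d, g.src (f j) = v j.succ ∧ g.tgt (f j) = v j.castSucc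
  vin_eq : g.vin = v (Fin.last d)
  vout_eq : g.vout = v 0

namespace IsRootPath

variable {d : ℕ} {v : Fin (d + 1) → g.V} {f : Fin d → g.E}

lemma sum_of_support (hp : IsRootPath v f) {y : g.E → ℚ} (hy : ∀ e ∉ Set.range f, y e = 0)
    (h : g.V → ℚ) :
    ∑ e, y e * (h (g.tgt e) - h (g.src e)) =
      ∑ j, y (f j) * (h (v j.castSucc) - h (v j.succ)) := by
  symm
  refine Finset.sum_of_injOn f hp.edge_injective.injOn
    (fun i _ => Finset.mem_coe.mpr (Finset.mem_univ _)) (fun e _ he => ?_) (fun i _ => ?_)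
  · rw [hy e (by simpa using he), zero_mul]
  · rw [(hp.edges i).1, (hp.edges i).2]

lemma sum_indicator (hp : IsRootPath v f) (h : g.V → ℚ) :
    ∑ e, (Set.range f).indicator (1 : g.E → ℚ) e * (h (g.tgt e) - h (g.src e)) =
      h g.vout - h g.vin := by
  rw [hp.sum_of_support fun e he => Set.indicator_of_notMem he _]
  simp only [Set.indicator_of_mem (Set.mem_range_self _), Pi.one_apply, one_mul,
    Finset.sum_sub_distrib, hp.vin_eq, hp.vout_eq]
  have h1 := Fin.sum_univ_succ fun j => h (v j)
  rw [Fin.sum_univ_castSucc] at h1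
  linarith

/-- Circulations of the completed graph, modulo the completed root path, are circulations
of the graph. -/
lemma isCirculation_closure_iff (hp : IsRootPath v f) {z : Option g.E → ℚ} :
    IsCirculation g.closureSrc g.closureTgt z ↔ IsCirculation g.src g.tgt
      fun e => z (some e) - z none * (Set.range f).indicator 1 e := by
  rw [GraphMonomial.isCirculation_closure_iff]
  refine forall_congr' fun h => ?_
  simp only [sub_mul, Finset.sum_sub_distrib, mul_assoc, ← Finset.mul_sum, hp.sum_indicator]
  rw [← sub_eq_zero (b := (0 : ℚ)), sub_zero]
  constructor <;> intro h <;> linarith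

end IsRootPath

lemma IsCycleEdgeSet.exists_steps {S : Finset g.E} (hS : g.IsCycleEdgeSet S) :
    ∃ (n : ℕ) (_ : NeZero n) (s : Fin n → g.E × Bool), IsCyclicSteps s ∧
      g.IsSimpleCycle (List.ofFn s) ∧ ∀ e, e ∈ S ↔ ∃ i, (s i).1 = e := by
  obtain ⟨c, hc, rfl⟩ := hS
  obtain ⟨n, hn, s, rfl, hs⟩ := hc.exists_steps
  refine ⟨n, hn, s, hs, hc, fun e => ?_⟩
  simp [List.map_ofFn, List.mem_ofFn]

lemma IsCyclicSteps.isCycleEdgeSet {n : ℕ} [NeZero n] {s : Fin n → g.E × Bool}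
    (hs : IsCyclicSteps s) : g.IsCycleEdgeSet (Finset.univ.image fun i => (s i).1) := by
  refine ⟨_, isSimpleCycle_ofFn.2 hs, ?_⟩
  ext e
  simp [List.map_ofFn, List.mem_ofFn]

/-- The indicator of a directed simple cycle is a circulation. -/
lemma IsCycleEdgeSet.isCirculation_indicator
    (hdir : ∀ c, g.IsSimpleCycle c → g.IsDirectedCycleList c) {S : Finset g.E}
    (hS : g.IsCycleEdgeSet S) : IsCirculation g.src g.tgt ((S : Set g.E).indicator 1) := by
  obtain ⟨n, hn, s, hs, hc, hmem⟩ := hS.exists_steps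
  have hsign : ∃ c : ℚ, ∀ i, c * stepSign (s i).2 = 1 := by
    rcases hdir _ hc with h | h
    · refine ⟨1, fun i => ?_⟩
      rw [h (s i) ((List.mem_ofFn' _ _).2 ⟨i, rfl⟩)]
      simp [stepSign]
    · refine ⟨-1, fun i => ?_⟩
      rw [h (s i) ((List.mem_ofFn' _ _).2 ⟨i, rfl⟩)]
      simp [stepSign]
  obtain ⟨c, hsgn⟩ := hsign
  convert hs.isCirculation.smul c using 1
  funext e
  by_cases he : e ∈ S
  · obtain ⟨i, rfl⟩ := (hmem e).1 he
    rw [Set.indicator_of_mem (Finset.mem_coe.2 he), Pi.smul_apply, hs.stepChain_apply,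
      smul_eq_mul, hsgn, Pi.one_apply]
  · rw [Set.indicator_of_notMem (by simpa using he), Pi.smul_apply,
      stepChain_of_notMem fun i hi => he ((hmem e).2 ⟨i, hi⟩), smul_zero]

lemma IsCycleEdgeSet.disjoint {P : Set g.E}
    (hdir : ∀ c, g.IsSimpleCycle c → g.IsDirectedCycleList c ∧ ∀ s ∈ c, s.1 ∉ P)
    {S : Finset g.E} (hS : g.IsCycleEdgeSet S) : ∀ e ∈ S, e ∉ P := by
  obtain ⟨c, hc, rfl⟩ := hS
  intro e he
  obtain ⟨t, ht, rfl⟩ := List.mem_map.1 (List.mem_toFinset.1 he)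
  exact (hdir c hc).2 t ht

/-- Circulations of a graph whose simple cycles are directed and edge disjoint: the weights
constant on simple cycles and vanishing off the union `Pᶜ` of the simple cycles. -/
lemma isCirculation_iff_of_cycles {P : Set g.E}
    (hdir : ∀ c, g.IsSimpleCycle c → g.IsDirectedCycleList c ∧ ∀ s ∈ c, s.1 ∉ P)
    (huniq : ∀ e ∉ P, ∃! S : Finset g.E, g.IsCycleEdgeSet S ∧ e ∈ S) (z : g.E → ℚ) :
    IsCirculation g.src g.tgt z ↔ (∀ e ∈ P, z e = 0) ∧
      ∀ S, g.IsCycleEdgeSet S → ∀ e ∈ S, ∀ e' ∈ S, z e = z e' := by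
  have hind : ∀ S, g.IsCycleEdgeSet S → IsCirculation g.src g.tgt ((S : Set g.E).indicator 1) :=
    fun S hS => hS.isCirculation_indicator fun c hc => (hdir c hc).1
  have hdisj : ∀ S, g.IsCycleEdgeSet S → ∀ e ∈ S, e ∉ P :=
    fun S hS => hS.disjoint hdir
  have hgood : ∀ S, g.IsCycleEdgeSet S → (∀ e ∈ P, (S : Set g.E).indicator (1 : g.E → ℚ) e = 0) ∧
      ∀ T, g.IsCycleEdgeSet T → ∀ e ∈ T, ∀ e' ∈ T,
        (S : Set g.E).indicator (1 : g.E → ℚ) e = (S : Set g.E).indicator 1 e' := by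
    refine fun S hS => ⟨fun e he => Set.indicator_of_notMem
      (fun h => hdisj S hS e (by simpa using h) he) _, fun T hT e he e' he' => ?_⟩
    have key : ∀ a ∈ T, ∀ b ∈ T, a ∈ S → b ∈ S := fun a ha b hb haS => by
      rwa [(huniq a (hdisj S hS a haS)).unique ⟨hS, haS⟩ ⟨hT, ha⟩]
    have hiff : e ∈ S ↔ e' ∈ S := ⟨key e he e' he', key e' he' e he⟩
    simp [Set.indicator_apply, hiff]
  have hlt : ∀ (S : Finset g.E) (w : g.E → ℚ) (e : g.E), e ∈ S → (∀ e' ∈ S, w e' ≠ 0) →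
      (Finset.univ.filter fun a => (w - w e • (S : Set g.E).indicator (1 : g.E → ℚ)) a ≠ 0).card <
        (Finset.univ.filter fun a => w a ≠ 0).card := by
    intro S w e he hw
    refine Finset.card_lt_card (Finset.ssubset_iff_of_subset ?_ |>.2 ⟨e, ?_, ?_⟩)
    · intro a ha
      simp only [Finset.mem_filter, Finset.mem_univ, true_and] at ha ⊢
      by_cases haS : a ∈ S
      · exact hw a haS
      · simpa [Set.indicator_apply, haS] using ha
    · simpa using hw e he
    · simp [he]
  have hadd : ∀ (S : Finset g.E) (w : g.E → ℚ) (e : g.E),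
      w = (w - w e • (S : Set g.E).indicator 1) + w e • (S : Set g.E).indicator 1 :=
    fun S w e => by rw [sub_add_cancel]
  constructor
  · induction hm : (Finset.univ.filter fun a => z a ≠ 0).card using Nat.strong_induction_on
      generalizing z with
    | _ m ih =>
    intro hz
    by_cases h0 : ∃ e, z e ≠ 0
    swap
    · push Not at h0
      simp [h0]
    obtain ⟨e, he⟩ := h0
    obtain ⟨n, hn, s, hs, hsup⟩ := exists_cyclicSteps hz he
    have hS := hs.isCycleEdgeSet
    set S := Finset.univ.image fun i => (s i).1 with hSdef
    have hmem : (s 0).1 ∈ S := by simp [hSdef]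
    obtain ⟨h1, h2⟩ := ih _ (hm ▸ hlt S z _ hmem (by simpa [hSdef] using hsup)) _ rfl
      (hz.sub ((hind S hS).smul _))
    obtain ⟨h3, h4⟩ := hgood S hS
    rw [hadd S z (s 0).1]
    refine ⟨fun a ha => ?_, fun T hT a ha b hb => ?_⟩
    · rw [Pi.add_apply, h1 a ha, Pi.smul_apply, h3 a ha, smul_zero, add_zero]
    · rw [Pi.add_apply, Pi.add_apply, h2 T hT a ha b hb, Pi.smul_apply, Pi.smul_apply,
        h4 T hT a ha b hb]
  · induction hm : (Finset.univ.filter fun a => z a ≠ 0).card using Nat.strong_induction_on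
      generalizing z with
    | _ m ih =>
    rintro ⟨h1, h2⟩
    by_cases h0 : ∃ e, z e ≠ 0
    swap
    · push Not at h0
      rw [show z = 0 from funext h0]
      exact isCirculation_zero
    obtain ⟨e, he⟩ := h0
    obtain ⟨S, ⟨hS, heS⟩, -⟩ := huniq e fun h => he (h1 e h)
    obtain ⟨h3, h4⟩ := hgood S hS
    rw [hadd S z e]
    refine (ih _ (hm ▸ hlt S z e heS fun a ha => h2 S hS e heS a ha ▸ he) _ rfl
      ⟨fun a ha => ?_, fun T hT a ha b hb => ?_⟩).add ((hind S hS).smul _)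
    · rw [Pi.sub_apply, h1 a ha, Pi.smul_apply, h3 a ha, smul_zero, sub_zero]
    · rw [Pi.sub_apply, Pi.sub_apply, h2 T hT a ha b hb, Pi.smul_apply, Pi.smul_apply,
        h4 T hT a ha b hb]

lemma IsPathCactusType.hasCactusCirculations (hg : g.IsPathCactusType) :
    HasCactusCirculations g.closureSrc g.closureTgt := by
  obtain ⟨hconn, d, v, f, hv, hf, hvf, hin, hout, hdir, huniq, -⟩ := hg
  have hp : IsRootPath v f := ⟨hv, hf, hvf, hin, hout⟩
  have hdisj : ∀ S, g.IsCycleEdgeSet S → ∀ e ∈ S, e ∉ Set.range f :=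
    fun S hS => hS.disjoint hdir
  have key : ∀ z : Option g.E → ℚ, IsCirculation g.closureSrc g.closureTgt z ↔
      (∀ e ∈ Set.range f, z (some e) = z none) ∧
      ∀ S, g.IsCycleEdgeSet S → ∀ e ∈ S, ∀ e' ∈ S, z (some e) = z (some e') := by
    intro z
    rw [hp.isCirculation_closure_iff, isCirculation_iff_of_cycles hdir huniq]
    refine and_congr (forall₂_congr fun e he => ?_) (forall₄_congr fun S hS e he =>
      forall₂_congr fun e' he' => ?_)
    · rw [Set.indicator_of_mem he, Pi.one_apply, mul_one, sub_eq_zero]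
    · rw [Set.indicator_of_notMem (hdisj S hS e he), Set.indicator_of_notMem (hdisj S hS e' he'),
        mul_zero, sub_zero, sub_zero]
  refine ⟨fun p hp a b ha => ?_, (key 1).2 (by simp), fun z w hz hw => ?_⟩
  · exact hconn.of_invariant (fun e => hp (some e)) ha
  · rw [key] at hz hw ⊢
    refine ⟨fun e he => ?_, fun S hS e he e' he' => ?_⟩
    · rw [Pi.mul_apply, Pi.mul_apply, hz.1 e he, hw.1 e he]
    · rw [Pi.mul_apply, Pi.mul_apply, hz.2 S hS e he e' he', hw.2 S hS e he e' he']

end Closure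

end GraphMonomial

/-! ### Recovering the path and the cacti from the circulations -/

namespace GraphMonomial

section Recover

variable {L : ℕ} {K : Type} {g : GraphMonomial L K}

/-- There is a directed walk of length `k` from `w` to the output. -/
def HasWalkToOut (g : GraphMonomial L K) : ℕ → g.V → Prop
  | 0, w => w = g.vout
  | k + 1, w => ∃ e, g.src e = w ∧ HasWalkToOut g k (g.tgt e)

lemma exists_path_of_walk {d : ℕ} {w : g.V} (hw : g.HasWalkToOut d w)
    (hmin : ∀ k < d, ¬ g.HasWalkToOut k w) :
    ∃ (v : Fin (d + 1) → g.V) (f : Fin d → g.E),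
      (∀ j : Fin d, g.src (f j) = v j.succ ∧ g.tgt (f j) = v j.castSucc) ∧
      w = v (Fin.last d) ∧ g.vout = v 0 ∧
      ∀ j : Fin (d + 1), g.HasWalkToOut j (v j) ∧ ∀ k < j.1, ¬ g.HasWalkToOut k (v j) := by
  induction d generalizing w with
  | zero =>
    refine ⟨fun _ => w, Fin.elim0, fun j => j.elim0, rfl, hw.symm, fun j => ?_⟩
    rw [Fin.fin_one_eq_zero j]
    exact ⟨hw, by simp⟩
  | succ d ih =>
    obtain ⟨e, rfl, he⟩ := hw
    obtain ⟨v, f, h1, h2, h3, h4⟩ := ih he fun k hk h => hmin (k + 1) (by omega) ⟨e, rfl, h⟩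
    refine ⟨Fin.snoc (α := fun _ => g.V) v (g.src e), Fin.snoc (α := fun _ => g.E) f e,
      fun j => ?_, by simp, ?_, fun j => ?_⟩
    · refine Fin.lastCases ?_ (fun j => ?_) j
      · simp [h2]
      · rw [Fin.succ_castSucc, Fin.snoc_castSucc, Fin.snoc_castSucc, Fin.snoc_castSucc]
        exact h1 j
    · rw [← Fin.castSucc_zero, Fin.snoc_castSucc, h3]
    · refine Fin.lastCases ?_ (fun j => ?_) j
      · simp only [Fin.snoc_last, Fin.val_last]
        exact ⟨⟨e, rfl, he⟩, hmin⟩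
      · simpa using h4 j

lemma IsCirculation.comp_some {z : Option g.E → ℚ}
    (hz : IsCirculation g.closureSrc g.closureTgt z) (h0 : z none = 0) :
    IsCirculation g.src g.tgt (z ∘ some) := fun h => by
  have := isCirculation_closure_iff.1 hz h
  rwa [h0, zero_mul, zero_add] at this

lemma isCirculation_elim {z : g.E → ℚ} (hz : IsCirculation g.src g.tgt z) :
    IsCirculation g.closureSrc g.closureTgt fun o => o.elim 0 z :=
  isCirculation_closure_iff.2 fun h => by simpa using hz h

lemma exists_rootPath (H : HasCactusCirculations g.closureSrc g.closureTgt) :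
    ∃ (d : ℕ) (v : Fin (d + 1) → g.V) (f : Fin d → g.E), IsRootPath v f := by
  have hex : ∃ k, g.HasWalkToOut k g.vin := by
    by_contra hcon
    have h0 := isCirculation_closure_iff.1 H.one
      fun w => if ∃ k, g.HasWalkToOut k w then 0 else 1
    have hout : ∃ k, g.HasWalkToOut k g.vout := ⟨0, rfl⟩
    rw [if_neg hcon, if_pos hout] at h0
    have hnn : ∀ e, (0 : ℚ) ≤ (1 : Option g.E → ℚ) (some e) *
        ((if ∃ k, g.HasWalkToOut k (g.tgt e) then 0 else 1) -
          if ∃ k, g.HasWalkToOut k (g.src e) then 0 else 1) := by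
      intro e
      have himp : (∃ k, g.HasWalkToOut k (g.tgt e)) → ∃ k, g.HasWalkToOut k (g.src e) :=
        fun ⟨k, hk⟩ => ⟨k + 1, e, rfl, hk⟩
      split_ifs with h1 h2 h2
      · simp
      · exact absurd (himp h1) h2
      · simp
      · simp
    have := Finset.sum_nonneg fun e (_ : e ∈ Finset.univ) => hnn e
    simp only [Pi.one_apply, sub_zero, one_mul] at h0 this
    linarith
  obtain ⟨v, f, h1, h2, h3, h4⟩ := exists_path_of_walk (Nat.find_spec hex)
    fun k hk => Nat.find_min hex hk
  have hv : Function.Injective v := fun a b hab => by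
    rcases lt_trichotomy a b with h | h | h
    · exact absurd (hab ▸ (h4 a).1) ((h4 b).2 a h)
    · exact h
    · exact absurd (hab ▸ (h4 b).1) ((h4 a).2 b h)
  refine ⟨_, v, f, hv, fun a b hab => ?_, h1, h2, h3⟩
  have := (h1 a).1
  rw [hab, (h1 b).1] at this
  exact (Fin.succ_injective _ (hv this)).symm

lemma isCirculation_mul (H : HasCactusCirculations g.closureSrc g.closureTgt)
    {z w : g.E → ℚ} (hz : IsCirculation g.src g.tgt z)
    (hw : IsCirculation g.src g.tgt w) : IsCirculation g.src g.tgt (z * w) :=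
  IsCirculation.comp_some (H.mul _ _ (isCirculation_elim hz) (isCirculation_elim hw)) (by simp)

/-- Circulations vanish on the root path. -/
lemma IsRootPath.isCirculation_eq_zero (H : HasCactusCirculations g.closureSrc g.closureTgt)
    {d : ℕ} {v : Fin (d + 1) → g.V} {f : Fin d → g.E}
    (hp : IsRootPath v f) {z : g.E → ℚ} (hz : IsCirculation g.src g.tgt z) (j : Fin d) :
    z (f j) = 0 := by
  have hpath : IsCirculation g.closureSrc g.closureTgt
      fun o => o.elim 1 ((Set.range f).indicator 1) := by
    rw [hp.isCirculation_closure_iff]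
    convert isCirculation_zero (src := g.src) (tgt := g.tgt) using 1
    funext e
    simp
  have hc := IsCirculation.comp_some (H.mul _ _ (isCirculation_elim hz) hpath) (by simp)
  let h : g.V → ℚ := fun w => if ∃ i ≤ j.castSucc, v i = w then 1 else 0
  have hval : ∀ k, h (v k) = if k ≤ j.castSucc then 1 else 0 := fun k => by
    simp only [h, hp.vertex_injective.eq_iff, exists_eq_right]
  have h0 := hc h
  rw [hp.sum_of_support] at h0
  · rw [Finset.sum_eq_single j (fun k _ hk => ?_) (by simp)] at h0
    · simpa [hval] using h0
    · have hiff : k.castSucc ≤ j.castSucc ↔ k.succ ≤ j.castSucc := by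
        have : k.1 ≠ j.1 := fun h => hk (Fin.ext h)
        simp only [Fin.le_def, Fin.val_castSucc, Fin.val_succ]
        omega
      simp [hval, hiff]
  · intro e he
    simp [Set.indicator_of_notMem he]

lemma IsCyclicSteps.sign_eq (H : HasCactusCirculations g.closureSrc g.closureTgt)
    {n : ℕ} [NeZero n] {s : Fin n → g.E × Bool} (hs : IsCyclicSteps s)
    (i j : Fin n) : (s i).2 = (s j).2 := by
  have hc := (isCirculation_mul H hs.isCirculation hs.isCirculation).add hs.isCirculation
  have h := hs.eq_of_support hc (fun e he => ?_) i j
  · simp only [Pi.add_apply, Pi.mul_apply, hs.stepChain_apply] at h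
    generalize (s i).2 = a at h ⊢
    generalize (s j).2 = b at h ⊢
    cases a <;> cases b <;> simp [stepSign] at h ⊢
    norm_num at h
  · rw [← hs.stepChain_ne_zero_iff]
    intro h0
    simp [h0] at he

lemma exists_cyclicSteps_of_mem (H : HasCactusCirculations g.closureSrc g.closureTgt)
    {e : g.E} {z : g.E → ℚ} (hz : IsCirculation g.src g.tgt z)
    (he : z e ≠ 0) : ∃ (n : ℕ) (_ : NeZero n) (s : Fin n → g.E × Bool),
      IsCyclicSteps s ∧ ∃ i, (s i).1 = e := by
  induction hm : (Finset.univ.filter fun a => z a ≠ 0).card using Nat.strong_induction_on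
    generalizing z with
  | _ m ih =>
  obtain ⟨n, hn, s, hs, hsup⟩ := exists_cyclicSteps hz he
  by_cases hmem : ∃ i, (s i).1 = e
  · exact ⟨n, hn, s, hs, hmem⟩
  have hval : ∀ a, (z - z * (stepChain s * stepChain s)) a =
      if ∃ i, (s i).1 = a then 0 else z a := by
    intro a
    rw [Pi.sub_apply, Pi.mul_apply, Pi.mul_apply, hs.stepChain_mul_self]
    split_ifs <;> simp
  refine ih _ ?_ (hz.sub (isCirculation_mul H hz (isCirculation_mul H hs.isCirculation
    hs.isCirculation))) (by rwa [hval, if_neg hmem]) rfl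
  rw [← hm]
  refine Finset.card_lt_card (Finset.ssubset_iff_of_subset ?_ |>.2 ⟨(s 0).1, ?_, ?_⟩)
  · intro a ha
    simp only [Finset.mem_filter, Finset.mem_univ, true_and, hval] at ha ⊢
    exact fun h => ha (by simp [h])
  · simpa using hsup 0
  · have : ∃ i, (s i).1 = (s 0).1 := ⟨0, rfl⟩
    simp [hval, this]

lemma IsCycleEdgeSet.subset_of_mem (H : HasCactusCirculations g.closureSrc g.closureTgt)
    {S T : Finset g.E} (hS : g.IsCycleEdgeSet S)
    (hT : g.IsCycleEdgeSet T) {e : g.E} (heS : e ∈ S) (heT : e ∈ T) : S ⊆ T := by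
  obtain ⟨n, hn, s, hs, -, hmS⟩ := hS.exists_steps
  obtain ⟨m, hm, t, ht, -, hmT⟩ := hT.exists_steps
  obtain ⟨i, rfl⟩ := (hmS e).1 heS
  intro a ha
  obtain ⟨j, rfl⟩ := (hmS a).1 ha
  have hc := isCirculation_mul H hs.isCirculation ht.isCirculation
  have := hs.ne_zero_of_support hc
    (fun b hb => (hs.stepChain_ne_zero_iff b).1 (left_ne_zero_of_mul hb)) (i := i)
    (mul_ne_zero ((hs.stepChain_ne_zero_iff _).2 ⟨i, rfl⟩)
      ((ht.stepChain_ne_zero_iff _).2 ((hmT _).1 heT))) j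
  exact (hmT _).2 ((ht.stepChain_ne_zero_iff _).1 (right_ne_zero_of_mul this))

lemma exists_chain_of_reachOn {P : Set g.E} {a b : g.V} (hab : reachOn g.src g.tgt P a b) :
    ∃ y : g.E → ℚ, (∀ e ∈ P, y e = 0) ∧
      ∀ h : g.V → ℚ, ∑ e, y e * (h (g.tgt e) - h (g.src e)) = h b - h a := by
  induction hab with
  | refl => exact ⟨0, by simp, by simp⟩
  | tail _ hbc ih =>
    obtain ⟨y, h1, h2⟩ := ih
    obtain ⟨e, he, ⟨rfl, rfl⟩ | ⟨rfl, rfl⟩⟩ := hbc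
    · refine ⟨y + Pi.single e 1, fun e' he' => ?_, fun h => ?_⟩
      · have : e' ≠ e := fun h => he (h ▸ he')
        simp [h1 e' he', this]
      · simp [add_mul, Finset.sum_add_distrib, h2, Pi.single_apply]
    · refine ⟨y - Pi.single e 1, fun e' he' => ?_, fun h => ?_⟩
      · have : e' ≠ e := fun h => he (h ▸ he')
        simp [h1 e' he', this]
      · simp [sub_mul, Finset.sum_sub_distrib, h2, Pi.single_apply]

lemma IsRootPath.exists_chain {d : ℕ} {v : Fin (d + 1) → g.V} {f : Fin d → g.E}
    (hp : IsRootPath v f) (j : Fin (d + 1)) :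
    ∃ y : g.E → ℚ, (∀ e ∉ Set.range f, y e = 0) ∧
      ∀ h : g.V → ℚ, ∑ e, y e * (h (g.tgt e) - h (g.src e)) = h (v 0) - h (v j) := by
  induction j using Fin.induction with
  | zero => exact ⟨0, by simp, by simp⟩
  | succ j ih =>
    obtain ⟨y, h1, h2⟩ := ih
    refine ⟨y + Pi.single (f j) 1, fun e he => ?_, fun h => ?_⟩
    · have : e ≠ f j := fun h => he ⟨j, h.symm⟩
      simp [h1 e he, this]
    · simp [add_mul, Finset.sum_add_distrib, h2, Pi.single_apply, hp.edges]

lemma _root_.HasCactusCirculations.isPathCactusType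
    (H : HasCactusCirculations g.closureSrc g.closureTgt) : g.IsPathCactusType := by
  obtain ⟨d, v, f, hp⟩ := exists_rootPath H
  have hsymm : ∀ {P : Set g.E} {a b}, reachOn g.src g.tgt P a b → reachOn g.src g.tgt P b a :=
    fun {P a b} h => (connSetoid g.src g.tgt P).symm' h
  have hroots : reachOn g.src g.tgt ∅ g.vin g.vout := by
    rw [hp.vin_eq, hp.vout_eq]
    have : ∀ j, reachOn g.src g.tgt ∅ (v j) (v 0) := fun j => by
      induction j using Fin.induction with
      | zero => exact Relation.ReflTransGen.refl
      | succ j ih => exact Relation.ReflTransGen.head ⟨f j, by simp, Or.inl (hp.edges j)⟩ ih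
    exact this _
  have hcircP : ∀ e, e ∉ Set.range f → ∃ z, IsCirculation g.src g.tgt z ∧ z e ≠ 0 :=
    fun e he => ⟨_, hp.isCirculation_closure_iff.1 H.one, by
      simp [Set.indicator_of_notMem he]⟩
  refine ⟨fun a b => ?_, d, v, f, hp.vertex_injective, hp.edge_injective, hp.edges, hp.vin_eq,
    hp.vout_eq, fun c hc => ?_, fun e he => ?_, fun w => ?_⟩
  · refine H.conn (reachOn g.src g.tgt ∅ a) (fun o => ?_) a b Relation.ReflTransGen.refl
    cases o with
    | none => exact ⟨fun h => h.trans (hsymm hroots), fun h => h.trans hroots⟩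
    | some e =>
      exact ⟨fun h => h.tail ⟨e, by simp, Or.inl ⟨rfl, rfl⟩⟩,
        fun h => h.tail ⟨e, by simp, Or.inr ⟨rfl, rfl⟩⟩⟩
  · obtain ⟨n, hn, s, rfl, hs⟩ := hc.exists_steps
    refine ⟨?_, fun t ht => ?_⟩
    · cases h0 : (s 0).2
      · refine Or.inr fun t ht => ?_
        obtain ⟨i, rfl⟩ := (List.mem_ofFn' _ _).1 ht
        rw [hs.sign_eq H i 0, h0]
      · refine Or.inl fun t ht => ?_
        obtain ⟨i, rfl⟩ := (List.mem_ofFn' _ _).1 ht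
        rw [hs.sign_eq H i 0, h0]
    · obtain ⟨i, rfl⟩ := (List.mem_ofFn' _ _).1 ht
      rintro ⟨j, hj⟩
      exact (hs.stepChain_ne_zero_iff (s i).1).2 ⟨i, rfl⟩
        (hj ▸ hp.isCirculation_eq_zero H hs.isCirculation j)
  · obtain ⟨z, hz, hze⟩ := hcircP e he
    obtain ⟨n, hn, s, hs, i, hi⟩ := exists_cyclicSteps_of_mem H hz hze
    have heS : e ∈ Finset.univ.image fun i => (s i).1 := by simpa using ⟨i, hi⟩
    exact ⟨_, ⟨hs.isCycleEdgeSet, heS⟩, fun T hT =>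
      (hT.1.subset_of_mem H hs.isCycleEdgeSet hT.2 heS).antisymm
        (hs.isCycleEdgeSet.subset_of_mem H hT.1 heS hT.2)⟩
  · have hex : ∃ j, reachOn g.src g.tgt (Set.range f) w (v j) := by
      refine H.conn (fun w => ∃ j, reachOn g.src g.tgt (Set.range f) w (v j)) (fun o => ?_)
        (v 0) w ⟨0, Relation.ReflTransGen.refl⟩
      have hpt : ∀ j, ∃ k, reachOn g.src g.tgt (Set.range f) (v j) (v k) :=
        fun j => ⟨j, Relation.ReflTransGen.refl⟩
      cases o with
      | none =>
        exact iff_of_true (hp.vout_eq ▸ hpt 0 :) (hp.vin_eq ▸ hpt (Fin.last d) :)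
      | some e =>
        by_cases he : e ∈ Set.range f
        · obtain ⟨j, rfl⟩ := he
          exact iff_of_true ((hp.edges j).1 ▸ hpt _ :) ((hp.edges j).2 ▸ hpt _ :)
        · exact ⟨fun ⟨j, h⟩ => ⟨j, h.head ⟨e, he, Or.inr ⟨rfl, rfl⟩⟩⟩,
            fun ⟨j, h⟩ => ⟨j, h.head ⟨e, he, Or.inl ⟨rfl, rfl⟩⟩⟩⟩
    obtain ⟨i, hi⟩ := hex
    refine ⟨i, hi, fun j hj => ?_⟩
    obtain ⟨y, hy1, hy2⟩ := exists_chain_of_reachOn ((hsymm hi).trans hj)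
    obtain ⟨yi, hi1, hi2⟩ := hp.exists_chain i
    obtain ⟨yj, hj1, hj2⟩ := hp.exists_chain j
    have hc : IsCirculation g.src g.tgt (y + (yj - yi)) := fun h => by
      simp only [Pi.add_apply, Pi.sub_apply, add_mul, sub_mul, Finset.sum_add_distrib,
        Finset.sum_sub_distrib, hy2, hi2, hj2]
      ring
    have hdiff : yj = yi := by
      funext e
      by_cases he : e ∈ Set.range f
      · have h1 := hy1 e he
        obtain ⟨k, rfl⟩ := he
        have h2 := hp.isCirculation_eq_zero H hc k
        rw [Pi.add_apply, h1, zero_add, Pi.sub_apply, sub_eq_zero] at h2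
        exact h2
      · rw [hi1 e he, hj1 e he]
    let h : g.V → ℚ := fun w => if w = v i then 1 else 0
    have hh := hj2 h
    rw [hdiff, hi2 h] at hh
    by_contra hne
    have hne' : v j ≠ v i := fun h => hne (hp.vertex_injective h)
    simp [h, hne'] at hh

/-- Path-cactus monomials with equal roots are exactly the cactus-type monomials. -/
lemma isCactusType_iff : g.IsCactusType ↔ g.IsPathCactusType ∧ g.vin = g.vout := by
  constructor
  · rintro ⟨h, hconn, hdir, huniq⟩
    refine ⟨⟨hconn, 0, fun _ => g.vin, Fin.elim0, fun a b _ => Subsingleton.elim (α := Fin 1) a b,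
      Function.injective_of_subsingleton _, fun j => j.elim0, rfl, h.symm,
      fun c hc => ⟨hdir c hc, by simp⟩, fun e _ => huniq e, fun w => ⟨0, ?_, by simp⟩⟩, h⟩
    have : Set.range (Fin.elim0 : Fin 0 → g.E) = ∅ := by simp
    rw [this]
    exact hconn w g.vin
  · rintro ⟨⟨hconn, d, v, f, hv, -, -, hin, hout, hdir, huniq, -⟩, h⟩
    have hd : Fin.last d = 0 := hv (by rw [← hin, ← hout, h])
    have hd0 : d = 0 := by simpa using congrArg Fin.val hd
    subst hd0
    exact ⟨h, hconn, fun c hc => (hdir c hc).1, fun e => huniq e (by simp)⟩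

end Recover

end GraphMonomial

/-! ### Gluing vertices -/

section Glue

variable {V : Type} (a b : V)

/-- The relation whose quotient identifies `a` and `b`. -/
def glueRel : V → V → Prop := fun x y => x = a ∧ y = b

variable {a b}

lemma exists_glue_lift {T : Type} {h : V → T} (hab : h a = h b) :
    ∃ h' : Quot (glueRel a b) → T, ∀ x, h' (Quot.mk _ x) = h x :=
  ⟨Quot.lift h fun x y hxy => by rw [hxy.1, hxy.2, hab], fun _ => rfl⟩

lemma glue_eq : Quot.mk (glueRel a b) a = Quot.mk (glueRel a b) b := Quot.sound ⟨rfl, rfl⟩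

lemma sum_glue {N : ℕ} [Fintype (V → Fin N)] [Fintype (Quot (glueRel a b) → Fin N)]
    (G : (V → Fin N) → ℂ) :
    ∑ φ : Quot (glueRel a b) → Fin N, G (fun x => φ (Quot.mk _ x)) =
      ∑ φ : V → Fin N, if φ a = φ b then G φ else 0 := by
  refine Finset.sum_of_injOn (fun φ x => φ (Quot.mk _ x)) ?_
    (fun i _ => Finset.mem_coe.mpr (Finset.mem_univ _)) (fun φ _ hφ => if_neg fun hab => ?_)
    (fun φ _ => (if_pos (congrArg φ glue_eq)).symm)
  · intro φ _ ψ _ h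
    funext x
    induction x using Quot.ind
    exact congrFun h _
  · obtain ⟨φ', hφ'⟩ := exists_glue_lift hab
    exact hφ ⟨φ', by simp, funext hφ'⟩

end Glue

namespace GraphMonomial

section Constructions

variable {L : ℕ} {K : Type}

/-- The monomial with a single vertex and no edge. -/
def unit (L : ℕ) (K : Type) : GraphMonomial L K where
  V := Unit
  E := Empty
  fintV := inferInstance
  fintE := inferInstance
  src := Empty.elim
  tgt := Empty.elim
  vin := ()
  vout := ()
  labL := Empty.elim
  labK := Empty.elim

lemma unit_isPathCactusType : (unit L K).IsPathCactusType := by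
  have hall : ∀ z, IsCirculation (unit L K).closureSrc (unit L K).closureTgt z := fun z =>
    isCirculation_closure_iff.2 fun h => by
      have : IsEmpty (unit L K).E := inferInstanceAs (IsEmpty Empty)
      rw [Finset.univ_eq_empty, Finset.sum_empty, show (unit L K).vin = (unit L K).vout from rfl]
      ring
  exact HasCactusCirculations.isPathCactusType ⟨fun p _ a b ha => ha, hall _, fun _ _ _ _ => hall _⟩

lemma unit_eval {N : ℕ} (A : Fin L → K → Matrix (Fin N) (Fin N) ℂ) : (unit L K).eval A = 1 := by
  ext i j
  have : IsEmpty (unit L K).E := inferInstanceAs (IsEmpty Empty)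
  by_cases hij : i = j
  · subst hij
    rw [Matrix.one_apply_eq]
    refine (Finset.sum_eq_single (fun _ => i) (fun φ _ hφ => if_neg fun h => hφ ?_) ?_).trans ?_
    · exact funext fun _ => h.1
    · exact fun h => absurd (Finset.mem_univ _) h
    · rw [if_pos ⟨rfl, rfl⟩, Finset.univ_eq_empty, Finset.prod_empty]
  · rw [Matrix.one_apply_ne hij]
    exact Finset.sum_eq_zero fun φ _ => if_neg fun h => hij (h.2.symm.trans h.1)

/-- The monomial consisting of a single edge from the input to the output. -/
def edge (ℓ : Fin L) (k : K) : GraphMonomial L K where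
  V := Bool
  E := Unit
  fintV := inferInstance
  fintE := inferInstance
  src := fun _ => false
  tgt := fun _ => true
  vin := false
  vout := true
  labL := fun _ => ℓ
  labK := fun _ => k

lemma edge_isPathCactusType (ℓ : Fin L) (k : K) : (edge ℓ k).IsPathCactusType := by
  have key : ∀ z, IsCirculation (edge ℓ k).closureSrc (edge ℓ k).closureTgt z ↔
      z none = z (some ()) := fun z => by
    rw [isCirculation_closure_iff]
    change (∀ h : Bool → ℚ, z none * (h false - h true) +
      ∑ e : Unit, z (some e) * (h true - h false) = 0) ↔ _
    simp only [Finset.univ_unique, Finset.sum_singleton]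
    constructor
    · intro h
      have := h fun b => if b then 0 else 1
      simp only [if_true, Bool.false_eq_true, if_false] at this
      change z none * (1 - 0) + z (some ()) * (0 - 1) = 0 at this
      linarith
    · intro hz h
      rw [hz]
      change z (some ()) * _ + z (some ()) * _ = 0
      ring
  refine HasCactusCirculations.isPathCactusType ⟨fun p hp a b ha => ?_, (key _).2 rfl,
    fun z w hz hw => ?_⟩
  · have hp' : p false ↔ p true := hp (some ())
    rcases a with _ | _ <;> rcases b with _ | _
    · exact ha
    · exact hp'.1 ha
    · exact hp'.2 ha
    · exact ha
  · rw [key] at hz hw ⊢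
    rw [Pi.mul_apply, Pi.mul_apply, hz, hw]

lemma edge_eval {N : ℕ} (A : Fin L → K → Matrix (Fin N) (Fin N) ℂ) (ℓ : Fin L) (k : K) :
    (edge ℓ k).eval A = A ℓ k := by
  ext i j
  refine (Finset.sum_eq_single (fun b : Bool => if b then i else j)
    (fun φ _ hφ => if_neg fun h => hφ ?_) ?_).trans ?_
  · funext b
    cases b
    · exact h.1
    · exact h.2
  · exact fun h => absurd (@Finset.mem_univ _ (_) _) h
  · exact (if_pos ⟨rfl, rfl⟩).trans (Fintype.prod_unique (ι := Unit) fun _ => A ℓ k i j)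

variable (g g₁ g₂ : GraphMonomial L K)

/-- Identification of the input and the output. -/
def close : GraphMonomial L K where
  V := Quot (glueRel g.vin g.vout)
  E := g.E
  fintV := Fintype.ofFinite _
  fintE := g.fintE
  src := fun e => Quot.mk _ (g.src e)
  tgt := fun e => Quot.mk _ (g.tgt e)
  vin := Quot.mk _ g.vin
  vout := Quot.mk _ g.vout
  labL := g.labL
  labK := g.labK

lemma close_vin : g.close.vin = g.close.vout := glue_eq

lemma close_eval {N : ℕ} (A : Fin L → K → Matrix (Fin N) (Fin N) ℂ) :
    g.close.eval A = dproj (g.eval A) := by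
  ext i j
  have h := @sum_glue g.V g.vin g.vout N _
    (inferInstanceAs (Fintype (g.close.V → Fin N))) fun φ =>
    if φ g.vin = j ∧ φ g.vout = i then
      ∏ e : g.E, A (g.labL e) (g.labK e) (φ (g.tgt e)) (φ (g.src e)) else 0
  refine h.trans ?_
  simp only [dproj, eval, Matrix.of_apply]
  split_ifs with hij
  · refine Finset.sum_congr rfl fun φ _ => ?_
    by_cases hφ : φ g.vin = j ∧ φ g.vout = i
    · rw [if_pos (by rw [hφ.1, hφ.2, hij])]
    · simp [hφ]
  · refine Finset.sum_eq_zero fun φ _ => ?_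
    split_ifs with h1 h2
    · exact absurd (h2.2.symm.trans (h1.symm.trans h2.1)) hij
    · rfl
    · rfl

variable {g} in
lemma exists_root_coefficient {z : g.E → ℚ} (hz : ∀ h : g.V → ℚ, h g.vin = h g.vout →
    ∑ e, z e * (h (g.tgt e) - h (g.src e)) = 0) :
    ∃ c : ℚ, ∀ h : g.V → ℚ,
      c * (h g.vin - h g.vout) + ∑ e, z e * (h (g.tgt e) - h (g.src e)) = 0 := by
  by_cases hroot : g.vin = g.vout
  · exact ⟨0, fun h => by rw [zero_mul, zero_add, hz h (by rw [hroot])]⟩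
  let h₀ : g.V → ℚ := fun w => if w = g.vin then 1 else 0
  have hin : h₀ g.vin = 1 := if_pos rfl
  have hout : h₀ g.vout = 0 := if_neg (Ne.symm hroot)
  refine ⟨-∑ e, z e * (h₀ (g.tgt e) - h₀ (g.src e)), fun h => ?_⟩
  have h1 := hz (fun w => h w - (h g.vin - h g.vout) * h₀ w) (by rw [hin, hout]; ring)
  have h2 : ∀ e, z e * (h (g.tgt e) - (h g.vin - h g.vout) * h₀ (g.tgt e) -
      (h (g.src e) - (h g.vin - h g.vout) * h₀ (g.src e))) =
      z e * (h (g.tgt e) - h (g.src e)) -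
        (h g.vin - h g.vout) * (z e * (h₀ (g.tgt e) - h₀ (g.src e))) :=
    fun e => by ring
  simp only [h2, Finset.sum_sub_distrib, ← Finset.mul_sum] at h1
  linarith

lemma isCirculation_close_iff {z : Option g.close.E → ℚ} :
    IsCirculation g.close.closureSrc g.close.closureTgt z ↔
      ∃ c : ℚ, IsCirculation g.closureSrc g.closureTgt fun o : Option g.E =>
        o.elim c fun e => z (some e) := by
  have hclose : IsCirculation g.close.closureSrc g.close.closureTgt z ↔
      ∀ h : g.close.V → ℚ,
        ∑ e, z (some e) * (h (g.close.tgt e) - h (g.close.src e)) = 0 := by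
    rw [isCirculation_closure_iff, close_vin]
    simp only [sub_self, mul_zero, zero_add]
  rw [hclose]
  simp only [isCirculation_closure_iff (g := g), Option.elim_none, Option.elim_some]
  constructor
  · intro hz
    refine exists_root_coefficient (g := g) (z := fun e => z (some e)) fun h hh => ?_
    obtain ⟨h', hh'⟩ := exists_glue_lift hh
    simp only [← hh']
    exact hz h'
  · rintro ⟨c, hc⟩ h
    have := hc fun w => h (Quot.mk _ w)
    rw [glue_eq, sub_self, mul_zero, zero_add] at this
    exact this

variable {g g₁ g₂}

lemma IsPathCactusType.close (hg : g.IsPathCactusType) : g.close.IsPathCactusType := by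
  have H := hg.hasCactusCirculations
  refine HasCactusCirculations.isPathCactusType ⟨fun p hp a b ha => ?_, ?_, fun z w hz hw => ?_⟩
  · induction a using Quot.ind with | mk a => ?_
    induction b using Quot.ind with | mk b => ?_
    exact hg.1.of_invariant (p := fun w => p (Quot.mk _ w)) (fun e => hp (some e)) ha
  · refine g.isCirculation_close_iff.2 ⟨1, ?_⟩
    convert H.one using 1
    funext o
    cases o <;> rfl
  · obtain ⟨c, hc⟩ := g.isCirculation_close_iff.1 hz
    obtain ⟨c', hc'⟩ := g.isCirculation_close_iff.1 hw
    refine g.isCirculation_close_iff.2 ⟨c * c', ?_⟩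
    convert H.mul _ _ hc hc' using 1
    funext o
    cases o <;> rfl

lemma IsPathCactusType.isCactusType_close (hg : g.IsPathCactusType) : g.close.IsCactusType :=
  isCactusType_iff.2 ⟨hg.close, g.close_vin⟩

variable (g₁ g₂)

/-- Concatenation: the output of `g₂` is identified with the input of `g₁`. -/
def concat : GraphMonomial L K where
  V := Quot (glueRel (Sum.inl g₁.vin : g₁.V ⊕ g₂.V) (Sum.inr g₂.vout))
  E := g₁.E ⊕ g₂.E
  fintV := Fintype.ofFinite _
  fintE := inferInstance
  src := fun e => Quot.mk _ (Sum.map g₁.src g₂.src e)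
  tgt := fun e => Quot.mk _ (Sum.map g₁.tgt g₂.tgt e)
  vin := Quot.mk _ (Sum.inr g₂.vin)
  vout := Quot.mk _ (Sum.inl g₁.vout)
  labL := Sum.elim g₁.labL g₂.labL
  labK := Sum.elim g₁.labK g₂.labK

lemma concat_eval {N : ℕ} (A : Fin L → K → Matrix (Fin N) (Fin N) ℂ) :
    (concat g₁ g₂).eval A = g₁.eval A * g₂.eval A := by
  ext i j
  let P₁ : (g₁.V → Fin N) → ℂ := fun φ =>
    ∏ e : g₁.E, A (g₁.labL e) (g₁.labK e) (φ (g₁.tgt e)) (φ (g₁.src e))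
  let P₂ : (g₂.V → Fin N) → ℂ := fun φ =>
    ∏ e : g₂.E, A (g₂.labL e) (g₂.labK e) (φ (g₂.tgt e)) (φ (g₂.src e))
  have h := @sum_glue (g₁.V ⊕ g₂.V) (Sum.inl g₁.vin) (Sum.inr g₂.vout) N _
    (inferInstanceAs (Fintype ((concat g₁ g₂).V → Fin N))) fun φ =>
      if φ (Sum.inr g₂.vin) = j ∧ φ (Sum.inl g₁.vout) = i then
        ∏ e : g₁.E ⊕ g₂.E, A (Sum.elim g₁.labL g₂.labL e) (Sum.elim g₁.labK g₂.labK e)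
          (φ (Sum.map g₁.tgt g₂.tgt e)) (φ (Sum.map g₁.src g₂.src e)) else 0
  have hprod : ∀ φ : g₁.V ⊕ g₂.V → Fin N, ∏ e : g₁.E ⊕ g₂.E,
      A (Sum.elim g₁.labL g₂.labL e) (Sum.elim g₁.labK g₂.labK e) (φ (Sum.map g₁.tgt g₂.tgt e))
        (φ (Sum.map g₁.src g₂.src e)) =
      P₁ (fun w => φ (Sum.inl w)) * P₂ (fun w => φ (Sum.inr w)) :=
    fun φ => Fintype.prod_sum_type _
  refine Eq.trans h ?_
  simp only [hprod]
  refine (Fintype.sum_equiv (Equiv.sumArrowEquivProdArrow g₁.V g₂.V (Fin N)) _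
    (fun φ => if φ.1 g₁.vin = φ.2 g₂.vout then
      if φ.2 g₂.vin = j ∧ φ.1 g₁.vout = i then P₁ φ.1 * P₂ φ.2 else 0 else 0) fun φ => rfl).trans ?_
  rw [Fintype.sum_prod_type]
  simp only [Matrix.mul_apply, eval, Matrix.of_apply, Finset.sum_mul_sum]
  refine (Finset.sum_comm.trans (Finset.sum_congr rfl fun φ₁ _ =>
    Finset.sum_comm.trans (Finset.sum_congr rfl fun φ₂ _ => ?_))).symm
  rw [Finset.sum_eq_single (φ₁ g₁.vin) (fun k _ hk => by simp [hk.symm]) (by simp)]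
  by_cases h1 : φ₁ g₁.vin = φ₂ g₂.vout <;> by_cases h2 : φ₂ g₂.vin = j <;>
    by_cases h3 : φ₁ g₁.vout = i <;> simp [h1, h2, h3, P₁, P₂, eq_comm]

lemma isCirculation_concat_iff (z : Option (g₁.E ⊕ g₂.E) → ℚ) :
    IsCirculation (V := Quot (glueRel (Sum.inl g₁.vin : g₁.V ⊕ g₂.V) (Sum.inr g₂.vout)))
      (fun o => o.elim (Quot.mk _ (Sum.inl g₁.vout)) fun e => Quot.mk _ (Sum.map g₁.src g₂.src e))
      (fun o => o.elim (Quot.mk _ (Sum.inr g₂.vin)) fun e => Quot.mk _ (Sum.map g₁.tgt g₂.tgt e))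
      z ↔
      IsCirculation g₁.closureSrc g₁.closureTgt (fun o => z (o.map Sum.inl)) ∧
      IsCirculation g₂.closureSrc g₂.closureTgt (fun o => z (o.map Sum.inr)) := by
  rw [isCirculation_closure_iff, isCirculation_closure_iff]
  simp only [IsCirculation, Fintype.sum_option, Fintype.sum_sum_type, Option.elim_none,
    Option.elim_some, Sum.map_inl, Sum.map_inr, Option.map_none, Option.map_some]
  constructor
  · refine fun hz => ⟨fun h => ?_, fun h => ?_⟩
    · obtain ⟨h', hh'⟩ := exists_glue_lift (a := (Sum.inl g₁.vin : g₁.V ⊕ g₂.V))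
        (b := Sum.inr g₂.vout) (h := Sum.elim h fun _ => h g₁.vin) rfl
      simpa [hh'] using hz h'
    · obtain ⟨h', hh'⟩ := exists_glue_lift (a := (Sum.inl g₁.vin : g₁.V ⊕ g₂.V))
        (b := Sum.inr g₂.vout) (h := Sum.elim (fun _ => h g₂.vout) h) rfl
      simpa [hh'] using hz h'
  · rintro ⟨h1, h2⟩ h
    have e1 := h1 fun w => h (Quot.mk _ (Sum.inl w))
    have e2 := h2 fun w => h (Quot.mk _ (Sum.inr w))
    have e3 := congrArg h (glue_eq (a := (Sum.inl g₁.vin : g₁.V ⊕ g₂.V)) (b := Sum.inr g₂.vout))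
    linear_combination e1 + e2 - z none * e3

variable {g₁ g₂}

lemma IsPathCactusType.concat (hg₁ : g₁.IsPathCactusType) (hg₂ : g₂.IsPathCactusType) :
    (concat g₁ g₂).IsPathCactusType := by
  have H₁ := hg₁.hasCactusCirculations
  have H₂ := hg₂.hasCactusCirculations
  refine HasCactusCirculations.isPathCactusType ⟨fun p hp a b ha => ?_,
    (isCirculation_concat_iff g₁ g₂ 1).2 ⟨H₁.one, H₂.one⟩, fun z w hz hw => ?_⟩
  · let q : g₁.V ⊕ g₂.V → Prop := fun w => p (Quot.mk _ w)
    have hleft : ∀ x y, q (Sum.inl x) → q (Sum.inl y) := fun x y hx =>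
      hg₁.1.of_invariant (p := fun w => q (Sum.inl w)) (fun e => hp (some (Sum.inl e))) hx
    have hright : ∀ x y, q (Sum.inr x) → q (Sum.inr y) := fun x y hx =>
      hg₂.1.of_invariant (p := fun w => q (Sum.inr w)) (fun e => hp (some (Sum.inr e))) hx
    have hmid : q (Sum.inl g₁.vin) ↔ q (Sum.inr g₂.vout) := iff_of_eq (congrArg p glue_eq)
    induction a using Quot.ind with | mk a => ?_
    induction b using Quot.ind with | mk b => ?_
    change q b
    replace ha : q a := ha
    rcases a with x | x <;> rcases b with y | y
    · exact hleft x y ha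
    · exact hright _ y (hmid.1 (hleft x _ ha))
    · exact hleft _ y (hmid.2 (hright x _ ha))
    · exact hright x y ha
  · obtain ⟨hz₁, hz₂⟩ := (isCirculation_concat_iff g₁ g₂ z).1 hz
    obtain ⟨hw₁, hw₂⟩ := (isCirculation_concat_iff g₁ g₂ w).1 hw
    exact (isCirculation_concat_iff g₁ g₂ _).2 ⟨H₁.mul _ _ hz₁ hw₁, H₂.mul _ _ hz₂ hw₂⟩

end Constructions

end GraphMonomial

/-! ### The generated algebra -/

section GeneratedAlgebra

variable {Ω : Type} {L N : ℕ} {K : Type}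

lemma GraphMonomial.eval_eq_graphSum (g : GraphMonomial L K)
    (A : Fin L → K → Matrix (Fin N) (Fin N) ℂ) (i j : Fin N) :
    g.eval A i j = graphSum g.closureSrc g.closureTgt (fun _ => 1)
      fun o => if o = none then Matrix.single j i 1
        else o.elim 0 fun e => A (g.labL e) (g.labK e) := by
  simp only [GraphMonomial.eval, Matrix.of_apply, graphSum, Fintype.prod_option,
    GraphMonomial.closureSrc, GraphMonomial.closureTgt, Option.elim_none, Option.elim_some,
    Pi.one_apply, Finset.prod_const_one, one_mul, if_true, reduceCtorEq, if_false,
    Matrix.single_apply, ite_mul, zero_mul]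
  refine Finset.sum_congr rfl fun φ _ => if_congr ?_ rfl rfl
  rw [eq_comm, @eq_comm _ i]

lemma GraphMonomial.IsPathCactusType.eval_mem {g : GraphMonomial L K} (hg : g.IsPathCactusType)
    {S : Subalgebra ℂ (Ω → Matrix (Fin N) (Fin N) ℂ)}
    (hS : ∀ x ∈ S, (fun ω => dproj (x ω)) ∈ S) {A : Fin L → K → Ω → Matrix (Fin N) (Fin N) ℂ}
    (hA : ∀ ℓ k, A ℓ k ∈ S) : (fun ω => g.eval fun ℓ k => A ℓ k ω) ∈ S := by
  obtain ⟨M, hM, hMeval⟩ := exists_graphSum_eq_trace hS _ g.V (Option g.E) g.closureSrc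
    g.closureTgt rfl hg.hasCactusCirculations none (fun _ _ => 1)
    (fun o ω => o.elim 0 fun e => A (g.labL e) (g.labK e) ω)
    (fun _ => by
      convert S.one_mem using 1
      exact funext fun _ => Matrix.diagonal_one)
    (fun o ho => by
      cases o with
      | none => exact absurd rfl ho
      | some e => exact hA _ _)
  convert hM using 1
  funext ω
  ext i j
  have h := hMeval ω (Matrix.single j i 1)
  rw [Matrix.trace_mul_single, MulOpposite.op_one, one_smul] at h
  rw [g.eval_eq_graphSum, ← h]
  congr!

/-- The diagonal projection, acting pointwise on random matrices. -/
def diagProj (Ω : Type) (N : ℕ) :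
    (Ω → Matrix (Fin N) (Fin N) ℂ) →ₗ[ℂ] (Ω → Matrix (Fin N) (Fin N) ℂ) where
  toFun x := fun ω => dproj (x ω)
  map_add' x y := by
    funext ω
    ext i j
    by_cases h : i = j <;> simp [dproj, h]
  map_smul' c x := by
    funext ω
    ext i j
    by_cases h : i = j <;> simp [dproj, h]

/-- The random matrices obtained by evaluating path-cactus monomials. -/
def pathCactusEvals (A : Fin L → K → Ω → Matrix (Fin N) (Fin N) ℂ) :
    Set (Ω → Matrix (Fin N) (Fin N) ℂ) :=
  {x | ∃ g : GraphMonomial L K, g.IsPathCactusType ∧ x = fun ω => g.eval fun ℓ k => A ℓ k ω}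

variable (A : Fin L → K → Ω → Matrix (Fin N) (Fin N) ℂ)

/-- The span of the path-cactus evaluations, as a subalgebra. -/
def pathCactusAlgebra : Subalgebra ℂ (Ω → Matrix (Fin N) (Fin N) ℂ) :=
  (Submodule.span ℂ (pathCactusEvals A)).toSubalgebra
    (Submodule.subset_span ⟨_, GraphMonomial.unit_isPathCactusType,
      funext fun _ => (GraphMonomial.unit_eval _).symm⟩)
    (fun x y hx hy => by
      have h := Submodule.mul_mem_mul hx hy
      rw [Submodule.span_mul_span] at h
      refine Submodule.span_mono ?_ h
      rintro _ ⟨_, ⟨g₁, hg₁, rfl⟩, _, ⟨g₂, hg₂, rfl⟩, rfl⟩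
      exact ⟨_, hg₁.concat hg₂, funext fun _ => (GraphMonomial.concat_eval _ _ _).symm⟩)

lemma diagProj_image_pathCactusEvals :
    diagProj Ω N '' pathCactusEvals A =
      {x | ∃ g : GraphMonomial L K, g.IsCactusType ∧ x = fun ω => g.eval fun ℓ k => A ℓ k ω} := by
  ext x
  constructor
  · rintro ⟨_, ⟨g, hg, rfl⟩, rfl⟩
    exact ⟨_, hg.isCactusType_close, funext fun _ => (g.close_eval _).symm⟩
  · rintro ⟨g, hg, rfl⟩
    obtain ⟨hg, hroot⟩ := GraphMonomial.isCactusType_iff.1 hg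
    refine ⟨_, ⟨g, hg, rfl⟩, funext fun ω => ?_⟩
    ext i j
    by_cases hij : i = j
    · simp [diagProj, dproj, hij]
    · simp only [diagProj, LinearMap.coe_mk, AddHom.coe_mk, dproj, Matrix.of_apply, if_neg hij]
      refine (Finset.sum_eq_zero fun φ _ => if_neg fun h => hij ?_).symm
      rw [← h.1, ← h.2, hroot]

lemma pathCactusAlgebra_eq_sInf :
    pathCactusAlgebra A = sInf {S : Subalgebra ℂ (Ω → Matrix (Fin N) (Fin N) ℂ) |
      (∀ (ℓ : Fin L) (k : K), (fun ω => A ℓ k ω) ∈ S) ∧ ∀ x ∈ S, (fun ω => dproj (x ω)) ∈ S} := by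
  refine le_antisymm (le_sInf fun S hS => ?_) (sInf_le ⟨fun ℓ k => ?_, fun x hx => ?_⟩)
  · have : Submodule.span ℂ (pathCactusEvals A) ≤ Subalgebra.toSubmodule S := by
      rw [Submodule.span_le]
      rintro _ ⟨g, hg, rfl⟩
      exact hg.eval_mem hS.2 hS.1
    exact this
  · exact Submodule.subset_span ⟨_, GraphMonomial.edge_isPathCactusType ℓ k,
      funext fun _ => (GraphMonomial.edge_eval (fun ℓ k => A ℓ k _) ℓ k).symm⟩
  · have h := Submodule.mem_map_of_mem (f := diagProj Ω N)
      (show x ∈ Submodule.span ℂ (pathCactusEvals A) from hx)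
    rw [Submodule.map_span] at h
    refine Submodule.span_mono ?_ h
    rintro _ ⟨_, ⟨g, hg, rfl⟩, rfl⟩
    exact ⟨_, hg.close, funext fun _ => (g.close_eval _).symm⟩

end GeneratedAlgebra

/-- Lemma 4.3.
Let `𝒜_N` be the smallest unital subalgebra of the algebra of `N × N` random
matrices containing the matrices `A_{N,ℓ}^{(k)}` and stable under the diagonal
projection `Δ`.  Then `ℱ_N = 𝒜_N` and consequently `𝒞_N = Δ(𝒜_N)`. -/
theorem span_path_cacti_eq_generated_algebra
    {Ω : Type} [MeasurableSpace Ω] (μ : Measure Ω) [IsProbabilityMeasure μ]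
    {K : Type} [Nonempty K] [Finite K] {L : ℕ} (hL : 1 ≤ L) (N : ℕ)
    (A : Fin L → K → Ω → Matrix (Fin N) (Fin N) ℂ)
    (hmeas : ∀ ℓ k, EntriesMeasurable (A ℓ k))
    (hbdd : ∀ ℓ k, EntriesBounded μ (A ℓ k)) :
    ((Submodule.span ℂ {x : Ω → Matrix (Fin N) (Fin N) ℂ |
          ∃ g : GraphMonomial L K, g.IsPathCactusType ∧
            x = fun ω => g.eval fun ℓ k => A ℓ k ω} :
        Set (Ω → Matrix (Fin N) (Fin N) ℂ)) =
      ((sInf {S : Subalgebra ℂ (Ω → Matrix (Fin N) (Fin N) ℂ) |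
          (∀ (ℓ : Fin L) (k : K), (fun ω => A ℓ k ω) ∈ S) ∧
          ∀ x ∈ S, (fun ω => dproj (x ω)) ∈ S} :
        Subalgebra ℂ (Ω → Matrix (Fin N) (Fin N) ℂ)) :
        Set (Ω → Matrix (Fin N) (Fin N) ℂ))) ∧
    ((Submodule.span ℂ {x : Ω → Matrix (Fin N) (Fin N) ℂ |
          ∃ g : GraphMonomial L K, g.IsCactusType ∧
            x = fun ω => g.eval fun ℓ k => A ℓ k ω} :
        Set (Ω → Matrix (Fin N) (Fin N) ℂ)) =
      (fun x : Ω → Matrix (Fin N) (Fin N) ℂ => fun ω => dproj (x ω)) ''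
        ((sInf {S : Subalgebra ℂ (Ω → Matrix (Fin N) (Fin N) ℂ) |
            (∀ (ℓ : Fin L) (k : K), (fun ω => A ℓ k ω) ∈ S) ∧
            ∀ x ∈ S, (fun ω => dproj (x ω)) ∈ S} :
          Subalgebra ℂ (Ω → Matrix (Fin N) (Fin N) ℂ)) :
          Set (Ω → Matrix (Fin N) (Fin N) ℂ))) := by
  have hspan := congrArg (fun S : Subalgebra ℂ (Ω → Matrix (Fin N) (Fin N) ℂ) =>
    (S : Set (Ω → Matrix (Fin N) (Fin N) ℂ))) (pathCactusAlgebra_eq_sInf A)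
  refine ⟨hspan, ?_⟩
  have himage := congrArg (fun S : Submodule ℂ (Ω → Matrix (Fin N) (Fin N) ℂ) =>
    (S : Set (Ω → Matrix (Fin N) (Fin N) ℂ))) (Submodule.map_span (diagProj Ω N) (pathCactusEvals A))
  rw [← diagProj_image_pathCactusEvals]
  exact himage.symm.trans (congrArg (diagProj Ω N '' ·) hspan)
end
end

section
/- With the test graph T = (V,E) and the vertices v_0 = v_n, v_1, …, v_n as in the construction below, one has, for every N, E[(1/N) Tr((M_{N,1} − ΔM_{N,1})(M_{N,2} − ΔM_{N,2}) ⋯ (M_{N,n} − ΔM_{N,n}))] = Σ_π τ⁰_N[T^π], where the sum runs over all partitions π of V such that for every i ∈ {1,…,n} the vertices v_i and v_{i−1} lie in different blocks of π. -/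
open MeasureTheory ProbabilityTheory Filter Matrix Asymptotics
open scoped BigOperators ENNReal
open scoped Classical

noncomputable section

/-- The monomial `g₀(A) X_{k(1)} g₁(A) ⋯ X_{k(d)} g_d(A)` with graph-monomial
coefficients, evaluated at the family `A ℓi`. -/
def cactusMonomialEval {L : ℕ} {K : Type} {N : ℕ}
    (A : Fin L → K → Matrix (Fin N) (Fin N) ℂ) (ℓi : Fin L) (dd : ℕ)
    (kk : ℕ → K) (gg : ℕ → GraphMonomial L K) : Matrix (Fin N) (Fin N) ℂ :=
  (gg 0).eval A *
    (List.ofFn fun j : Fin dd =>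
      A ℓi (kk ((j : ℕ) + 1)) * (gg ((j : ℕ) + 1)).eval A).prod
/-! ### The test graph `T` built from the monomials `t_1, …, t_n` -/

section Construction

variable {L : ℕ} {K : Type}

/-- Cyclic successor in `Fin n`. -/
def nxt {n : ℕ} (i : Fin n) : Fin n := ⟨((i : ℕ) + 1) % n, Nat.mod_lt _ i.pos⟩

/-- Vertices of the disjoint union of the graph monomials `t_1, …, t_n`:
for each `i`, the path vertices of `t_i` are the roots of the attached cacti
`g_{0,i}, …, g_{d_i,i}`. -/
def BigV (n : ℕ) (d : Fin n → ℕ) (g : Fin n → ℕ → GraphMonomial L K) : Type :=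
  Σ i : Fin n, Σ j : Fin (d i + 1), (g i (j : ℕ)).V

instance (n : ℕ) (d : Fin n → ℕ) (g : Fin n → ℕ → GraphMonomial L K) :
    Fintype (BigV n d g) := by
  unfold BigV; infer_instance

/-- Edges: the edges of the cacti, plus the path edges (the edge `(i, j)` goes
from the path vertex `u_{i,j+1}` to `u_{i,j}` and carries the label
`(ℓ_i, k_i(j+1))`). -/
def BigE (n : ℕ) (d : Fin n → ℕ) (g : Fin n → ℕ → GraphMonomial L K) : Type :=
  (Σ i : Fin n, Σ j : Fin (d i + 1), (g i (j : ℕ)).E) ⊕ (Σ i : Fin n, Fin (d i))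

instance (n : ℕ) (d : Fin n → ℕ) (g : Fin n → ℕ → GraphMonomial L K) :
    Fintype (BigE n d g) := by
  unfold BigE; infer_instance

/-- The path vertex `u_{i,j}`, i.e. the root of the cactus `g_{j,i}`. -/
def pathVtx (n : ℕ) (d : Fin n → ℕ) (g : Fin n → ℕ → GraphMonomial L K)
    (i : Fin n) (j : Fin (d i + 1)) : BigV n d g :=
  ⟨i, j, (g i (j : ℕ)).vin⟩

/-- The input vertex of `t_i`. -/
def inVtx (n : ℕ) (d : Fin n → ℕ) (g : Fin n → ℕ → GraphMonomial L K)
    (i : Fin n) : BigV n d g :=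
  pathVtx n d g i (Fin.last (d i))

/-- The output vertex of `t_i`. -/
def outVtx (n : ℕ) (d : Fin n → ℕ) (g : Fin n → ℕ → GraphMonomial L K)
    (i : Fin n) : BigV n d g :=
  pathVtx n d g i 0

/-- The setoid identifying, for each `i` (cyclically), the input of `t_i` with
the output of `t_{i+1}`. -/
def glueSetoid (n : ℕ) (d : Fin n → ℕ) (g : Fin n → ℕ → GraphMonomial L K) :
    Setoid (BigV n d g) :=
  ⟨Relation.EqvGen fun x y =>
      ∃ i : Fin n, x = inVtx n d g i ∧ y = outVtx n d g (nxt i),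
   Relation.EqvGen.is_equivalence _⟩

/-- Source map of the glued test graph `T`. -/
def bigSrc (n : ℕ) (d : Fin n → ℕ) (g : Fin n → ℕ → GraphMonomial L K) :
    BigE n d g → Quotient (glueSetoid n d g) := fun e =>
  match e with
  | Sum.inl ⟨i, j, e'⟩ =>
      Quotient.mk (glueSetoid n d g) ⟨i, j, (g i (j : ℕ)).src e'⟩
  | Sum.inr ⟨i, j⟩ =>
      Quotient.mk (glueSetoid n d g) (pathVtx n d g i j.succ)

/-- Target map of the glued test graph `T`. -/
def bigTgt (n : ℕ) (d : Fin n → ℕ) (g : Fin n → ℕ → GraphMonomial L K) :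
    BigE n d g → Quotient (glueSetoid n d g) := fun e =>
  match e with
  | Sum.inl ⟨i, j, e'⟩ =>
      Quotient.mk (glueSetoid n d g) ⟨i, j, (g i (j : ℕ)).tgt e'⟩
  | Sum.inr ⟨i, j⟩ =>
      Quotient.mk (glueSetoid n d g) (pathVtx n d g i j.castSucc)

/-- The family index (color) carried by each edge of `T`. -/
def bigCol (n : ℕ) (ℓv : Fin n → Fin L) (d : Fin n → ℕ)
    (g : Fin n → ℕ → GraphMonomial L K) : BigE n d g → Fin L := fun e =>
  match e with
  | Sum.inl ⟨i, j, e'⟩ => (g i (j : ℕ)).labL e'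
  | Sum.inr ⟨i, _⟩ => ℓv i

/-- The vertex `v_i` of `T` (the class of the input of `t_i`). -/
def vCls (n : ℕ) (d : Fin n → ℕ) (g : Fin n → ℕ → GraphMonomial L K)
    (i : Fin n) : Quotient (glueSetoid n d g) :=
  Quotient.mk (glueSetoid n d g) (inVtx n d g i)

/-- The test graph `T`, with the matrix `A_{N,ℓ}^{(k)}` assigned to each edge
labelled `(ℓ, k)`. -/
def bigTG (n : ℕ) (ℓv : Fin n → Fin L) (d : Fin n → ℕ) (kv : Fin n → ℕ → K)
    (g : Fin n → ℕ → GraphMonomial L K) {Ω : Type} (N : ℕ)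
    (A : Fin L → K → Ω → Matrix (Fin N) (Fin N) ℂ) : TestGraph N Ω where
  V := Quotient (glueSetoid n d g)
  E := BigE n d g
  fintV := @Quotient.fintype _ inferInstance (glueSetoid n d g)
    fun _ _ => Classical.propDecidable _
  fintE := inferInstance
  src := bigSrc n d g
  tgt := bigTgt n d g
  lab := fun e =>
    match e with
    | Sum.inl ⟨i, j, e'⟩ => fun ω => A ((g i (j : ℕ)).labL e') ((g i (j : ℕ)).labK e') ω
    | Sum.inr ⟨i, j⟩ => fun ω => A (ℓv i) (kv i ((j : ℕ) + 1)) ω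

end Construction

/-! ### Entries and traces of products of matrices -/

lemma sub_dproj_apply {N : ℕ} (M : Matrix (Fin N) (Fin N) ℂ) (x y : Fin N) :
    (M - dproj M) x y = if x = y then 0 else M x y := by
  by_cases h : x = y <;> simp [dproj, h]

/-- The entries of a product of matrices as a sum over paths. -/
lemma list_ofFn_prod_apply {ι R : Type*} [Fintype ι] [DecidableEq ι] [CommSemiring R] :
    ∀ (m : ℕ) (B : Fin m → Matrix ι ι R) (a b : ι),
      (List.ofFn B).prod a b = ∑ x : Fin (m + 1) → ι,
        if x 0 = a ∧ x (Fin.last m) = b then ∏ j : Fin m, B j (x j.castSucc) (x j.succ) else 0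
  | 0, B, a, b => by
    rw [← (Equiv.funUnique (Fin 1) ι).symm.sum_comp]
    simp only [List.ofFn_zero, List.prod_nil, Matrix.one_apply, Fin.last_zero,
      Finset.univ_eq_empty, Finset.prod_empty]
    rw [Finset.sum_eq_single a]
    · simp
    · intro c _ hc
      simp [hc]
    · simp
  | m + 1, B, a, b => by
    rw [List.ofFn_succ, List.prod_cons, Matrix.mul_apply,
      ← (Fin.consEquiv fun _ : Fin (m + 2) => ι).sum_comp, Fintype.sum_prod_type]
    simp only [Fin.consEquiv_apply, Fin.cons_zero, ← Fin.succ_last, Fin.cons_succ,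
      Fin.prod_univ_succ, Fin.castSucc_zero, ← Fin.succ_castSucc]
    symm
    rw [Finset.sum_eq_single a]
    · simp only [true_and, list_ofFn_prod_apply m, Finset.mul_sum]
      rw [Finset.sum_comm]
      refine Finset.sum_congr rfl fun x _ => ?_
      symm
      rw [Finset.sum_eq_single (x 0)]
      · simp
      · intro c _ hc
        simp [hc.symm]
      · simp
    · intro c _ hc
      simp [hc]
    · simp

/-- The trace of a product of matrices as a sum over cyclic paths. -/
lemma trace_list_ofFn_prod {ι R : Type*} [Fintype ι] [DecidableEq ι] [CommSemiring R] {n : ℕ}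
    (hn : n ≠ 0) (B : Fin n → Matrix ι ι R) :
    Matrix.trace (List.ofFn B).prod = ∑ y : Fin n → ι, ∏ i, B i (y i) (y (nxt i)) := by
  obtain ⟨m, rfl⟩ := Nat.exists_eq_succ_of_ne_zero hn
  have hsucc (y : Fin (m + 1) → ι) (j : Fin (m + 1)) :
      (Fin.snoc y (y 0) : Fin (m + 2) → ι) j.succ = y (nxt j) := by
    refine Fin.lastCases ?_ (fun i => ?_) j
    · rw [Fin.succ_last, Fin.snoc_last]
      congr 1
      ext
      simp [nxt]
    · rw [Fin.succ_castSucc, Fin.snoc_castSucc]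
      congr 1
      ext
      simp [nxt, Nat.mod_eq_of_lt (Nat.succ_lt_succ i.2)]
  simp only [Matrix.trace, Matrix.diag_apply, list_ofFn_prod_apply]
  rw [Finset.sum_comm, ← (Fin.snocEquiv fun _ : Fin (m + 2) => ι).sum_comp,
    Fintype.sum_prod_type_right]
  refine Finset.sum_congr rfl fun y _ => ?_
  have h0 (c : ι) : (Fin.snoc y c : Fin (m + 2) → ι) 0 = y 0 := by
    rw [← Fin.castSucc_zero, Fin.snoc_castSucc]
  simp only [Fin.snocEquiv_apply, Fin.snoc_last, h0]
  rw [Finset.sum_eq_single (y 0)]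
  · rw [Finset.sum_eq_single (y 0)]
    · simp [hsucc]
    · intro c _ hc
      simp [hc.symm]
    · simp
  · intro c _ hc
    refine Finset.sum_eq_zero fun x _ => if_neg ?_
    rintro ⟨h1, h2⟩
    exact hc (h2.trans h1.symm)
  · simp

/-! ### Entries of the monomials `M_{N,i}` -/

section Weights

variable {L : ℕ} {K : Type} {N : ℕ}

lemma GraphMonomial.eval_apply_of_vin_eq_vout (g : GraphMonomial L K) (hg : g.vin = g.vout)
    (a : Fin L → K → Matrix (Fin N) (Fin N) ℂ) (x y : Fin N) :
    g.eval a x y = if x = y then ∑ φ : g.V → Fin N, if φ g.vin = x then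
      ∏ e : g.E, a (g.labL e) (g.labK e) (φ (g.tgt e)) (φ (g.src e)) else 0 else 0 := by
  simp only [GraphMonomial.eval, Matrix.of_apply, ← hg]
  split_ifs with h
  · subst h
    simp
  · refine Finset.sum_eq_zero fun φ _ => if_neg ?_
    rintro ⟨h1, h2⟩
    exact h (h2.symm.trans h1)

/-- The product of the edge labels of the graph monomial `t_i`, for a given
assignment of indices to its vertices. -/
def pathWeight (a : Fin L → K → Matrix (Fin N) (Fin N) ℂ) (ℓ : Fin L) (d : ℕ) (k : ℕ → K)
    (g : ℕ → GraphMonomial L K) (ψ : (j : Fin (d + 1)) → (g j).V → Fin N) : ℂ :=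
  (∏ j : Fin (d + 1), ∏ e : (g j).E,
      a ((g j).labL e) ((g j).labK e) (ψ j ((g j).tgt e)) (ψ j ((g j).src e))) *
    ∏ j : Fin d, a ℓ (k ((j : ℕ) + 1)) (ψ j.castSucc (g j.castSucc).vin) (ψ j.succ (g j.succ).vin)

lemma cactusMonomialEval_apply (a : Fin L → K → Matrix (Fin N) (Fin N) ℂ) (ℓ : Fin L) (d : ℕ)
    (k : ℕ → K) (g : ℕ → GraphMonomial L K) (hg : ∀ j ≤ d, (g j).vin = (g j).vout)
    (x y : Fin N) :
    cactusMonomialEval a ℓ d k g x y =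
      ∑ ψ : (j : Fin (d + 1)) → (g j).V → Fin N,
        if ψ 0 (g (0 : Fin (d + 1))).vin = x ∧ ψ (Fin.last d) (g (Fin.last d)).vin = y then
          pathWeight a ℓ d k g ψ else 0 := by
  have hdiag (j : Fin (d + 1)) (u v : Fin N) :
      (g j).eval a u v = if u = v then (g j).eval a u u else 0 := by
    simp [GraphMonomial.eval_apply_of_vin_eq_vout _ (hg j (Nat.lt_succ_iff.mp j.2)) a u]
  have hexp (z : Fin (d + 1) → Fin N) : ∏ j : Fin (d + 1), (g j).eval a (z j) (z j) =
      ∑ ψ : (j : Fin (d + 1)) → (g j).V → Fin N, if (fun j => ψ j (g j).vin) = z then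
        ∏ j : Fin (d + 1), ∏ e : (g j).E,
          a ((g j).labL e) ((g j).labK e) (ψ j ((g j).tgt e)) (ψ j ((g j).src e)) else 0 := by
    simp only [fun j : Fin (d + 1) => GraphMonomial.eval_apply_of_vin_eq_vout (g j)
      (hg j (Nat.lt_succ_iff.mp j.2)) a (z j) (z j), if_true]
    rw [Finset.prod_univ_sum, Fintype.piFinset_univ]
    refine Finset.sum_congr rfl fun ψ _ => ?_
    rw [Finset.prod_ite_zero]
    simp [funext_iff]
  have hmul (j : Fin d) (u v : Fin N) :
      (a ℓ (k ((j : ℕ) + 1)) * (g ((j : ℕ) + 1)).eval a) u v =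
        a ℓ (k ((j : ℕ) + 1)) u v * (g j.succ).eval a v v := by
    rw [Matrix.mul_apply, Finset.sum_eq_single v]
    · rfl
    · intro w _ hw
      have := hdiag j.succ w v
      rw [if_neg hw] at this
      rw [← Fin.val_succ, this, mul_zero]
    · simp
  have h0 : cactusMonomialEval a ℓ d k g x y = (g 0).eval a x x *
      (List.ofFn fun j : Fin d =>
        a ℓ (k ((j : ℕ) + 1)) * (g ((j : ℕ) + 1)).eval a).prod x y := by
    rw [cactusMonomialEval, Matrix.mul_apply, Finset.sum_eq_single x]
    · intro w _ hw
      have := hdiag 0 x w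
      rw [if_neg hw.symm] at this
      rw [show g 0 = g ((0 : Fin (d + 1)) : ℕ) from rfl, this, zero_mul]
    · simp
  rw [h0, list_ofFn_prod_apply, Finset.mul_sum]
  have hterm (z : Fin (d + 1) → Fin N) :
      ((g 0).eval a x x * if z 0 = x ∧ z (Fin.last d) = y then
        ∏ j : Fin d, (a ℓ (k ((j : ℕ) + 1)) * (g ((j : ℕ) + 1)).eval a) (z j.castSucc) (z j.succ)
        else 0) =
      ∑ ψ : (j : Fin (d + 1)) → (g j).V → Fin N, if z = (fun j => ψ j (g j).vin) then
        (if z 0 = x ∧ z (Fin.last d) = y then pathWeight a ℓ d k g ψ else 0) else 0 := by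
    by_cases h : z 0 = x ∧ z (Fin.last d) = y
    · simp only [if_pos h, hmul, Finset.prod_mul_distrib]
      have := hexp z
      rw [Fin.prod_univ_succ, h.1] at this
      rw [mul_left_comm, show g 0 = g ((0 : Fin (d + 1)) : ℕ) from rfl, this, Finset.mul_sum]
      refine Finset.sum_congr rfl fun ψ _ => ?_
      by_cases hz : z = fun j => ψ j (g j).vin
      · subst hz
        simp [pathWeight, mul_comm]
      · rw [if_neg hz, if_neg (Ne.symm hz), mul_zero]
    · simp [h]
  simp only [hterm]
  rw [Finset.sum_comm]
  refine Finset.sum_congr rfl fun ψ _ => ?_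
  rw [Finset.sum_ite_eq' Finset.univ]
  simp

end Weights

/-! ### Sums over partitions -/

section Partitions

variable {V α R : Type*} [Fintype V] [Fintype α] [AddCommMonoid R]

instance : Finite (Setoid V) :=
  Finite.of_injective (fun s : Setoid V => s.r) fun s t h => Setoid.ext fun a b => by
    exact iff_of_eq (congrFun (congrFun h a) b)

/-- Sums over injective maps on the target of a surjection `q` with kernel `π` are sums over maps
with kernel `π`. -/
lemma sum_injective_comp_surjective [DecidableEq α] {Q : Type*} [Fintype Q] {q : V → Q}
    (hq : Function.Surjective q) {π : Setoid V} (hπ : Setoid.ker q = π) (F : (V → α) → R) :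
    (∑ χ : Q → α, if Function.Injective χ then F (χ ∘ q) else 0) =
      ∑ φ : V → α, if Setoid.ker φ = π then F φ else 0 := by
  subst hπ
  refine Fintype.sum_of_injective (fun χ : Q → α => χ ∘ q) hq.injective_comp_right _ _ ?_ ?_
  · refine fun φ hφ => if_neg fun h => hφ ⟨fun x => φ (Function.surjInv hq x), funext fun a => ?_⟩
    have : Setoid.ker q (Function.surjInv hq (q a)) a := Function.surjInv_eq hq (q a)
    rw [← h] at this
    exact this
  · intro χ
    congr 1
    refine propext ⟨fun h => Setoid.ext fun a b => h.eq_iff, fun h x y hxy => ?_⟩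
    obtain ⟨a, rfl⟩ := hq x
    obtain ⟨b, rfl⟩ := hq y
    have : Setoid.ker (χ ∘ q) a b := hxy
    rw [h] at this
    exact this

end Partitions

section TraceExpansion

variable {N : ℕ} {Ω : Type} (T : TestGraph N Ω)

lemma TestGraph.tau0Inner_quot (π : Setoid T.V) (ω : Ω) :
    (T.quot π).tau0Inner ω = ∑ φ : T.V → Fin N,
      if Setoid.ker φ = π then ∏ e : T.E, T.lab e ω (φ (T.tgt e)) (φ (T.src e)) else 0 := by
  exact sum_injective_comp_surjective (Q := (T.quot π).V) (q := Quotient.mk π)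
    Quotient.mk_surjective (Setoid.ker_mk_eq π) fun φ : T.V → Fin N =>
      ∏ e : T.E, T.lab e ω (φ (T.tgt e)) (φ (T.src e))

lemma TestGraph.sum_tau0Inner_quot [Fintype (Setoid T.V)] (P : Setoid T.V → Prop)
    [DecidablePred P] (ω : Ω) :
    (∑ π : Setoid T.V, if P π then (T.quot π).tau0Inner ω else 0) =
      ∑ φ : T.V → Fin N, if P (Setoid.ker φ) then
        ∏ e : T.E, T.lab e ω (φ (T.tgt e)) (φ (T.src e)) else 0 := by
  have hswap (π : Setoid T.V) : (if P π then (T.quot π).tau0Inner ω else 0) =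
      ∑ φ : T.V → Fin N, if Setoid.ker φ = π then (if P (Setoid.ker φ) then
        ∏ e : T.E, T.lab e ω (φ (T.tgt e)) (φ (T.src e)) else 0) else 0 := by
    rw [T.tau0Inner_quot, ← Finset.sum_const_zero, ← Finset.sum_ite_irrel]
    refine Finset.sum_congr rfl fun φ _ => ?_
    by_cases hk : Setoid.ker φ = π
    · subst hk
      simp
    · simp [hk]
  simp only [hswap]
  rw [Finset.sum_comm]
  simp

end TraceExpansion

/-! ### Integrability -/

section Integrability

variable {Ω : Type} [MeasurableSpace Ω] {μ : Measure Ω}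

lemma ae_bounded_finset_prod {ι : Type*} (s : Finset ι) (f : ι → Ω → ℂ)
    (hf : ∀ i, ∃ C : ℝ, ∀ᵐ ω ∂μ, ‖f i ω‖ ≤ C) :
    ∃ C : ℝ, ∀ᵐ ω ∂μ, ‖∏ i ∈ s, f i ω‖ ≤ C := by
  choose C hC using hf
  refine ⟨∏ i ∈ s, C i, ?_⟩
  filter_upwards [(Finset.eventually_all s).2 fun i _ => hC i] with ω hω
  rw [norm_prod]
  exact Finset.prod_le_prod (fun _ _ => norm_nonneg _) hω

lemma TestGraph.integrable_tau0Inner [IsFiniteMeasure μ] {N : ℕ} (T : TestGraph N Ω)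
    (hmeas : ∀ e, EntriesMeasurable (T.lab e)) (hbdd : ∀ e, EntriesBounded μ (T.lab e)) :
    Integrable T.tau0Inner μ := by
  unfold TestGraph.tau0Inner
  refine integrable_finsetSum _ fun φ _ => ?_
  split_ifs
  · obtain ⟨C, hC⟩ := ae_bounded_finset_prod (μ := μ) Finset.univ
      (fun e ω => T.lab e ω (φ (T.tgt e)) (φ (T.src e))) fun e => by
        obtain ⟨C, hC⟩ := hbdd e
        exact ⟨C, hC.mono fun ω h => h _ _⟩
    refine Integrable.of_bound (Measurable.aestronglyMeasurable ?_) C hC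
    exact Finset.measurable_prod _ fun e _ => hmeas e _ _
  · exact integrable_zero _ _ _

/-- Summing `τ⁰_N[T^π]` over a set of partitions `π`, when all these quotients are connected,
gives the sum over all assignments whose kernel lies in this set. -/
lemma TestGraph.finsum_tau0_quot [IsFiniteMeasure μ] {N : ℕ} (T : TestGraph N Ω)
    (hmeas : ∀ e, EntriesMeasurable (T.lab e)) (hbdd : ∀ e, EntriesBounded μ (T.lab e))
    (hconn : ∀ π, (T.quot π).ncc = 1) (P : Setoid T.V → Prop) [DecidablePred P] :
    (∑ᶠ π : Setoid T.V, if P π then (T.quot π).tau0 μ else 0) =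
      ∫ ω, (N : ℂ)⁻¹ * ∑ φ : T.V → Fin N, (if P (Setoid.ker φ) then
        ∏ e : T.E, T.lab e ω (φ (T.tgt e)) (φ (T.src e)) else 0) ∂μ := by
  have : Fintype (Setoid T.V) := Fintype.ofFinite _
  simp only [← T.sum_tau0Inner_quot]
  rw [integral_const_mul, integral_finsetSum, finsum_eq_sum_of_fintype, Finset.mul_sum]
  · refine Finset.sum_congr rfl fun π _ => ?_
    split_ifs
    · rw [TestGraph.tau0, hconn, pow_one]
    · simp
  · intro π _
    split_ifs
    · exact TestGraph.integrable_tau0Inner _ hmeas hbdd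
    · exact integrable_zero _ _ _

end Integrability

/-! ### Connectedness -/

lemma ncomp_eq_one {V E : Type} [Nonempty V] (src tgt : E → V)
    (h : IsConnectedGraph src tgt) : ncomp src tgt = 1 := by
  have : Subsingleton (Quotient (connSetoid src tgt ∅)) := ⟨fun p q => by
    induction p using Quotient.inductionOn with
    | h a =>
      induction q using Quotient.inductionOn with
      | h b => exact Quotient.sound (h a b)⟩
  exact Nat.card_of_subsingleton (Quotient.mk _ (Classical.arbitrary V))

/-- Reachability is preserved by graph morphisms. -/
lemma reachOn_map {V E V' E' : Type} {src tgt : E → V} {src' tgt' : E' → V'} (f : V → V')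
    (h : E → E') (hs : ∀ e, src' (h e) = f (src e)) (ht : ∀ e, tgt' (h e) = f (tgt e)) {a b : V}
    (hab : reachOn src tgt ∅ a b) : reachOn src' tgt' ∅ (f a) (f b) := by
  refine Relation.ReflTransGen.lift f ?_ _ _ hab
  rintro a b ⟨e, -, he⟩
  refine ⟨h e, Set.notMem_empty _, ?_⟩
  rw [hs, ht]
  rcases he with ⟨rfl, rfl⟩ | ⟨rfl, rfl⟩ <;> simp

section Glue

variable {L : ℕ} {K : Type} {n : ℕ} {d : Fin n → ℕ} {g : Fin n → ℕ → GraphMonomial L K}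

lemma nxt_surjective : Function.Surjective (nxt : Fin n → Fin n) := by
  intro j
  have hj := j.2
  rcases Nat.eq_zero_or_pos (j : ℕ) with h | h
  · refine ⟨⟨n - 1, by omega⟩, Fin.ext ?_⟩
    simp [nxt, Nat.sub_add_cancel (show 1 ≤ n by omega), h]
  · refine ⟨⟨j - 1, by omega⟩, Fin.ext ?_⟩
    simp [nxt, Nat.sub_add_cancel (show 1 ≤ (j : ℕ) by omega), Nat.mod_eq_of_lt hj]

lemma vCls_eq_mk_outVtx (i : Fin n) :
    vCls n d g i = Quotient.mk (glueSetoid n d g) (outVtx n d g (nxt i)) :=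
  Quotient.sound (Relation.EqvGen.rel _ _ ⟨i, rfl, rfl⟩)

lemma isConnectedGraph_big (hg : ∀ (i : Fin n) (j : ℕ), j ≤ d i → (g i j).IsCactusType) :
    IsConnectedGraph (bigSrc n d g) (bigTgt n d g) := by
  let S := connSetoid (bigSrc n d g) (bigTgt n d g) ∅
  let m := Quotient.mk (glueSetoid n d g)
  have hcac (i : Fin n) (j : Fin (d i + 1)) (v : (g i j).V) :
      S (m ⟨i, j, v⟩) (m (pathVtx n d g i j)) :=
    reachOn_map (fun w => m ⟨i, j, w⟩) (fun e => Sum.inl ⟨i, j, e⟩) (fun _ => rfl)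
      (fun _ => rfl) ((hg i j (Nat.lt_succ_iff.mp j.2)).2.1 v (g i j).vin)
  have hpath (i : Fin n) (j : Fin (d i + 1)) :
      S (m (pathVtx n d g i j)) (m (outVtx n d g i)) := by
    induction j using Fin.induction with
    | zero => exact S.refl _
    | succ j ih =>
      refine S.trans (Relation.ReflTransGen.single ?_) ih
      exact ⟨Sum.inr ⟨i, j⟩, Set.notMem_empty _, Or.inl ⟨rfl, rfl⟩⟩
  have hnxt (i : Fin n) : S (m (outVtx n d g (nxt i))) (m (outVtx n d g i)) := by
    have h := hpath i (Fin.last (d i))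
    have he : m (pathVtx n d g i (Fin.last (d i))) = m (outVtx n d g (nxt i)) :=
      vCls_eq_mk_outVtx i
    rwa [he] at h
  have hall (k : ℕ) : ∀ (hk : k < n) (h0 : 0 < n),
      S (m (outVtx n d g ⟨k, hk⟩)) (m (outVtx n d g ⟨0, h0⟩)) := by
    induction k with
    | zero => exact fun _ _ => S.refl _
    | succ k ih =>
      intro hk h0
      have h := hnxt ⟨k, by omega⟩
      have he : nxt (⟨k, by omega⟩ : Fin n) = ⟨k + 1, hk⟩ := by
        ext
        simp [nxt, Nat.mod_eq_of_lt hk]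
      rw [he] at h
      exact S.trans h (ih _ h0)
  intro p q
  induction p using Quotient.inductionOn with
  | h a =>
    induction q using Quotient.inductionOn with
    | h b =>
      obtain ⟨i, j, v⟩ := a
      obtain ⟨i', j', v'⟩ := b
      have key (i : Fin n) (j : Fin (d i + 1)) (v : (g i j).V) (h0 : 0 < n) :
          S (m ⟨i, j, v⟩) (m (outVtx n d g ⟨0, h0⟩)) :=
        S.trans (hcac i j v) (S.trans (hpath i j) (hall i i.2 h0))
      exact S.trans (key i j v i.pos) (S.symm (key i' j' v' i.pos))

lemma ncc_quot_bigTG {Ω : Type} [MeasurableSpace Ω] (hn : 0 < n)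
    (hg : ∀ (i : Fin n) (j : ℕ), j ≤ d i → (g i j).IsCactusType)
    (ℓv : Fin n → Fin L) (kv : Fin n → ℕ → K) (N : ℕ)
    (A : Fin L → K → Ω → Matrix (Fin N) (Fin N) ℂ) (π : Setoid (Quotient (glueSetoid n d g))) :
    ((bigTG n ℓv d kv g N A).quot π).ncc = 1 := by
  have : Nonempty ((bigTG n ℓv d kv g N A).quot π).V :=
    ⟨Quotient.mk π (vCls n d g ⟨0, hn⟩)⟩
  refine ncomp_eq_one _ _ fun p q => ?_
  obtain ⟨a, rfl⟩ := Quotient.exists_rep p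
  obtain ⟨b, rfl⟩ := Quotient.exists_rep q
  exact reachOn_map (src := bigSrc n d g) (tgt := bigTgt n d g) (Quotient.mk π) id
    (fun _ => rfl) (fun _ => rfl) (isConnectedGraph_big hg a b)

/-! ### The pointwise expansion of the trace -/

/-- The trace of the centered product as a sum over assignments of indices to the vertices of
the disjoint union of the graph monomials `t_1, …, t_n`. -/
lemma trace_centeredProd_eq_sum_disjoint (hn : n ≠ 0)
    (hg : ∀ (i : Fin n) (j : ℕ), j ≤ d i → (g i j).IsCactusType)
    (ℓv : Fin n → Fin L) (kv : Fin n → ℕ → K) {N : ℕ}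
    (a : Fin L → K → Matrix (Fin N) (Fin N) ℂ) :
    Matrix.trace (centeredProd fun i => cactusMonomialEval a (ℓv i) (d i) (kv i) (g i)) =
      ∑ Ψ : (i : Fin n) → (j : Fin (d i + 1)) → (g i j).V → Fin N,
        if ∀ i, Ψ i 0 (g i (0 : Fin (d i + 1))).vin ≠
              Ψ i (Fin.last (d i)) (g i (Fin.last (d i))).vin ∧
            Ψ i (Fin.last (d i)) (g i (Fin.last (d i))).vin =
              Ψ (nxt i) 0 (g (nxt i) (0 : Fin (d (nxt i) + 1))).vin then
          ∏ i, pathWeight a (ℓv i) (d i) (kv i) (g i) (Ψ i) else 0 := by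
  rw [centeredProd, trace_list_ofFn_prod hn]
  have hentry (i : Fin n) (x y : Fin N) :
      (cactusMonomialEval a (ℓv i) (d i) (kv i) (g i) -
        dproj (cactusMonomialEval a (ℓv i) (d i) (kv i) (g i))) x y =
      ∑ ψ : (j : Fin (d i + 1)) → (g i j).V → Fin N,
        if x ≠ y ∧ ψ 0 (g i (0 : Fin (d i + 1))).vin = x ∧
            ψ (Fin.last (d i)) (g i (Fin.last (d i))).vin = y then
          pathWeight a (ℓv i) (d i) (kv i) (g i) ψ else 0 := by
    rw [sub_dproj_apply]
    split_ifs with h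
    · simp [h]
    · rw [cactusMonomialEval_apply _ _ _ _ _ fun j hj => (hg i j hj).1]
      simp only [ne_eq, h, not_false_eq_true, true_and]
  simp only [hentry, Finset.prod_univ_sum, Fintype.piFinset_univ, Finset.prod_ite_zero,
    Finset.mem_univ, true_implies]
  rw [Finset.sum_comm]
  refine Finset.sum_congr rfl fun Ψ _ => ?_
  rw [Finset.sum_eq_single fun i => Ψ i 0 (g i (0 : Fin (d i + 1))).vin]
  · congr 1
    refine propext (forall_congr' fun i => ?_)
    constructor
    · rintro ⟨h1, -, h2⟩
      exact ⟨fun h => h1 (h.trans h2), h2⟩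
    · rintro ⟨h1, h2⟩
      exact ⟨fun h => h1 (h.trans h2.symm), rfl, h2⟩
  · intro y _ hy
    exact if_neg fun h => hy (funext fun i => (h i).2.1.symm)
  · simp

/-- The trace of the centered product as a sum over assignments of indices to the vertices of
the test graph `T`. -/
lemma trace_centeredProd_eq_sum_glued {Ω : Type} (hn : n ≠ 0)
    (hg : ∀ (i : Fin n) (j : ℕ), j ≤ d i → (g i j).IsCactusType)
    (ℓv : Fin n → Fin L) (kv : Fin n → ℕ → K) {N : ℕ}
    (A : Fin L → K → Ω → Matrix (Fin N) (Fin N) ℂ) (ω : Ω) :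
    Matrix.trace (centeredProd fun i =>
        cactusMonomialEval (fun ℓ k => A ℓ k ω) (ℓv i) (d i) (kv i) (g i)) =
      ∑ φ : (bigTG n ℓv d kv g N A).V → Fin N,
        if ∀ i : Fin n, ¬ Setoid.ker φ (vCls n d g (nxt i)) (vCls n d g i) then
          ∏ e : (bigTG n ℓv d kv g N A).E, (bigTG n ℓv d kv g N A).lab e ω
            (φ ((bigTG n ℓv d kv g N A).tgt e)) (φ ((bigTG n ℓv d kv g N A).src e))
        else 0 := by
  rw [trace_centeredProd_eq_sum_disjoint hn hg]
  symm
  refine Fintype.sum_of_injective (fun φ i j v =>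
    φ (Quotient.mk (glueSetoid n d g) ⟨i, j, v⟩)) ?_ _ _ ?_ ?_
  · intro φ φ' h
    funext q
    obtain ⟨⟨i, j, v⟩, rfl⟩ := Quotient.exists_rep q
    exact congrFun (congrFun (congrFun h i) j) v
  · intro Ψ hΨ
    refine if_neg fun h => hΨ ?_
    refine ⟨Quotient.lift (fun p : BigV n d g => Ψ p.1 p.2.1 p.2.2) fun p q hpq => ?_, rfl⟩
    change Relation.EqvGen _ p q at hpq
    induction hpq with
    | rel p q hr =>
      obtain ⟨i, rfl, rfl⟩ := hr
      exact (h i).2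
    | refl => rfl
    | symm _ _ _ ih => exact ih.symm
    | trans _ _ _ _ _ ih ih' => exact ih.trans ih'
  · intro φ
    congr 1
    · refine propext ⟨fun h i => ⟨?_, congrArg φ (vCls_eq_mk_outVtx i)⟩, fun h i hi => ?_⟩
      · obtain ⟨i, rfl⟩ := nxt_surjective i
        intro hi
        exact h i (hi.symm.trans (congrArg φ (vCls_eq_mk_outVtx i).symm))
      · exact (h (nxt i)).1 ((congrArg φ (vCls_eq_mk_outVtx i).symm).trans hi.symm)
    · simp only [pathWeight, Finset.prod_mul_distrib]
      trans ∏ e : (Σ i : Fin n, Σ j : Fin (d i + 1), (g i (j : ℕ)).E) ⊕ (Σ i : Fin n, Fin (d i)),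
          (bigTG n ℓv d kv g N A).lab e ω
            (φ ((bigTG n ℓv d kv g N A).tgt e)) (φ ((bigTG n ℓv d kv g N A).src e))
      · exact Fintype.prod_equiv (Equiv.refl _) _ _ fun _ => rfl
      · rw [Fintype.prod_sum_type, Fintype.prod_sigma, Fintype.prod_sigma]
        simp only [Fintype.prod_sigma]
        rfl

end Glue
/-- Lemma 4.5.
The expected normalized trace of the centered product
`(M_{N,1} - ΔM_{N,1}) ⋯ (M_{N,n} - ΔM_{N,n})` equals the sum of the injective
trace observables `τ⁰_N[T^π]` over all partitions `π` of the vertices of the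
test graph `T` that separate `v_i` from `v_{i-1}` for every `i`. -/
theorem expected_trace_centered_eq_sum_injective_traces
    {Ω : Type} [MeasurableSpace Ω] (μ : Measure Ω) [IsProbabilityMeasure μ]
    {K : Type} [Nonempty K] [Finite K] {L : ℕ} (hL : 1 ≤ L)
    (A : (N : ℕ) → Fin L → K → Ω → Matrix (Fin N) (Fin N) ℂ)
    (hmeas : ∀ N ℓ k, EntriesMeasurable (A N ℓ k))
    (hbdd : ∀ N ℓ k, EntriesBounded μ (A N ℓ k))
    (n : ℕ) (hn : 2 ≤ n) (ℓv : Fin n → Fin L)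
    (hadj : ∀ (i : ℕ) (h1 : i + 1 < n),
      ℓv ⟨i, Nat.lt_of_succ_lt h1⟩ ≠ ℓv ⟨i + 1, h1⟩)
    (d : Fin n → ℕ) (hd : ∀ i, 1 ≤ d i) (kv : Fin n → ℕ → K)
    (g : Fin n → ℕ → GraphMonomial L K)
    (hg : ∀ (i : Fin n) (j : ℕ), j ≤ d i → (g i j).IsCactusType)
    (N : ℕ) :
    (∫ ω, (N : ℂ)⁻¹ *
        Matrix.trace (centeredProd fun i : Fin n =>
          cactusMonomialEval (fun ℓ k => A N ℓ k ω) (ℓv i) (d i) (kv i) (g i)) ∂μ) =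
      ∑ᶠ π : Setoid (Quotient (glueSetoid n d g)),
        if ∀ i : Fin n, ¬ π.r (vCls n d g (nxt i)) (vCls n d g i) then
          TestGraph.tau0 (TestGraph.quot (bigTG n ℓv d kv g N (A N)) π) μ
        else 0 := by
  have hn0 : n ≠ 0 := by omega
  have hlab (e : (bigTG n ℓv d kv g N (A N)).E) :
      ∃ ℓ k, (bigTG n ℓv d kv g N (A N)).lab e = A N ℓ k := by
    rcases e with ⟨i, j, e⟩ | ⟨i, j⟩ <;> exact ⟨_, _, rfl⟩
  simp only [trace_centeredProd_eq_sum_glued hn0 hg]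
  refine (TestGraph.finsum_tau0_quot (μ := μ) (bigTG n ℓv d kv g N (A N))
    (fun e => ?_) (fun e => ?_) (ncc_quot_bigTG (Nat.pos_of_ne_zero hn0) hg ℓv kv N (A N))
    fun π => ∀ i : Fin n, ¬ π.r (vCls n d g (nxt i)) (vCls n d g i)).symm
  · obtain ⟨ℓ, k, h⟩ := hlab e
    exact h ▸ hmeas N ℓ k
  · obtain ⟨ℓ, k, h⟩ := hlab e
    exact h ▸ hbdd N ℓ k
end
end

section
/- Assume every family A_{N,ℓ} satisfies the growth bound (MS). Then: (i) for every ℓ and every test graph T̂ (possibly disconnected) all of whose edge labels are matrices of the family A_{N,ℓ}, τ⁰_N[T̂] = O(N^{𝔣(T̂)/2 − c(T̂)}) as N → ∞, where 𝔣(T̂) is the sum of 𝔣 over the connected components of T̂; and (ii) consequently, for any test graph T' labeled by matrices of the families A_{N,1}, …, A_{N,L}, writing T'_ℓ for the test graph formed by the disjoint union of the colored components of T' carrying matrices of A_{N,ℓ}, one has ∏_{ℓ=1}^L τ⁰_N[T'_ℓ] = O(N^{Σ_{S∈CC(T')} 𝔣(S)/2 − |CC(T')|}) as N → ∞. -/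
open MeasureTheory ProbabilityTheory Filter Matrix Asymptotics
open scoped BigOperators ENNReal
open scoped Classical

noncomputable section

/-! ### Colored subgraphs of a test graph -/

section ColSub

variable {V E : Type} (src tgt : E → V) {L : ℕ} (labL : E → Fin L)

/-- Source map of the union `T'_ℓ` of the colored components of color `ℓ`. -/
def colSubSrc (ℓ : Fin L) :
    {e : E // labL e = ℓ} → {v : V // ∃ e, labL e = ℓ ∧ (src e = v ∨ tgt e = v)} :=
  fun e => ⟨src e.1, e.1, e.2, Or.inl rfl⟩

/-- Target map of the union `T'_ℓ` of the colored components of color `ℓ`. -/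
def colSubTgt (ℓ : Fin L) :
    {e : E // labL e = ℓ} → {v : V // ∃ e, labL e = ℓ ∧ (src e = v ∨ tgt e = v)} :=
  fun e => ⟨tgt e.1, e.1, e.2, Or.inr rfl⟩

end ColSub
/-! ### Colored sub test graphs -/

section ColSubTG

variable {V E : Type} (src tgt : E → V) {L : ℕ} (labL : E → Fin L)

/-- The test graph `T'_ℓ`: the disjoint union of the colored components of
color `ℓ` of a test graph with underlying graph `(V, E, src, tgt)`. -/
def colSubTG [Fintype V] [Fintype E] (ℓ : Fin L) {Ω : Type} (N : ℕ)
    (lab : E → Ω → Matrix (Fin N) (Fin N) ℂ) : TestGraph N Ω where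
  V := {v : V // ∃ e, labL e = ℓ ∧ (src e = v ∨ tgt e = v)}
  E := {e : E // labL e = ℓ}
  fintV := Fintype.ofFinite _
  fintE := Fintype.ofFinite _
  src := colSubSrc src tgt labL ℓ
  tgt := colSubTgt src tgt labL ℓ
  lab := fun e => lab e.1

end ColSubTG
/-! ### Forests of two-edge connected components -/

section Forest

variable {V E : Type} {src tgt : E → V}

lemma reachOn_symm {F : Set E} {a b : V} (h : reachOn src tgt F a b) : reachOn src tgt F b a :=
  (connSetoid src tgt F).symm h

lemma reachOn_mono {F F' : Set E} (hF : F ⊆ F') {a b : V} (h : reachOn src tgt F' a b) :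
    reachOn src tgt F a b :=
  Relation.ReflTransGen.mono (fun _ _ ⟨e, he, h⟩ => ⟨e, fun h' => he (hF h'), h⟩) _ _ h

lemma reachOn_edge {F : Set E} {e : E} (he : e ∉ F) : reachOn src tgt F (src e) (tgt e) :=
  Relation.ReflTransGen.single ⟨e, he, Or.inl ⟨rfl, rfl⟩⟩

lemma reachOn_map_s14 {V' : Type} (q : V → V') {F : Set E} {a b : V} (h : reachOn src tgt F a b) :
    reachOn (q ∘ src) (q ∘ tgt) F (q a) (q b) := by
  refine Relation.ReflTransGen.lift q ?_ _ _ h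
  rintro a b ⟨e, he, ⟨rfl, rfl⟩ | ⟨rfl, rfl⟩⟩
  · exact ⟨e, he, Or.inl ⟨rfl, rfl⟩⟩
  · exact ⟨e, he, Or.inr ⟨rfl, rfl⟩⟩

lemma IsCutEdge.of_map {V' : Type} (q : V → V') {e : E}
    (h : IsCutEdge (q ∘ src) (q ∘ tgt) e) : IsCutEdge src tgt e :=
  fun h' => h (reachOn_map_s14 q h')

/-- For a cut edge `e`, the indicator of the side of `e` containing its source, as a function on
the two-edge connected components. -/
def cutSide (src tgt : E → V) (e : E) (c : Quotient (teccSetoid src tgt)) : ℝ :=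
  if reachOn src tgt {e} (src e) c.out then 1 else 0

lemma cutSide_mk {e : E} (he : IsCutEdge src tgt e) (v : V) :
    cutSide src tgt e (Quotient.mk _ v) = if reachOn src tgt {e} (src e) v then 1 else 0 := by
  have h : reachOn src tgt {e} (Quotient.mk (teccSetoid src tgt) v).out v :=
    reachOn_mono (Set.singleton_subset_iff.2 he) (Quotient.mk_out (s := teccSetoid src tgt) v)
  unfold cutSide
  congr 1
  exact propext ⟨fun h' => h'.trans h, fun h' => h'.trans (reachOn_symm h)⟩

lemma cutSide_src_sub_tgt {e e' : E} (he : IsCutEdge src tgt e) :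
    cutSide src tgt e (Quotient.mk _ (src e')) - cutSide src tgt e (Quotient.mk _ (tgt e')) =
      if e' = e then 1 else 0 := by
  rw [cutSide_mk he, cutSide_mk he]
  split_ifs with h₁ h₂ h₃ h₃ h₂ h₃ h₃
  · exact absurd (h₃ ▸ h₂) he
  · simp
  · simp
  · exact absurd (h₁.trans (reachOn_edge h₃)) h₂
  · exact absurd (h₃ ▸ Relation.ReflTransGen.refl) h₁
  · exact absurd (h₂.trans (reachOn_symm (reachOn_edge h₃))) h₁
  · exact absurd (h₃ ▸ Relation.ReflTransGen.refl) h₁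
  · simp

/-- The forest of two-edge connected components has no cycle: a nonempty set of vertices spans
fewer edges than it has elements. -/
lemma card_cutEdges_within_lt [Fintype E] (X : Finset (Quotient (teccSetoid src tgt)))
    (hX : X.Nonempty) :
    (Finset.univ.filter fun e => IsCutEdge src tgt e ∧
      Quotient.mk (teccSetoid src tgt) (src e) ∈ X ∧
      Quotient.mk (teccSetoid src tgt) (tgt e) ∈ X).card < X.card := by
  set B := Finset.univ.filter fun e => IsCutEdge src tgt e ∧
      Quotient.mk (teccSetoid src tgt) (src e) ∈ X ∧
      Quotient.mk (teccSetoid src tgt) (tgt e) ∈ X with hB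
  have hcut : ∀ e : B, IsCutEdge src tgt e.1 := fun e => (Finset.mem_filter.1 e.2).2.1
  have hli : LinearIndependent ℝ fun (o : Option B) (c : X) =>
      o.elim (1 : ℝ) fun e => cutSide src tgt e.1 c.1 := by
    rw [Fintype.linearIndependent_iff]
    intro g hg
    have hval : ∀ c ∈ X, g none + ∑ e : B, g (some e) * cutSide src tgt e.1 c = 0 := by
      intro c hc
      simpa [Fintype.sum_option] using congrFun hg ⟨c, hc⟩
    have hsome : ∀ e : B, g (some e) = 0 := by
      intro e
      obtain ⟨-, hs, ht⟩ := (Finset.mem_filter.1 e.2).2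
      have h : ∑ e' : B, g (some e') * (if e.1 = e'.1 then 1 else 0) = 0 := by
        simp_rw [← cutSide_src_sub_tgt (hcut _), mul_sub, Finset.sum_sub_distrib]
        linarith [hval _ hs, hval _ ht]
      simpa [← Subtype.ext_iff] using h
    rintro (_ | e)
    · obtain ⟨c, hc⟩ := hX
      simpa [hsome] using hval c hc
    · exact hsome e
  simpa [Nat.succ_le_iff] using hli.fintype_card_le_finrank

lemma teccDeg_eq_sum [Fintype E] (c : Quotient (teccSetoid src tgt)) :
    teccDeg src tgt c = ∑ e : E, if IsCutEdge src tgt e ∧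
      (Quotient.mk (teccSetoid src tgt) (src e) = c ∨
        Quotient.mk (teccSetoid src tgt) (tgt e) = c) then 1 else 0 := by
  rw [teccDeg, Nat.card_eq_fintype_card, Fintype.card_subtype, Finset.card_filter]

/-- `𝔣` as a sum over the two-edge connected components of `2 - deg` (truncated at `0`). -/
lemma frak_eq_sum [Fintype (Quotient (teccSetoid src tgt))] :
    frak src tgt = ∑ c : Quotient (teccSetoid src tgt), (2 - teccDeg src tgt c) := by
  rw [frak, Nat.card_eq_fintype_card, Nat.card_eq_fintype_card, Fintype.card_subtype,
    Fintype.card_subtype, Finset.card_filter, Finset.card_filter, Finset.mul_sum,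
    ← Finset.sum_add_distrib]
  refine Finset.sum_congr rfl fun c _ => ?_
  split_ifs <;> omega

/-- A nonempty set of two-edge connected components with `b` cut edges leaving it carries
at least `2 - b` of `𝔣`. -/
lemma two_sub_card_boundary_le_sum [Fintype E] (X : Finset (Quotient (teccSetoid src tgt)))
    (hX : X.Nonempty) :
    2 - (Finset.univ.filter fun e => IsCutEdge src tgt e ∧
      Xor (Quotient.mk (teccSetoid src tgt) (src e) ∈ X)
        (Quotient.mk (teccSetoid src tgt) (tgt e) ∈ X)).card ≤
      ∑ c ∈ X, (2 - teccDeg src tgt c) := by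
  have hB := card_cutEdges_within_lt X hX
  have hdeg : ∑ c ∈ X, teccDeg src tgt c ≤
      2 * (Finset.univ.filter fun e => IsCutEdge src tgt e ∧
        Quotient.mk (teccSetoid src tgt) (src e) ∈ X ∧
        Quotient.mk (teccSetoid src tgt) (tgt e) ∈ X).card +
      (Finset.univ.filter fun e => IsCutEdge src tgt e ∧
        Xor (Quotient.mk (teccSetoid src tgt) (src e) ∈ X)
          (Quotient.mk (teccSetoid src tgt) (tgt e) ∈ X)).card := by
    simp_rw [teccDeg_eq_sum, Finset.card_filter]
    rw [Finset.sum_comm, Finset.mul_sum, ← Finset.sum_add_distrib]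
    refine Finset.sum_le_sum fun e _ => ?_
    by_cases he : IsCutEdge src tgt e
    swap
    · simp [he]
    simp only [he, true_and]
    calc ∑ c ∈ X, (if Quotient.mk (teccSetoid src tgt) (src e) = c ∨
            Quotient.mk (teccSetoid src tgt) (tgt e) = c then 1 else 0)
        ≤ ∑ c ∈ X, ((if Quotient.mk (teccSetoid src tgt) (src e) = c then 1 else 0) +
            if Quotient.mk (teccSetoid src tgt) (tgt e) = c then 1 else 0) := by
          refine Finset.sum_le_sum fun c _ => ?_
          split_ifs <;> simp_all
      _ ≤ _ := by
          rw [Finset.sum_add_distrib, Finset.sum_ite_eq, Finset.sum_ite_eq]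
          unfold Xor
          split_ifs <;> simp_all
  have hsum : 2 * X.card ≤ ∑ c ∈ X, (2 - teccDeg src tgt c) + ∑ c ∈ X, teccDeg src tgt c := by
    rw [← Finset.sum_add_distrib, mul_comm, ← smul_eq_mul, ← Finset.sum_const]
    exact Finset.sum_le_sum fun c _ => by omega
  omega

/-- Identifying vertices does not increase `𝔣`. -/
lemma frak_map_le [Finite V] [Fintype E] {V' : Type} (q : V → V')
    (hq : Function.Surjective q) : frak (q ∘ src) (q ∘ tgt) ≤ frak src tgt := by
  have : Finite V' := Finite.of_surjective q hq
  let _ := Fintype.ofFinite (Quotient (teccSetoid src tgt))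
  let _ := Fintype.ofFinite (Quotient (teccSetoid (q ∘ src) (q ∘ tgt)))
  let Q : Quotient (teccSetoid src tgt) → Quotient (teccSetoid (q ∘ src) (q ∘ tgt)) :=
    Quotient.map q fun _ _ h => reachOn_mono (fun _ he => IsCutEdge.of_map q he) (reachOn_map_s14 q h)
  have hQ : ∀ v, Q (Quotient.mk _ v) = Quotient.mk _ (q v) := fun _ => rfl
  rw [frak_eq_sum, frak_eq_sum, ← Finset.sum_fiberwise Finset.univ Q]
  refine Finset.sum_le_sum fun c' _ => ?_
  refine le_trans (Nat.sub_le_sub_left ?_ 2) (two_sub_card_boundary_le_sum _ ?_)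
  · rw [teccDeg_eq_sum, ← Finset.card_filter]
    refine Finset.card_le_card fun e => ?_
    simp only [Finset.mem_filter, Finset.mem_univ, true_and, hQ, Function.comp_apply]
    rintro ⟨-, h⟩
    refine ⟨fun hr => ?_, h.or⟩
    by_cases hc : e ∈ cutEdges (q ∘ src) (q ∘ tgt)
    · exact hc hr
    · have heq : Quotient.mk (teccSetoid (q ∘ src) (q ∘ tgt)) (q (src e)) =
          Quotient.mk _ (q (tgt e)) := Quotient.sound (reachOn_edge hc)
      rw [heq] at h
      simp [Xor] at h
  · obtain ⟨v', rfl⟩ := Quotient.exists_rep c'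
    obtain ⟨v, rfl⟩ := hq v'
    exact ⟨Quotient.mk _ v, by simp [hQ]⟩

end Forest

/-! ### Connected components -/

section Components

variable {V E : Type} (src tgt : E → V)

/-- Source map of the connected component `c`. -/
def compSrc (c : Quotient (connSetoid src tgt ∅)) :
    {e : E // Quotient.mk (connSetoid src tgt ∅) (src e) = c} →
      {v : V // Quotient.mk (connSetoid src tgt ∅) v = c} :=
  fun e => ⟨src e.1, e.2⟩

/-- Target map of the connected component `c`. -/
def compTgt (c : Quotient (connSetoid src tgt ∅)) :
    {e : E // Quotient.mk (connSetoid src tgt ∅) (src e) = c} →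
      {v : V // Quotient.mk (connSetoid src tgt ∅) v = c} :=
  fun e => ⟨tgt e.1, (Quotient.sound (reachOn_symm (reachOn_edge (Set.notMem_empty _)))).trans e.2⟩

variable {src tgt}

lemma reachOn_comp_iff {c : Quotient (connSetoid src tgt ∅)} {F : Set E}
    {a b : {v : V // Quotient.mk (connSetoid src tgt ∅) v = c}} :
    reachOn (compSrc src tgt c) (compTgt src tgt c) (Subtype.val ⁻¹' F) a b ↔
      reachOn src tgt F a.1 b.1 := by
  constructor
  · intro h
    refine Relation.ReflTransGen.lift Subtype.val ?_ _ _ h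
    rintro a b ⟨e, he, ⟨rfl, rfl⟩ | ⟨rfl, rfl⟩⟩
    · exact ⟨e.1, he, Or.inl ⟨rfl, rfl⟩⟩
    · exact ⟨e.1, he, Or.inr ⟨rfl, rfl⟩⟩
  · obtain ⟨a, ha⟩ := a
    obtain ⟨b, hb⟩ := b
    intro h
    change reachOn src tgt F a b at h
    induction h with
    | refl => exact Relation.ReflTransGen.refl
    | @tail x y hax hxy ih =>
      have hx : Quotient.mk (connSetoid src tgt ∅) x = c :=
        (Quotient.sound (reachOn_symm (reachOn_mono (Set.empty_subset F) hax))).trans ha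
      obtain ⟨e, he, ⟨rfl, rfl⟩ | ⟨rfl, rfl⟩⟩ := hxy
      · exact (ih hx).tail ⟨⟨e, hx⟩, he, Or.inl ⟨rfl, rfl⟩⟩
      · exact (ih hx).tail ⟨⟨e, hb⟩, he, Or.inr ⟨rfl, rfl⟩⟩

lemma isConnectedGraph_comp (c : Quotient (connSetoid src tgt ∅)) :
    IsConnectedGraph (compSrc src tgt c) (compTgt src tgt c) := fun a b => by
  rw [← Set.preimage_empty (f := Subtype.val), reachOn_comp_iff]
  exact Quotient.exact (a.2.trans b.2.symm)

lemma isCutEdge_comp_iff {c : Quotient (connSetoid src tgt ∅)}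
    {e : {e : E // Quotient.mk (connSetoid src tgt ∅) (src e) = c}} :
    IsCutEdge (compSrc src tgt c) (compTgt src tgt c) e ↔ IsCutEdge src tgt e.1 := by
  have h : ({e} : Set {e : E // Quotient.mk (connSetoid src tgt ∅) (src e) = c}) =
      Subtype.val ⁻¹' {e.1} := by
    ext x
    simp [Subtype.ext_iff]
  rw [IsCutEdge, h, reachOn_comp_iff]
  rfl

lemma teccSetoid_comp_iff {c : Quotient (connSetoid src tgt ∅)}
    {a b : {v : V // Quotient.mk (connSetoid src tgt ∅) v = c}} :
    (teccSetoid (compSrc src tgt c) (compTgt src tgt c)) a b ↔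
      (teccSetoid src tgt) a.1 b.1 := by
  have h : cutEdges (compSrc src tgt c) (compTgt src tgt c) =
      Subtype.val ⁻¹' cutEdges src tgt := by
    ext x
    exact isCutEdge_comp_iff
  change reachOn _ _ _ _ _ ↔ _
  rw [h, reachOn_comp_iff]
  rfl

lemma sum_frak_comp_le [Finite V] [Finite E] [Fintype (Quotient (connSetoid src tgt ∅))] :
    ∑ c, frak (compSrc src tgt c) (compTgt src tgt c) ≤ frak src tgt := by
  let _ := Fintype.ofFinite (Quotient (teccSetoid src tgt))
  let _ := fun c => Fintype.ofFinite (Quotient (teccSetoid (compSrc src tgt c) (compTgt src tgt c)))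
  let J : (Σ c, Quotient (teccSetoid (compSrc src tgt c) (compTgt src tgt c))) →
      Quotient (teccSetoid src tgt) :=
    fun x => Quotient.map Subtype.val (fun _ _ h => teccSetoid_comp_iff.1 h) x.2
  have hJ : Function.Injective J := by
    rintro ⟨c, d⟩ ⟨c', d'⟩ h
    obtain ⟨⟨a, ha⟩, rfl⟩ := Quotient.exists_rep d
    obtain ⟨⟨a', ha'⟩, rfl⟩ := Quotient.exists_rep d'
    have haa : (teccSetoid src tgt) a a' := Quotient.exact h
    have hc : Quotient.mk (connSetoid src tgt ∅) a = Quotient.mk _ a' :=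
      Quotient.sound (reachOn_mono (Set.empty_subset _) haa)
    obtain rfl : c = c' := ha.symm.trans (hc.trans ha')
    exact congrArg (Sigma.mk c) (Quotient.sound (teccSetoid_comp_iff.2 haa))
  have hdeg : ∀ x, teccDeg src tgt (J x) ≤
      teccDeg (compSrc src tgt x.1) (compTgt src tgt x.1) x.2 := by
    rintro ⟨c, d⟩
    obtain ⟨⟨a, ha⟩, rfl⟩ := Quotient.exists_rep d
    have hmem : ∀ v, Quotient.mk (teccSetoid src tgt) v = Quotient.mk _ a →
        Quotient.mk (connSetoid src tgt ∅) v = c := fun v hv =>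
      (Quotient.sound (reachOn_mono (Set.empty_subset _) (Quotient.exact hv))).trans ha
    have hsrc : ∀ e, (Quotient.mk (teccSetoid src tgt) (src e) = Quotient.mk _ a ∨
        Quotient.mk (teccSetoid src tgt) (tgt e) = Quotient.mk _ a) →
        Quotient.mk (connSetoid src tgt ∅) (src e) = c := by
      rintro e (he | he)
      · exact hmem _ he
      · exact (Quotient.sound (reachOn_edge (Set.notMem_empty _))).trans (hmem _ he)
    refine Nat.card_le_card_of_injective
      (fun e => ⟨⟨e.1, hsrc e.1 e.2.2⟩, isCutEdge_comp_iff.2 e.2.1, ?_⟩) ?_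
    · refine e.2.2.imp (fun h => ?_) (fun h => ?_) <;>
        exact Quotient.sound (teccSetoid_comp_iff.2 (Quotient.exact h))
    · intro e e' h
      exact Subtype.ext (congrArg (fun x => x.1.1) h)
  simp_rw [frak_eq_sum]
  rw [← Fintype.sum_sigma']
  calc _ ≤ ∑ x, (2 - teccDeg src tgt (J x)) :=
        Finset.sum_le_sum fun x _ => Nat.sub_le_sub_left (hdeg x) 2
    _ = ∑ d ∈ Finset.univ.image J, (2 - teccDeg src tgt d) :=
        (Finset.sum_image (f := fun d => 2 - teccDeg src tgt d) hJ.injOn).symm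
    _ ≤ _ := Finset.sum_le_sum_of_subset (Finset.subset_univ _)

/-- The trace of a graph factorizes over the connected components. -/
lemma sum_prod_eq_prod_comp [Fintype V] [Fintype E] [Fintype (Quotient (connSetoid src tgt ∅))]
    {N : ℕ} (M : E → Matrix (Fin N) (Fin N) ℂ) :
    ∑ φ : V → Fin N, ∏ e, M e (φ (tgt e)) (φ (src e)) =
      ∏ c, ∑ φ : {v : V // Quotient.mk (connSetoid src tgt ∅) v = c} → Fin N,
        ∏ e, M e.1 (φ (compTgt src tgt c e)) (φ (compSrc src tgt c e)) := by
  rw [Finset.prod_univ_sum, Fintype.piFinset_univ]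
  let r : (V → Fin N) ≃ (∀ c, {v : V // Quotient.mk (connSetoid src tgt ∅) v = c} → Fin N) :=
    { toFun := fun φ c v => φ v.1
      invFun := fun p v => p _ ⟨v, rfl⟩
      left_inv := fun _ => rfl
      right_inv := fun p => by
        ext c ⟨v, rfl⟩
        rfl }
  refine Fintype.sum_equiv r _ _ fun φ => ?_
  exact (Fintype.prod_fiberwise (fun e => Quotient.mk (connSetoid src tgt ∅) (src e)) _).symm

end Components

lemma GraphMonomial.trace_eval {L : ℕ} {K : Type} (g : GraphMonomial L K) (hg : g.vin = g.vout)
    {N : ℕ} (A : Fin L → K → Matrix (Fin N) (Fin N) ℂ) :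
    Matrix.trace (g.eval A) =
      ∑ φ : g.V → Fin N, ∏ e, A (g.labL e) (g.labK e) (φ (g.tgt e)) (φ (g.src e)) := by
  simp only [Matrix.trace, Matrix.diag_apply, GraphMonomial.eval, Matrix.of_apply, hg, and_self]
  rw [Finset.sum_comm]
  simp

section Bounds

variable {Ω : Type} [MeasurableSpace Ω] {μ : Measure Ω} [IsProbabilityMeasure μ]
  {K : Type} {L : ℕ} {A : (N : ℕ) → Fin L → K → Ω → Matrix (Fin N) (Fin N) ℂ}

lemma rpow_isBigO_rpow_of_le {x y : ℝ} (h : x ≤ y) :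
    (fun N : ℕ => (N : ℝ) ^ x) =O[atTop] fun N : ℕ => (N : ℝ) ^ y := by
  refine IsBigO.of_bound 1 ?_
  filter_upwards [eventually_ge_atTop 1] with N hN
  have hN' : (1 : ℝ) ≤ N := by exact_mod_cast hN
  rw [one_mul, Real.norm_of_nonneg (by positivity), Real.norm_of_nonneg (by positivity)]
  exact Real.rpow_le_rpow_of_exponent_le hN' h

lemma integrable_prod_entries {E V : Type} [Fintype E] (src tgt : E → V) {N : ℕ}
    {B : E → Ω → Matrix (Fin N) (Fin N) ℂ} (hmeas : ∀ e, EntriesMeasurable (B e))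
    (hbdd : ∀ e, EntriesBounded μ (B e)) (φ : V → Fin N) :
    Integrable (fun ω => ∏ e, B e ω (φ (tgt e)) (φ (src e))) μ := by
  choose C hC using hbdd
  refine Integrable.of_bound
    (Finset.measurable_fun_prod _ fun e _ => hmeas e _ _).aestronglyMeasurable (∏ e, C e) ?_
  filter_upwards [ae_all_iff.2 hC] with ω hω
  rw [norm_prod]
  exact Finset.prod_le_prod (fun _ _ => norm_nonneg _) fun e _ => hω e _ _

/-- The growth bound for the (non-injective) trace of a possibly disconnected graph. -/
lemma MSBound.tauInner_isBigO {ℓ : Fin L} (hms : MSBound μ A ℓ) {V E : Type} [Fintype V]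
    [Fintype E] (src tgt : E → V) (labK : E → K) :
    (fun N : ℕ => ∫ ω, ∑ φ : V → Fin N, ∏ e, A N ℓ (labK e) ω (φ (tgt e)) (φ (src e)) ∂μ)
      =O[atTop] fun N : ℕ => (N : ℝ) ^ ((frak src tgt : ℝ) / 2) := by
  rcases isEmpty_or_nonempty V with hV | hV
  · have hE : IsEmpty E := ⟨fun e => hV.elim (src e)⟩
    have h1 := rpow_isBigO_rpow_of_le (show (0 : ℝ) ≤ (frak src tgt : ℝ) / 2 by positivity)
    refine IsBigO.trans ?_ h1
    simpa using isBigO_const_const (1 : ℂ) (one_ne_zero (α := ℝ)) _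
  let _ := Fintype.ofFinite (Quotient (connSetoid src tgt ∅))
  let κ := (Fintype.equivFin (Quotient (connSetoid src tgt ∅))).symm
  let gs : Fin (Fintype.card (Quotient (connSetoid src tgt ∅))) → GraphMonomial L K := fun i =>
    { V := {v : V // Quotient.mk (connSetoid src tgt ∅) v = κ i}
      E := {e : E // Quotient.mk (connSetoid src tgt ∅) (src e) = κ i}
      fintV := inferInstance
      fintE := inferInstance
      src := compSrc src tgt (κ i)
      tgt := compTgt src tgt (κ i)
      vin := ⟨(κ i).out, Quotient.out_eq _⟩
      vout := ⟨(κ i).out, Quotient.out_eq _⟩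
      labL := fun _ => ℓ
      labK := fun e => labK e.1 }
  have hpos : 1 ≤ Fintype.card (Quotient (connSetoid src tgt ∅)) :=
    Fintype.card_pos_iff.2 ⟨Quotient.mk _ hV.some⟩
  have h := hms _ hpos gs fun i => ⟨isConnectedGraph_comp _, fun _ => rfl, rfl⟩
  refine (h.congr_left fun N => ?_).trans (rpow_isBigO_rpow_of_le ?_)
  · congr 1
    funext ω
    rw [sum_prod_eq_prod_comp fun e => A N ℓ (labK e) ω]
    refine Fintype.prod_equiv κ _ _ fun i => ?_
    refine (GraphMonomial.trace_eval (gs i) rfl _).trans ?_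
    congr!
  · have hle := sum_frak_comp_le (src := src) (tgt := tgt)
    rw [← Equiv.sum_comp κ] at hle
    have hle' : (∑ i, (frak (gs i).src (gs i).tgt : ℝ)) ≤ frak src tgt := by exact_mod_cast hle
    linarith

/-- Maps with kernel `π` correspond to injective maps on the quotient by `π`. -/
lemma sum_ker_eq_sum_injective {V : Type} [Fintype V] {N : ℕ} (π : Setoid V)
    [Fintype (Quotient π)] (F : (V → Fin N) → ℂ) :
    ∑ φ : V → Fin N with Setoid.ker φ = π, F φ =
      ∑ ψ : Quotient π → Fin N, if Function.Injective ψ then F (ψ ∘ Quotient.mk π) else 0 := by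
  rw [← Finset.sum_filter]
  symm
  refine Finset.sum_bij (fun ψ _ => ψ ∘ Quotient.mk π) ?_ ?_ ?_ fun _ _ => rfl
  · intro ψ hψ
    have hinj : Function.Injective ψ := (Finset.mem_filter.1 hψ).2
    refine Finset.mem_filter.2 ⟨Finset.mem_univ _, Setoid.ext fun a b => ?_⟩
    exact hinj.eq_iff.trans Quotient.eq
  · intro ψ _ ψ' _ h
    exact (Quotient.mk_surjective).injective_comp_right h
  · intro φ hφ
    obtain rfl := (Finset.mem_filter.1 hφ).2
    exact ⟨Quotient.lift φ fun _ _ h => h,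
      Finset.mem_filter.2 ⟨Finset.mem_univ _, Setoid.kerLift_injective φ⟩, rfl⟩

/-- The growth bound for the injective trace of a possibly disconnected graph. -/
lemma MSBound.tau0Inner_isBigO {ℓ : Fin L} (hms : MSBound μ A ℓ)
    (hmeas : ∀ N ℓ k, EntriesMeasurable (A N ℓ k))
    (hbdd : ∀ N ℓ k, EntriesBounded μ (A N ℓ k)) {V E : Type} [Fintype V]
    [Fintype E] (src tgt : E → V) (labK : E → K) :
    (fun N : ℕ => ∫ ω, ∑ φ : V → Fin N,
        (if Function.Injective φ then ∏ e, A N ℓ (labK e) ω (φ (tgt e)) (φ (src e)) else 0) ∂μ)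
      =O[atTop] fun N : ℕ => (N : ℝ) ^ ((frak src tgt : ℝ) / 2) := by
  induction hn : Fintype.card V using Nat.strong_induction_on generalizing V with
  | _ n ih =>
  have : Finite (Setoid V) :=
    Finite.of_injective (fun s : Setoid V => fun a b => s a b) fun s t h =>
      Setoid.ext fun a b => iff_of_eq (congrFun (congrFun h a) b)
  let _ := Fintype.ofFinite (Setoid V)
  have hint : ∀ N (φ : V → Fin N),
      Integrable (fun ω => ∏ e, A N ℓ (labK e) ω (φ (tgt e)) (φ (src e))) μ := fun N φ =>
    integrable_prod_entries src tgt (fun e => hmeas N ℓ _) (fun e => hbdd N ℓ _) φ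
  have hsub : ∀ π ∈ Finset.univ.erase (⊥ : Setoid V),
      (fun N : ℕ => ∫ ω, ∑ φ : V → Fin N with Setoid.ker φ = π,
          ∏ e, A N ℓ (labK e) ω (φ (tgt e)) (φ (src e)) ∂μ)
        =O[atTop] fun N : ℕ => (N : ℝ) ^ ((frak src tgt : ℝ) / 2) := by
    intro π hπ
    have hlt : Fintype.card (Quotient π) < n := by
      rw [← hn]
      refine Fintype.card_lt_of_surjective_not_injective _ Quotient.mk_surjective fun hinj => ?_
      refine Finset.ne_of_mem_erase hπ (Setoid.ext fun a b => ⟨fun h => ?_, fun h => ?_⟩)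
      · exact hinj (Quotient.sound h)
      · exact h ▸ π.refl a
    have h := ih _ hlt (Quotient.mk π ∘ src) (Quotient.mk π ∘ tgt) rfl
    refine (h.congr_left fun N => ?_).trans (rpow_isBigO_rpow_of_le ?_)
    · simp_rw [sum_ker_eq_sum_injective]
      congr!
    · have hle := frak_map_le (src := src) (tgt := tgt) (Quotient.mk π) Quotient.mk_surjective
      have : (frak (Quotient.mk π ∘ src) (Quotient.mk π ∘ tgt) : ℝ) ≤ frak src tgt := by
        exact_mod_cast hle
      linarith
  refine ((hms.tauInner_isBigO src tgt labK).sub (IsBigO.sum hsub)).congr_left fun N => ?_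
  simp_rw [← Finset.sum_filter]
  rw [Finset.sum_apply, ← integral_finsetSum _
    fun π _ => integrable_finsetSum _ fun φ _ => hint N φ,
    ← integral_sub (integrable_finsetSum _ fun φ _ => hint N φ)
      (integrable_finsetSum _ fun π _ => integrable_finsetSum _ fun φ _ => hint N φ)]
  congr 1
  funext ω
  rw [← Finset.sum_fiberwise Finset.univ Setoid.ker,
    ← Finset.add_sum_erase _ _ (Finset.mem_univ (⊥ : Setoid V)), add_sub_cancel_right]
  simp_rw [Setoid.injective_iff_ker_bot]

lemma MSBound.tau0_isBigO {ℓ : Fin L} (hms : MSBound μ A ℓ)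
    (hmeas : ∀ N ℓ k, EntriesMeasurable (A N ℓ k))
    (hbdd : ∀ N ℓ k, EntriesBounded μ (A N ℓ k)) {V E : Type} [Fintype V]
    [Fintype E] (src tgt : E → V) (labK : E → K) :
    (fun N : ℕ => TestGraph.tau0
        (TestGraph.mk V E inferInstance inferInstance src tgt fun e ω => A N ℓ (labK e) ω) μ)
      =O[atTop] fun N : ℕ =>
        (N : ℝ) ^ ((frak src tgt : ℝ) / 2 - (ncomp src tgt : ℝ)) := by
  have h1 : (fun N : ℕ => ((N : ℂ) ^ ncomp src tgt)⁻¹) =O[atTop]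
      fun N : ℕ => ((N : ℝ) ^ ncomp src tgt)⁻¹ :=
    IsBigO.of_bound 1 (Eventually.of_forall fun N => by simp)
  refine (h1.mul (hms.tau0Inner_isBigO hmeas hbdd src tgt labK)).trans_eventuallyEq ?_
  filter_upwards [eventually_ge_atTop 1] with N hN
  have hN' : (0 : ℝ) < N := by exact_mod_cast hN
  rw [Real.rpow_sub hN', Real.rpow_natCast, div_eq_mul_inv (_ ^ _), mul_comm]

end Bounds

/-- Lemma 4.8.
Under the growth bound (MS): (i) for every test graph `T̂` labelled by
matrices of one single family `ℓ`, `τ⁰_N[T̂] = O(N^{𝔣(T̂)/2 - c(T̂)})`;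
(ii) consequently, for any test graph `T'` labelled by the families, the
product over `ℓ` of the `τ⁰_N[T'_ℓ]` of the unions of the colored components
is `O(N^{Σ_{S ∈ CC(T')} 𝔣(S)/2 - |CC(T')|})`. -/
theorem tau0_bigO_of_MSBound
    {Ω : Type} [MeasurableSpace Ω] (μ : Measure Ω) [IsProbabilityMeasure μ]
    {K : Type} [Nonempty K] [Finite K] {L : ℕ} (hL : 1 ≤ L)
    (A : (N : ℕ) → Fin L → K → Ω → Matrix (Fin N) (Fin N) ℂ)
    (hmeas : ∀ N ℓ k, EntriesMeasurable (A N ℓ k))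
    (hbdd : ∀ N ℓ k, EntriesBounded μ (A N ℓ k))
    (hms : ∀ ℓ : Fin L, MSBound μ A ℓ) :
    (∀ (ℓ : Fin L) (V E : Type) [Fintype V] [Fintype E]
        (src tgt : E → V) (labK : E → K),
      (fun N : ℕ => TestGraph.tau0
          (TestGraph.mk V E inferInstance inferInstance src tgt
            fun e ω => A N ℓ (labK e) ω) μ)
        =O[atTop] fun N : ℕ =>
          (N : ℝ) ^ ((frak src tgt : ℝ) / 2 - (ncomp src tgt : ℝ))) ∧
    (∀ (V E : Type) [Fintype V] [Fintype E] (src tgt : E → V)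
        (labL : E → Fin L) (labK : E → K),
      (fun N : ℕ => ∏ ℓ : Fin L, TestGraph.tau0
          (colSubTG src tgt labL ℓ N fun e ω => A N (labL e) (labK e) ω) μ)
        =O[atTop] fun N : ℕ =>
          (N : ℝ) ^
            ((∑ ℓ : Fin L,
                (frak (colSubSrc src tgt labL ℓ) (colSubTgt src tgt labL ℓ) : ℝ)) / 2 -
              ∑ ℓ : Fin L,
                (ncomp (colSubSrc src tgt labL ℓ) (colSubTgt src tgt labL ℓ) : ℝ))) := by
  refine ⟨fun ℓ V E _ _ src tgt labK => (hms ℓ).tau0_isBigO hmeas hbdd src tgt labK,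
    fun V E _ _ src tgt labL labK => ?_⟩
  have h : ∀ ℓ ∈ (Finset.univ : Finset (Fin L)), (fun N : ℕ => TestGraph.tau0
      (colSubTG src tgt labL ℓ N fun e ω => A N (labL e) (labK e) ω) μ) =O[atTop] fun N : ℕ =>
        (N : ℝ) ^ ((frak (colSubSrc src tgt labL ℓ) (colSubTgt src tgt labL ℓ) : ℝ) / 2 -
          (ncomp (colSubSrc src tgt labL ℓ) (colSubTgt src tgt labL ℓ) : ℝ)) := by
    intro ℓ _
    let _ := Fintype.ofFinite {v : V // ∃ e, labL e = ℓ ∧ (src e = v ∨ tgt e = v)}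
    let _ := Fintype.ofFinite {e : E // labL e = ℓ}
    refine ((hms ℓ).tau0_isBigO hmeas hbdd (colSubSrc src tgt labL ℓ)
      (colSubTgt src tgt labL ℓ) fun e => labK e.1).congr_left fun N => ?_
    unfold colSubTG
    congr 2
    funext e ω
    exact congrArg (fun ℓ' => A N ℓ' (labK e.1) ω) e.2.symm
  refine (IsBigO.finsetProd h).trans_eventuallyEq ?_
  filter_upwards [eventually_ge_atTop 1] with N hN
  have hN' : (0 : ℝ) < N := by exact_mod_cast hN
  rw [← Real.rpow_sum_of_pos hN', Finset.sum_sub_distrib, Finset.sum_div]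
end
end
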